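/- arXiv:1302.4106 — 3 statements merged into one kernel-verified Lean document; each statement's English description precedes it below -/
import Mathlib

section
/- Remark 2.6 (universality with varying center): Let 𝕄 be an infinite subset of ℕ, let Ω ⊆ ℂⁿ be an open convex set, let (K_m)_{m≥1} be a sequence of compact convex subsets of ℂⁿ each disjoint from Ω, and let (N_j)_{j≥0} be any enumeration of ℕⁿ. Then there exists a holomorphic function f on Ω such that: for every compact convex set K ⊆ ℂⁿ which is either disjoint from the closure of Ω or equal to some K_m, and for every holomorphic polynomial P on ℂⁿ, there exists a sequence (λ_N)_{N≥1} with λ_N ∈ 𝕄 such that for every compact set L ⊆ Ω, sup_{ζ ∈ L, z ∈ K} ‖S_{λ_N}(f,ζ)(z) − P(z)‖ → 0 and sup_{ζ ∈ L, z ∈ L} ‖S_{λ_N}(f,ζ)(z) − f(z)‖ → 0 as N → ∞. The set of such f is a dense G_δ subset of O(Ω) with the topology of uniform convergence on compacta. -/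
open Set Filter Topology

noncomputable section

/-- Evaluation of a multivariate polynomial as a function on `ℂⁿ = Fin n → ℂ`. -/
def mvEval {n : ℕ} (p : MvPolynomial (Fin n) ℂ) : (Fin n → ℂ) → ℂ :=
  fun z => MvPolynomial.eval z p

/-- The polynomially convex hull of a set in `ℂⁿ`. -/
def polyHull {n : ℕ} (K : Set (Fin n → ℂ)) : Set (Fin n → ℂ) :=
  {z | ∀ p : MvPolynomial (Fin n) ℂ, ‖mvEval p z‖ ≤ sSup ((fun w => ‖mvEval p w‖) '' K)}

/-- A set in `ℂⁿ` is polynomially convex if it equals its polynomially convex hull. -/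
def IsPolyConvex {n : ℕ} (K : Set (Fin n → ℂ)) : Prop := polyHull K = K

/-- The polynomially convex hull of a subset of `ℂ`. -/
def polyHull1 (F : Set ℂ) : Set ℂ :=
  {z | ∀ p : Polynomial ℂ, ‖p.eval z‖ ≤ sSup ((fun w => ‖p.eval w‖) '' F)}

/-- A subset of `ℂ` is polynomially convex if it equals its polynomially convex hull. -/
def IsPolyConvex1 (F : Set ℂ) : Prop := polyHull1 F = F

/-- Partial derivative in the `i`-th coordinate direction. -/
def pd {n : ℕ} (i : Fin n) (f : (Fin n → ℂ) → ℂ) : (Fin n → ℂ) → ℂ :=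
  fun z => fderiv ℂ f z (Pi.single i 1)

/-- Iterated partial derivative `D^ℓ = ∂^{ℓ₁+⋯+ℓₙ}/∂z₁^{ℓ₁}⋯∂zₙ^{ℓₙ}`. -/
def Dml {n : ℕ} (ℓ : Fin n → ℕ) (f : (Fin n → ℂ) → ℂ) : (Fin n → ℂ) → ℂ :=
  (List.finRange n).foldr (fun i g => (pd i)^[ℓ i] g) f

/-- Partial sums `S_λ` of a Taylor-type series around `ζ`, with coefficients computed from a
given family `g` of (extended) partial derivatives: the coefficient of the monomial
`(z-ζ)^{N_j}` is `g (N_j) ζ / (N_{j,1}! ⋯ N_{j,n}!)`. -/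
def pSumExt {n : ℕ} (Nj : ℕ → Fin n → ℕ) (g : (Fin n → ℕ) → (Fin n → ℂ) → ℂ)
    (ζ : Fin n → ℂ) (lam : ℕ) : (Fin n → ℂ) → ℂ :=
  fun z => ∑ j ∈ Finset.range (lam + 1),
    (((∏ i, Nat.factorial (Nj j i) : ℕ) : ℂ))⁻¹ * g (Nj j) ζ * ∏ i, (z i - ζ i) ^ (Nj j i)

/-- Partial sums `S_λ(f,ζ)` of the Taylor development of `f` around `ζ`. -/
def pSum {n : ℕ} (Nj : ℕ → Fin n → ℕ) (f : (Fin n → ℂ) → ℂ)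
    (ζ : Fin n → ℂ) (lam : ℕ) : (Fin n → ℂ) → ℂ :=
  pSumExt Nj (fun ℓ => Dml ℓ f) ζ lam

/-- The space `O(Ω)` of holomorphic functions on `Ω`. -/
def Ospace (n : ℕ) (Ω : Set (Fin n → ℂ)) : Type :=
  {f : (Fin n → ℂ) → ℂ // DifferentiableOn ℂ f Ω}

/-- Topology of uniform convergence on compact subsets of `Ω` on `O(Ω)` (the compact-open
topology induced via restriction to `Ω`). -/
instance (n : ℕ) (Ω : Set (Fin n → ℂ)) : TopologicalSpace (Ospace n Ω) :=
  TopologicalSpace.induced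
    (fun f : Ospace n Ω =>
      (⟨Ω.restrict f.1, continuousOn_iff_continuous_restrict.mp f.2.continuousOn⟩ : C(Ω, ℂ)))
    inferInstance

/-- Membership in `A^∞(Ω)`: `f` is holomorphic on `Ω` and each partial derivative `D^ℓ f`
extends continuously to the closure of `Ω`. -/
def AinfMem (n : ℕ) (Ω : Set (Fin n → ℂ)) (f : (Fin n → ℂ) → ℂ) : Prop :=
  DifferentiableOn ℂ f Ω ∧
    ∀ ℓ : Fin n → ℕ, ∃ g : (Fin n → ℂ) → ℂ,
      ContinuousOn g (closure Ω) ∧ Set.EqOn g (Dml ℓ f) Ω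

/-- The space `A^∞(Ω)`. -/
def AinfSpace (n : ℕ) (Ω : Set (Fin n → ℂ)) : Type :=
  {f : (Fin n → ℂ) → ℂ // AinfMem n Ω f}

/-- The chosen continuous extension of `D^ℓ f` to the closure of `Ω`, for `f ∈ A^∞(Ω)`.
(Its restriction to the closure of `Ω` is uniquely determined.) -/
def AinfExt {n : ℕ} {Ω : Set (Fin n → ℂ)} (f : AinfSpace n Ω) (ℓ : Fin n → ℕ) :
    (Fin n → ℂ) → ℂ :=
  Classical.choose (f.2.2 ℓ)

lemma AinfExt_continuousOn {n : ℕ} {Ω : Set (Fin n → ℂ)} (f : AinfSpace n Ω) (ℓ : Fin n → ℕ) :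
    ContinuousOn (AinfExt f ℓ) (closure Ω) :=
  (Classical.choose_spec (f.2.2 ℓ)).1

lemma AinfExt_eqOn {n : ℕ} {Ω : Set (Fin n → ℂ)} (f : AinfSpace n Ω) (ℓ : Fin n → ℕ) :
    Set.EqOn (AinfExt f ℓ) (Dml ℓ f.1) Ω :=
  (Classical.choose_spec (f.2.2 ℓ)).2

/-- Topology on `A^∞(Ω)`: uniform convergence of every partial derivative on every compact
subset of the closure of `Ω`. -/
instance (n : ℕ) (Ω : Set (Fin n → ℂ)) : TopologicalSpace (AinfSpace n Ω) :=
  TopologicalSpace.induced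
    (fun f : AinfSpace n Ω => fun ℓ : Fin n → ℕ =>
      (⟨(closure Ω).restrict (AinfExt f ℓ),
        continuousOn_iff_continuous_restrict.mp (AinfExt_continuousOn f ℓ)⟩ :
          C(closure Ω, ℂ)))
    inferInstance

/-- A smooth compact curve in `ℂⁿ`: the image of an injective `C^∞` map with
nowhere-vanishing derivative, defined on a compact interval (an arc) or on the
circle (a closed curve, modelled by a 1-periodic map). -/
def IsSmoothCompactCurve {n : ℕ} (K : Set (Fin n → ℂ)) : Prop :=
  ∃ γ : ℝ → (Fin n → ℂ), ContDiff ℝ (⊤ : ℕ∞) γ ∧ (∀ t, deriv γ t ≠ 0) ∧ K = γ '' Set.Icc 0 1 ∧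
    (Set.InjOn γ (Set.Icc 0 1) ∨ (Function.Periodic γ 1 ∧ Set.InjOn γ (Set.Ico 0 1)))

/-- A disjoint union of finitely many smooth compact curves. -/
def IsFiniteUnionOfSmoothCurves {n : ℕ} (K : Set (Fin n → ℂ)) : Prop :=
  ∃ (m : ℕ) (C : Fin m → Set (Fin n → ℂ)),
    (∀ i, IsSmoothCompactCurve (C i)) ∧ Pairwise (Function.onFun Disjoint C) ∧ K = ⋃ i, C i

lemma cauchy_fderiv {n : ℕ} {f : (Fin n → ℂ) → ℂ} {c : Fin n → ℂ} {r M : ℝ} (hr : 0 < r)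
    (hf : DifferentiableOn ℂ f (Metric.ball c r)) (hM : ∀ z ∈ Metric.ball c r, ‖f z‖ ≤ M) :
    ‖fderiv ℂ f c‖ ≤ 2 * M / r := by
  refine Complex.norm_fderiv_le_div_of_mapsTo_ball hf ?_ hr
  intro z hz
  rw [Metric.mem_closedBall, dist_eq_norm]
  have h1 := hM z hz
  have h2 := hM c (Metric.mem_ball_self hr)
  linarith [norm_sub_le (f z) (f c)]

/-- locally uniform limits of holomorphic functions are holomorphic -/
lemma limit_hol {n : ℕ} {ι : Type*} {l : Filter ι} [NeBot l] {s : Set (Fin n → ℂ)}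
    (hs : IsOpen s) {F : ι → (Fin n → ℂ) → ℂ} {g : (Fin n → ℂ) → ℂ}
    (hF : ∀ i, DifferentiableOn ℂ (F i) s) (h : TendstoLocallyUniformlyOn F g l s) :
    DifferentiableOn ℂ g s := by
  intro x hx
  obtain ⟨r, hr, hrs⟩ := Metric.isOpen_iff.1 hs x hx
  have hr4 : (0:ℝ) < r / 4 := by linarith
  have hK : TendstoUniformlyOn F g l (Metric.closedBall x (r/2)) :=
    (tendstoLocallyUniformlyOn_iff_forall_isCompact hs).1 h _
      ((Metric.closedBall_subset_ball (by linarith)).trans hrs) (isCompact_closedBall _ _)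
  have hsub : ∀ y ∈ Metric.ball x (r/4), Metric.ball y (r/4) ⊆ Metric.closedBall x (r/2) := by
    intro y hy z hz
    rw [Metric.mem_ball] at hy hz
    rw [Metric.mem_closedBall]
    linarith [dist_triangle z y x]
  have hsub' : Metric.closedBall x (r/2) ⊆ s :=
    (Metric.closedBall_subset_ball (by linarith)).trans hrs
  have hC : UniformCauchySeqOn (fun i => fderiv ℂ (F i)) l (Metric.ball x (r/4)) := by
    have h1 := hK.uniformCauchySeqOn
    intro u hu
    obtain ⟨ε, hε, hεu⟩ := Metric.mem_uniformity_dist.1 hu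
    have h2 := h1 _ (Metric.dist_mem_uniformity (show 0 < ε * (r/4) / 4 by positivity))
    filter_upwards [h2] with m hm y hy
    apply hεu
    have hd : ∀ i, DifferentiableAt ℂ (F i) y := fun i =>
      (hF i).differentiableAt (hs.mem_nhds (hsub' (hsub y hy (Metric.mem_ball_self hr4))))
    rw [dist_eq_norm, ← fderiv_sub (hd _) (hd _)]
    have h3 : ‖fderiv ℂ (F m.1 - F m.2) y‖ ≤ 2 * (ε * (r/4) / 4) / (r/4) := by
      refine cauchy_fderiv hr4 ?_ ?_
      · exact ((hF _).sub (hF _)).mono ((hsub y hy).trans hsub')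
      · intro z hz
        have := hm z (hsub y hy hz)
        simp only [dist_eq_norm] at this
        exact this.le
    have h4 : 2 * (ε * (r/4) / 4) / (r/4) = ε / 2 := by field_simp; norm_num
    linarith
  have hlim : ∀ y, ∃ L : (Fin n → ℂ) →L[ℂ] ℂ, y ∈ Metric.ball x (r/4) →
      Tendsto (fun i => fderiv ℂ (F i) y) l (𝓝 L) := by
    intro y
    by_cases hy : y ∈ Metric.ball x (r/4)
    · obtain ⟨L, hL⟩ := CompleteSpace.complete (hC.cauchy_map hy)
      exact ⟨L, fun _ => hL⟩
    · exact ⟨0, fun h => (hy h).elim⟩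
  choose g' hg' using hlim
  have hU := hC.tendstoUniformlyOn_of_tendsto hg'
  refine (HasFDerivAt.differentiableAt (f' := g' x) ?_).differentiableWithinAt
  refine hasFDerivAt_of_tendstoUniformlyOn (l := l) (f := F) Metric.isOpen_ball hU ?_ ?_
    (Metric.mem_ball_self hr4)
  · intro i y hy
    exact ((hF i).differentiableAt
      (hs.mem_nhds (hsub' (hsub y hy (Metric.mem_ball_self hr4))))).hasFDerivAt
  · intro y hy
    exact hK.tendsto_at (hsub y hy (Metric.mem_ball_self hr4))

lemma pd_hol {n : ℕ} {s : Set (Fin n → ℂ)} (hs : IsOpen s) {f : (Fin n → ℂ) → ℂ}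
    (hf : DifferentiableOn ℂ f s) (i : Fin n) : DifferentiableOn ℂ (pd i f) s := by
  intro x hx
  obtain ⟨R, hR, hRs⟩ := Metric.isOpen_iff.1 hs x hx
  obtain ⟨r, hr, hrR⟩ : ∃ r : ℝ, 0 < r ∧ 4 * r < R := ⟨R / 5, by linarith, by linarith⟩
  have hBs : Metric.closedBall x (4 * r) ⊆ s := (Metric.closedBall_subset_ball hrR).trans hRs
  obtain ⟨M, hM⟩ := (isCompact_closedBall x (4 * r)).exists_bound_of_continuousOn
    (hf.continuousOn.mono hBs)
  have hda : ∀ y ∈ Metric.closedBall x (4 * r), DifferentiableAt ℂ f y := fun y hy =>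
    hf.differentiableAt (hs.mem_nhds (hBs hy))
  have hb1 : ∀ y ∈ Metric.ball x (3 * r), ‖fderiv ℂ f y‖ ≤ 2 * M / r := by
    intro y hy
    have hsub : Metric.ball y r ⊆ Metric.closedBall x (4 * r) := by
      intro z hz
      rw [Metric.mem_ball] at hy hz
      rw [Metric.mem_closedBall]
      linarith [dist_triangle z y x]
    exact cauchy_fderiv hr (hf.mono (hsub.trans hBs)) (fun z hz => hM z (hsub hz))
  set C := 2 * M / r with hC
  have hin3 : Metric.ball x (3 * r) ⊆ Metric.closedBall x (4 * r) :=
    (Metric.ball_subset_ball (by linarith)).trans Metric.ball_subset_closedBall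
  have hlip : ∀ y ∈ Metric.ball x (3 * r), ∀ z ∈ Metric.ball x (3 * r),
      ‖f z - f y‖ ≤ C * ‖z - y‖ := fun y hy z hz =>
    (convex_ball x (3 * r)).norm_image_sub_le_of_norm_fderiv_le (𝕜 := ℂ)
      (fun w hw => hda w (hin3 hw)) hb1 hy hz
  have htri : ∀ (a b c : ℝ) (y h : Fin n → ℂ), y ∈ Metric.ball x a → ‖h‖ < b → a + b ≤ c →
      y + h ∈ Metric.ball x c := by
    intro a b c y h hy hh habc
    rw [Metric.mem_ball, dist_eq_norm] at *
    have : y + h - x = (y - x) + h := by abel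
    rw [this]
    linarith [norm_add_le (y - x) h]
  have hb2 : ∀ y ∈ Metric.ball x r, ∀ h : Fin n → ℂ, ‖h‖ < r →
      ‖fderiv ℂ f (y + h) - fderiv ℂ f y‖ ≤ 2 * (C * ‖h‖) / r := by
    intro y hy h hh
    have e1 : fderiv ℂ f (y + h) = fderiv ℂ (fun z => f (z + h)) y := by
      rw [fderiv_comp_add_right]
    have hsub2 : ∀ z ∈ Metric.ball y r, z ∈ Metric.ball x (2 * r) := by
      intro z hz
      rw [Metric.mem_ball] at *
      linarith [dist_triangle z y x]
    have hd1 : ∀ z ∈ Metric.ball y r, DifferentiableAt ℂ (fun z => f (z + h)) z := by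
      intro z hz
      have := hda (z + h) (hin3 (htri _ _ _ z h (hsub2 z hz) hh (by linarith)))
      exact this.comp z (by fun_prop)
    have hd2 : ∀ z ∈ Metric.ball y r, DifferentiableAt ℂ f z := fun z hz =>
      hda z (hin3 (Metric.ball_subset_ball (by linarith) (hsub2 z hz)))
    rw [e1, ← fderiv_sub (hd1 y (Metric.mem_ball_self hr)) (hd2 y (Metric.mem_ball_self hr))]
    refine cauchy_fderiv hr ?_ ?_
    · intro z hz
      exact ((hd1 z hz).sub (hd2 z hz)).differentiableWithinAt
    · intro z hz
      have := hlip z (Metric.ball_subset_ball (by linarith) (hsub2 z hz)) (z + h)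
        (htri _ _ _ z h (hsub2 z hz) hh (by linarith))
      simpa using this
  have hC0 : 0 ≤ C := (norm_nonneg _).trans (hb1 x (Metric.mem_ball_self (by linarith)))
  set e : Fin n → ℂ := Pi.single i 1 with he
  have hen : ‖e‖ = 1 := by rw [he, Pi.norm_single, norm_one]
  let t : ℕ → ℝ := fun k => r / (k + 2)
  have ht0 : ∀ k, 0 < t k := fun k => by positivity
  have htr : ∀ k, t k < r := fun k => by
    simp only [t]
    rw [div_lt_iff₀ (by positivity)]
    nlinarith [(Nat.cast_nonneg k : (0:ℝ) ≤ k)]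
  let F : ℕ → (Fin n → ℂ) → ℂ := fun k y => ((t k : ℂ))⁻¹ * (f (y + (t k : ℂ) • e) - f y)
  have hne : ∀ k, ‖(t k : ℂ) • e‖ = t k := fun k => by
    rw [norm_smul, hen, mul_one, Complex.norm_real, Real.norm_of_nonneg (ht0 k).le]
  have hFd : ∀ k, DifferentiableOn ℂ (F k) (Metric.ball x r) := by
    intro k y hy
    have hd1 : DifferentiableAt ℂ (fun z => f (z + (t k : ℂ) • e)) y := by
      have := hda (y + (t k : ℂ) • e) (hin3 (htri _ _ _ y _ hy ((hne k).trans_lt (htr k))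
        (by linarith)))
      exact this.comp y (by fun_prop)
    have hd2 := hda y (hin3 (Metric.ball_subset_ball (by linarith) hy))
    exact ((hd1.sub hd2).const_mul _).differentiableWithinAt
  have hest : ∀ k, ∀ y ∈ Metric.ball x r, ‖F k y - pd i f y‖ ≤ 2 * (C * t k) / r := by
    intro k y hy
    have hmem0 : y ∈ Metric.closedBall y (t k) := Metric.mem_closedBall_self (ht0 k).le
    have hmem1 : y + (t k : ℂ) • e ∈ Metric.closedBall y (t k) := by
      rw [Metric.mem_closedBall, dist_eq_norm]
      simp only [add_sub_cancel_left]
      exact (hne k).le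
    have hmv := (convex_closedBall y (t k)).norm_image_sub_le_of_norm_hasFDerivWithin_le'
      (𝕜 := ℂ) (f := f) (f' := fun z => fderiv ℂ f z) (φ := fderiv ℂ f y) (C := 2 * (C * t k) / r)
      ?_ ?_ hmem0 hmem1
    · have e2 : F k y - pd i f y = ((t k : ℂ))⁻¹ * (f (y + (t k : ℂ) • e) - f y -
          fderiv ℂ f y (y + (t k : ℂ) • e - y)) := by
        have : (t k : ℂ) ≠ 0 := by exact_mod_cast (ht0 k).ne'
        simp only [F, pd, add_sub_cancel_left, map_smul, smul_eq_mul, ← he]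
        field_simp
      rw [e2, norm_mul, norm_inv, Complex.norm_real, Real.norm_of_nonneg (ht0 k).le,
        inv_mul_le_iff₀ (ht0 k), mul_comm]
      refine hmv.trans (le_of_eq ?_)
      rw [add_sub_cancel_left, hne]
    · intro z hz
      have : z = y + (z - y) := by abel
      have hzn : ‖z - y‖ < r := by
        rw [Metric.mem_closedBall, dist_eq_norm] at hz
        exact hz.trans_lt (htr k)
      rw [this]
      exact (hda _ (hin3 (htri _ _ _ y _ hy hzn (by linarith)))).hasFDerivAt.hasFDerivWithinAt
    · intro z hz
      rw [Metric.mem_closedBall, dist_eq_norm] at hz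
      have := hb2 y hy (z - y) (hz.trans_lt (htr k))
      rw [add_sub_cancel] at this
      refine this.trans ?_
      gcongr
  have hU : TendstoUniformlyOn F (pd i f) atTop (Metric.ball x r) := by
    rw [Metric.tendstoUniformlyOn_iff]
    intro ε hε
    have hlim : Tendsto (fun k => 2 * (C * t k) / r) atTop (𝓝 0) := by
      have : Tendsto t atTop (𝓝 0) :=
        tendsto_const_nhds.div_atTop (tendsto_atTop_add_const_right _ _ tendsto_natCast_atTop_atTop)
      simpa using ((this.const_mul C).const_mul 2).div_const r
    filter_upwards [hlim.eventually_lt_const hε] with k hk y hy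
    rw [dist_comm, dist_eq_norm]
    exact (hest k y hy).trans_lt hk
  exact ((limit_hol Metric.isOpen_ball hFd hU.tendstoLocallyUniformlyOn).differentiableAt
    (Metric.ball_mem_nhds x hr)).differentiableWithinAt

lemma comp_analyticAt {n : ℕ} {V : Set (Fin n → ℂ)} (hV : IsOpen V) {z0 : Fin n → ℂ}
    {f : (Fin n → ℂ) → ℂ} (hf : DifferentiableOn ℂ f V) {φ ψ : ℂ → ℂ} {a : ℂ}
    (hφ : AnalyticAt ℂ φ a) (hψ : AnalyticAt ℂ ψ a) {v : Fin n → ℂ} (hz : z0 + φ a • v ∈ V) :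
    AnalyticAt ℂ (fun τ => ψ τ * f (z0 + φ τ • v)) a := by
  rw [Complex.analyticAt_iff_eventually_differentiableAt]
  have hc : ContinuousAt (fun τ => z0 + φ τ • v) a := by
    have := hφ.continuousAt
    fun_prop
  filter_upwards [hφ.eventually_analyticAt, hψ.eventually_analyticAt,
    hc.eventually (hV.mem_nhds hz)] with τ h1 h2 h3
  have d1 := h1.differentiableAt
  have d2 := h2.differentiableAt
  have d3 : DifferentiableAt ℂ f (z0 + φ τ • v) := hf.differentiableAt (hV.mem_nhds h3)
  refine d2.mul (d3.comp τ (f := fun τ => z0 + φ τ • v) ?_)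
  fun_prop

lemma fderiv_eq_sum {n : ℕ} (f : (Fin n → ℂ) → ℂ) (w v : Fin n → ℂ) :
    fderiv ℂ f w v = ∑ i, v i * pd i f w := by
  conv_lhs => rw [pi_eq_sum_univ' v]
  rw [map_sum]
  simp [pd]

lemma coeff_poly {n : ℕ} {V : Set (Fin n → ℂ)} (hV : IsOpen V) {z0 : Fin n → ℂ} (hz0 : z0 ∈ V)
    {φ : ℂ → ℂ} (hφ : AnalyticAt ℂ φ 0) (hφ0 : φ 0 = 0) (k : ℕ) :
    ∀ (f : (Fin n → ℂ) → ℂ), DifferentiableOn ℂ f V → ∀ ψ : ℂ → ℂ, AnalyticAt ℂ ψ 0 →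
      ∃ Q : MvPolynomial (Fin n) ℂ, ∀ v : Fin n → ℂ,
        iteratedDeriv k (fun τ => ψ τ * f (z0 + φ τ • v)) 0 = MvPolynomial.eval v Q := by
  induction k with
  | zero =>
    intro f hf ψ hψ
    refine ⟨MvPolynomial.C (ψ 0 * f z0), fun v => ?_⟩
    simp [hφ0]
  | succ k ih =>
    intro f hf ψ hψ
    obtain ⟨Q0, hQ0⟩ := ih f hf (deriv ψ) hψ.deriv
    have hex := fun i => ih (pd i f) (pd_hol hV hf i) (fun τ => ψ τ * deriv φ τ)
      (hψ.mul hφ.deriv)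
    choose Q hQ using hex
    refine ⟨Q0 + ∑ i, MvPolynomial.X i * Q i, fun v => ?_⟩
    have hz : z0 + φ 0 • v ∈ V := by simpa [hφ0] using hz0
    have hc : ContinuousAt (fun τ => z0 + φ τ • v) 0 := by
      have := hφ.continuousAt
      fun_prop
    have hev : deriv (fun τ => ψ τ * f (z0 + φ τ • v)) =ᶠ[𝓝 0]
        fun τ => deriv ψ τ * f (z0 + φ τ • v) +
          ∑ i, v i * ((ψ τ * deriv φ τ) * pd i f (z0 + φ τ • v)) := by
      filter_upwards [hφ.eventually_analyticAt, hψ.eventually_analyticAt,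
        hc.eventually (hV.mem_nhds hz)] with τ h1 h2 h3
      have d1 := h1.differentiableAt.hasDerivAt
      have d2 := h2.differentiableAt.hasDerivAt
      have d3 := (hf.differentiableAt (hV.mem_nhds h3)).hasFDerivAt
      have d4 : HasDerivAt (fun τ => z0 + φ τ • v) (deriv φ τ • v) τ :=
        (d1.smul_const v).const_add z0
      have d5 := d2.mul (d3.comp_hasDerivAt τ d4)
      have := d5.deriv
      simp only [Function.comp_def] at this
      refine Eq.trans this ?_
      rw [map_smul, fderiv_eq_sum, smul_eq_mul, Finset.mul_sum, Finset.mul_sum]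
      congr 1
      refine Finset.sum_congr rfl fun i _ => ?_
      ring
    rw [iteratedDeriv_succ', hev.iteratedDeriv_eq k]
    have a0 := comp_analyticAt hV hf hφ hψ.deriv hz
    have a1 := fun i => comp_analyticAt hV (pd_hol hV hf i) hφ (hψ.mul hφ.deriv) hz
    rw [iteratedDeriv_fun_add a0.contDiffAt, iteratedDeriv_fun_sum]
    · simp only [iteratedDeriv_const_mul_field]
      rw [hQ0]
      simp only [map_add, map_sum, map_mul, MvPolynomial.eval_X]
      congr 1
      refine Finset.sum_congr rfl fun i _ => ?_
      rw [← hQ]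
    · intro i _
      exact (analyticAt_const.mul (a1 i)).contDiffAt
    · exact (Finset.analyticAt_fun_sum _ fun i _ => analyticAt_const.mul (a1 i)).contDiffAt

lemma exists_phi {ε : ℝ} (hε : 0 < ε) : ∃ (φ : ℂ → ℂ) (r : ℝ), 1 < r ∧
    DifferentiableOn ℂ φ (Metric.ball 0 r) ∧ φ 0 = 0 ∧ φ 1 = 1 ∧
    ∀ τ ∈ Metric.ball (0 : ℂ) r,
      φ τ ∈ Metric.thickening ε ((fun t : ℝ => (t : ℂ)) '' Icc (0:ℝ) 1) := by
  obtain ⟨e, he, hee⟩ : ∃ e : ℝ, 0 < e ∧ 2 * e < ε := ⟨ε / 4, by linarith, by linarith⟩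
  obtain ⟨Λ, hΛ⟩ : ∃ Λ : ℝ, Λ = 4 / e := ⟨_, rfl⟩
  have hΛ0 : 0 < Λ := by rw [hΛ]; positivity
  have hΛe : Λ * e = 4 := by rw [hΛ]; field_simp
  obtain ⟨ρ, hρ⟩ : ∃ ρ : ℝ, ρ = 1 - Real.exp (-Λ) := ⟨_, rfl⟩
  have hρ0 : 0 < ρ := by
    have : Real.exp (-Λ) < 1 := by rw [Real.exp_lt_one_iff]; linarith
    linarith
  have hρ1 : ρ < 1 := by have := Real.exp_pos (-Λ); linarith
  obtain ⟨r, hr⟩ : ∃ r : ℝ, r = (1 - Real.exp (-(Λ * (1 + e)))) / ρ := ⟨_, rfl⟩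
  have hρr : ρ * r = 1 - Real.exp (-(Λ * (1 + e))) := by rw [hr]; field_simp
  have hlow : ∀ τ ∈ Metric.ball (0 : ℂ) r, Real.exp (-(Λ * (1 + e))) ≤ (1 - ρ * τ).re := by
    intro τ hτ
    rw [mem_ball_zero_iff] at hτ
    have h1 : τ.re ≤ ‖τ‖ := Complex.re_le_norm τ
    have h2 : ρ * τ.re ≤ ρ * r := by gcongr; linarith
    simp
    linarith
  have hup : ∀ τ ∈ Metric.ball (0 : ℂ) r, ‖1 - ρ * τ‖ ≤ 2 := by
    intro τ hτ
    rw [mem_ball_zero_iff] at hτ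
    have h2 : ρ * ‖τ‖ ≤ ρ * r := by gcongr
    have h3 := norm_sub_le (1 : ℂ) (ρ * τ)
    rw [norm_mul, Complex.norm_real, Real.norm_of_nonneg hρ0.le, norm_one] at h3
    have := Real.exp_pos (-(Λ * (1 + e)))
    linarith
  have hslit : ∀ τ ∈ Metric.ball (0 : ℂ) r, 1 - ρ * τ ∈ Complex.slitPlane := by
    intro τ hτ
    exact Or.inl ((Real.exp_pos _).trans_le (hlow τ hτ))
  refine ⟨fun τ => - Complex.log (1 - ρ * τ) / Λ, r, ?_, ?_, ?_, ?_, ?_⟩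
  · rw [hr, lt_div_iff₀ hρ0, one_mul, hρ]
    have : Real.exp (-(Λ * (1 + e))) < Real.exp (-Λ) := by
      rw [Real.exp_lt_exp]
      nlinarith
    linarith
  · intro τ hτ
    have : DifferentiableAt ℂ (fun τ : ℂ => 1 - ρ * τ) τ := by fun_prop
    exact (((this.clog (hslit τ hτ)).neg).div_const _).differentiableWithinAt
  · simp
  · have : (1 : ℂ) - ρ * 1 = ((Real.exp (-Λ) : ℝ) : ℂ) := by
      rw [hρ]; push_cast; ring
    simp only [this]
    rw [← Complex.ofReal_log (Real.exp_pos _).le, Real.log_exp]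
    have : (Λ : ℂ) ≠ 0 := by exact_mod_cast hΛ0.ne'
    push_cast
    field_simp
  · intro τ hτ
    rw [Metric.mem_thickening_iff]
    set w := (- Complex.log (1 - ρ * τ) / Λ : ℂ) with hw
    have hre : w.re = - Real.log ‖1 - ρ * τ‖ / Λ := by
      rw [hw, Complex.div_ofReal_re, Complex.neg_re, Complex.log_re]
    have him : w.im = - (1 - ρ * τ).arg / Λ := by
      rw [hw, Complex.div_ofReal_im, Complex.neg_im, Complex.log_im]
    have hnlow : Real.exp (-(Λ * (1 + e))) ≤ ‖1 - ρ * τ‖ :=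
      (hlow τ hτ).trans (Complex.re_le_norm _)
    have hnpos : 0 < ‖1 - ρ * τ‖ := (Real.exp_pos _).trans_le hnlow
    have hl1 : -(Λ * (1 + e)) ≤ Real.log ‖1 - ρ * τ‖ := by
      rw [Real.le_log_iff_exp_le hnpos]; exact hnlow
    have hl2 : Real.log ‖1 - ρ * τ‖ ≤ 1 := by
      have := Real.log_le_sub_one_of_pos hnpos
      linarith [hup τ hτ]
    have hre1 : w.re ≤ 1 + e := by
      rw [hre, div_le_iff₀ hΛ0]; linarith
    have hre2 : -e ≤ w.re := by
      rw [hre, le_div_iff₀ hΛ0]; linarith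
    have him1 : |w.im| ≤ e := by
      rw [him, abs_div, abs_neg, abs_of_pos hΛ0, div_le_iff₀ hΛ0]
      linarith [Complex.abs_arg_le_pi (1 - ρ * τ), Real.pi_lt_four]
    refine ⟨((max 0 (min 1 w.re) : ℝ) : ℂ), ⟨_, ⟨by simp, by simp⟩, rfl⟩, ?_⟩
    rw [dist_eq_norm]
    refine (Complex.norm_le_abs_re_add_abs_im _).trans_lt ?_
    have : |(w - ((max 0 (min 1 w.re) : ℝ) : ℂ)).re| ≤ e := by
      rw [Complex.sub_re, Complex.ofReal_re, abs_le]
      rcases le_total 1 w.re with h | h <;> rcases le_total 0 w.re with h' | h' <;>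
        simp [h, h'] <;> (try constructor) <;> linarith
    have h2 : |(w - ((max 0 (min 1 w.re) : ℝ) : ℂ)).im| ≤ e := by
      rw [Complex.sub_im, Complex.ofReal_im, sub_zero]; exact him1
    linarith

/-- Star-shaped domains are Runge. -/
lemma star_runge {n : ℕ} {V : Set (Fin n → ℂ)} (hV : IsOpen V) {z0 : Fin n → ℂ} (hz0 : z0 ∈ V)
    (hst : StarConvex ℝ z0 V) {f : (Fin n → ℂ) → ℂ} (hf : DifferentiableOn ℂ f V)
    {L : Set (Fin n → ℂ)} (hL : IsCompact L) (hLV : L ⊆ V) {ε : ℝ} (hε : 0 < ε) :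
    ∃ Q : MvPolynomial (Fin n) ℂ, ∀ z ∈ L, ‖MvPolynomial.eval z Q - f z‖ < ε := by
  let I : Set ℂ := (fun t : ℝ => (t : ℂ)) '' Icc (0:ℝ) 1
  have hI : IsCompact I := isCompact_Icc.image Complex.continuous_ofReal
  let W : Set ℂ := {τ | ∀ z ∈ L, z0 + τ • (z - z0) ∈ V}
  have hWo : IsOpen W := by
    rw [isOpen_iff_eventually]
    intro τ hτ
    refine hL.eventually_forall_of_forall_eventually (x₀ := τ)
      (P := fun τ z => z0 + τ • (z - z0) ∈ V) fun z hz => ?_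
    have : Continuous fun q : ℂ × (Fin n → ℂ) => z0 + q.1 • (q.2 - z0) := by fun_prop
    exact this.continuousAt.eventually (hV.mem_nhds (hτ z hz))
  have hIW : I ⊆ W := by
    rintro _ ⟨t, ht, rfl⟩ z hz
    have := hst.add_smul_sub_mem (hLV hz) ht.1 ht.2
    simpa using this
  obtain ⟨δ, hδ, hδW⟩ := hI.exists_cthickening_subset_open hWo hIW
  obtain ⟨φ, r, hr, hφd, hφ0, hφ1, hφm⟩ := exists_phi hδ
  have hcomp : IsCompact ((fun q : ℂ × (Fin n → ℂ) => z0 + q.1 • (q.2 - z0)) ''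
      (Metric.cthickening δ I ×ˢ L)) := by
    refine (hI.cthickening.prod hL).image ?_
    fun_prop
  have hsubV : ((fun q : ℂ × (Fin n → ℂ) => z0 + q.1 • (q.2 - z0)) ''
      (Metric.cthickening δ I ×ˢ L)) ⊆ V := by
    rintro _ ⟨⟨τ, z⟩, ⟨h1, h2⟩, rfl⟩
    exact hδW h1 z h2
  obtain ⟨M, hM⟩ := hcomp.exists_bound_of_continuousOn (hf.continuousOn.mono hsubV)
  have hmem : ∀ τ ∈ Metric.ball (0:ℂ) r, ∀ z ∈ L, z0 + φ τ • (z - z0) ∈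
      ((fun q : ℂ × (Fin n → ℂ) => z0 + q.1 • (q.2 - z0)) '' (Metric.cthickening δ I ×ˢ L)) :=
    fun τ hτ z hz => ⟨(φ τ, z), ⟨Metric.thickening_subset_cthickening _ _ (hφm τ hτ), hz⟩, rfl⟩
  have hφan : AnalyticAt ℂ φ 0 :=
    hφd.analyticAt (Metric.ball_mem_nhds _ (by linarith))
  choose Q hQ using fun k => coeff_poly hV hz0 hφan hφ0 k f hf (fun _ => 1) analyticAt_const
  obtain ⟨r', h1r, hr'⟩ := exists_between hr
  have hr'0 : 0 < r' := by linarith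
  have hq1 : r'⁻¹ < 1 := inv_lt_one_of_one_lt₀ h1r
  have hmain : ∀ N, ∀ z ∈ L,
      ‖∑ k ∈ Finset.range N, (k.factorial : ℂ)⁻¹ * MvPolynomial.eval (z - z0) (Q k) - f z‖ ≤
        M * r'⁻¹ ^ N / (1 - r'⁻¹) := by
    intro N z hz
    have hG : DifferentiableOn ℂ (fun τ => (1:ℂ) * f (z0 + φ τ • (z - z0)))
        (Metric.ball 0 r) := by
      intro τ hτ
      have d1 := hφd.differentiableAt (Metric.isOpen_ball.mem_nhds hτ)
      have d3 : DifferentiableAt ℂ f (z0 + φ τ • (z - z0)) :=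
        hf.differentiableAt (hV.mem_nhds (hsubV (hmem τ hτ z hz)))
      refine (DifferentiableAt.const_mul (d3.comp τ (f := fun τ => z0 + φ τ • (z - z0)) ?_)
        _).differentiableWithinAt
      fun_prop
    have hs := Complex.hasSum_taylorSeries_on_ball hG (z := 1) (by simpa using hr)
    simp only [hφ1, sub_zero, one_pow, one_smul, add_sub_cancel, smul_eq_mul, one_mul] at hs
    refine norm_sub_le_of_geometric_bound_of_hasSum hq1 ?_ ?_ N
    · intro k
      rw [← hQ]
      have hb := Complex.norm_iteratedDeriv_le_of_forall_mem_sphere_norm_le (C := M) k hr'0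
        (f := fun τ => (1:ℂ) * f (z0 + φ τ • (z - z0))) (c := 0) ?_ ?_
      · rw [norm_mul, norm_inv, Complex.norm_natCast, inv_mul_le_iff₀ (by positivity)]
        refine hb.trans (le_of_eq ?_)
        rw [inv_pow]
        field_simp
      · refine DifferentiableOn.diffContOnCl ?_
        rw [closure_ball _ hr'0.ne']
        exact hG.mono (Metric.closedBall_subset_ball hr')
      · intro τ hτ
        rw [one_mul]
        refine hM _ (hmem τ ?_ z hz)
        rw [mem_sphere_zero_iff_norm] at hτ
        rw [mem_ball_zero_iff]; linarith
    · convert hs using 2 with k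
      rw [← hQ]
      simp
  have hlim : Tendsto (fun N : ℕ => M * r'⁻¹ ^ N / (1 - r'⁻¹)) atTop (𝓝 0) := by
    have := tendsto_pow_atTop_nhds_zero_of_lt_one (inv_nonneg.2 hr'0.le) hq1
    simpa using (this.const_mul M).div_const (1 - r'⁻¹)
  obtain ⟨N, hN⟩ := (hlim.eventually_lt_const hε).exists
  refine ⟨MvPolynomial.bind₁ (fun i => MvPolynomial.X i - MvPolynomial.C (z0 i))
    (∑ k ∈ Finset.range N, MvPolynomial.C (k.factorial : ℂ)⁻¹ * Q k), fun z hz => ?_⟩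
  have hev : MvPolynomial.eval z (MvPolynomial.bind₁
      (fun i => MvPolynomial.X i - MvPolynomial.C (z0 i))
      (∑ k ∈ Finset.range N, MvPolynomial.C (k.factorial : ℂ)⁻¹ * Q k)) =
      ∑ k ∈ Finset.range N, (k.factorial : ℂ)⁻¹ * MvPolynomial.eval (z - z0) (Q k) := by
    have h1 : ∀ p : MvPolynomial (Fin n) ℂ, MvPolynomial.eval z (MvPolynomial.bind₁
      (fun i => MvPolynomial.X i - MvPolynomial.C (z0 i)) p) = MvPolynomial.eval (z - z0) p := by
      intro p
      induction p using MvPolynomial.induction_on with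
      | C a => simp
      | add p q hp hq => simp only [map_add, hp, hq]
      | mul_X p i hp => simp only [map_mul, hp]; simp
    rw [h1]
    simp
  rw [hev]
  exact (hmain N z hz).trans_lt hN

lemma eval_differentiable {n : ℕ} (p : MvPolynomial (Fin n) ℂ) :
    Differentiable ℂ (fun z : Fin n → ℂ => MvPolynomial.eval z p) := by
  induction p using MvPolynomial.induction_on with
  | C a => simp
  | add p q hp hq => simp only [map_add]; exact hp.add hq
  | mul_X p i hp =>
    simp only [map_mul, MvPolynomial.eval_X]
    fun_prop


def vfun (u : ℂ) : ℂ := u * ((1 + u ^ 2) ^ (-(1/2) : ℂ))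

lemma vfun_neg (u : ℂ) : vfun (-u) = - vfun u := by simp [vfun]

lemma vfun_near {u : ℂ} (hu : 0 < u.re) : ‖vfun u - 1‖ ≤ ‖1 + u ^ 2‖⁻¹ := by
  by_cases h0 : 1 + u ^ 2 = 0
  · exfalso
    have h1 := congrArg Complex.re h0
    have h2 := congrArg Complex.im h0
    simp [pow_two] at h1 h2
    rcases h2 with h2
    have : u.im = 0 := by
      have : u.re * u.im = 0 := by linarith
      rcases mul_eq_zero.1 this with h | h
      · linarith
      · exact h
    rw [this] at h1
    nlinarith
  have hslit : 1 + u ^ 2 ∈ Complex.slitPlane := by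
    by_contra hc
    rw [Complex.mem_slitPlane_iff] at hc
    push Not at hc
    obtain ⟨h1, h2⟩ := hc
    simp [pow_two] at h1 h2
    have : u.im = 0 := by
      have : u.re * u.im = 0 := by linarith
      rcases mul_eq_zero.1 this with h | h
      · linarith
      · exact h
    rw [this] at h1
    nlinarith
  set s : ℂ := (1 + u ^ 2) ^ ((1/2) : ℂ) with hs
  have hss : s * s = 1 + u ^ 2 := by
    rw [hs, ← Complex.cpow_add _ _ h0]; norm_num
  have hs0 : s ≠ 0 := by
    intro h; rw [h] at hss; apply h0; rw [← hss]; simp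
  have hsre : 0 < s.re := by
    rw [hs, Complex.cpow_def_of_ne_zero h0, Complex.exp_re]
    refine mul_pos (Real.exp_pos _) (Real.cos_pos_of_mem_Ioo ?_)
    have him : (Complex.log (1 + u ^ 2) * (1/2)).im = (1 + u ^ 2).arg / 2 := by
      have : (1/2 : ℂ) = ((1/2 : ℝ) : ℂ) := by norm_num
      rw [this, Complex.im_mul_ofReal, Complex.log_im]; ring
    rw [him]
    have h1 := Complex.neg_pi_lt_arg (1 + u ^ 2)
    have h2 := Complex.arg_le_pi (1 + u ^ 2)
    have h3 := (Complex.mem_slitPlane_iff_arg.1 hslit).1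
    have h4 := lt_of_le_of_ne h2 h3
    constructor <;> linarith
  have hv : vfun u = u / s := by
    rw [vfun, Complex.cpow_neg, ← hs]; rfl
  have him : s.re * s.im = u.re * u.im := by
    have := congrArg Complex.im hss
    simp [pow_two] at this
    linarith
  have hvre : 0 ≤ (vfun u).re := by
    rw [hv, Complex.div_re]
    have h1 : 0 ≤ u.im * s.im := by
      have : s.re * (u.im * s.im) = u.re * u.im ^ 2 := by
        calc s.re * (u.im * s.im) = (s.re * s.im) * u.im := by ring
          _ = _ := by rw [him]; ring
      by_contra hc
      push Not at hc
      have h2 : s.re * (u.im * s.im) < 0 := mul_neg_of_pos_of_neg hsre hc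
      have h3 : 0 ≤ u.re * u.im ^ 2 := by positivity
      linarith
    have h2 := Complex.normSq_nonneg s
    positivity
  have hprod : (vfun u - 1) * (vfun u + 1) = - (1 + u ^ 2)⁻¹ := by
    rw [hv, ← hss]
    field_simp
    linear_combination - hss
  have hn : 1 ≤ ‖vfun u + 1‖ := by
    have := Complex.re_le_norm (vfun u + 1)
    simp at this
    linarith
  calc ‖vfun u - 1‖ = ‖vfun u - 1‖ * 1 := by ring
    _ ≤ ‖vfun u - 1‖ * ‖vfun u + 1‖ := by gcongr
    _ = ‖1 + u ^ 2‖⁻¹ := by rw [← norm_mul, hprod, norm_neg, norm_inv]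

/-- simultaneous approximation on both sides of a hyperplane -/
lemma two_sided {n : ℕ} {Ω : Set (Fin n → ℂ)} (hΩo : IsOpen Ω) (hΩcv : Convex ℝ Ω)
    {K : Set (Fin n → ℂ)} (hK : IsCompact K) (hKc : Convex ℝ K) (hKΩ : K ∩ Ω = ∅)
    {L : Set (Fin n → ℂ)} (hL : IsCompact L) (hLΩ : L ⊆ Ω)
    {f : (Fin n → ℂ) → ℂ} (hf : DifferentiableOn ℂ f Ω) (P : MvPolynomial (Fin n) ℂ)
    {ε : ℝ} (hε : 0 < ε) :
    ∃ Q : MvPolynomial (Fin n) ℂ, (∀ z ∈ L, ‖MvPolynomial.eval z Q - f z‖ < ε) ∧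
      ∀ z ∈ K, ‖MvPolynomial.eval z Q - MvPolynomial.eval z P‖ < ε := by
  rcases Ω.eq_empty_or_nonempty with hΩe | ⟨a, ha⟩
  · refine ⟨P, fun z hz => ?_, fun z hz => by simpa using hε⟩
    exact absurd (hLΩ hz) (by simp [hΩe])
  obtain ⟨g, hg⟩ := star_runge hΩo ha (hΩcv.starConvex ha) hf hL hLΩ (half_pos hε)
  rcases K.eq_empty_or_nonempty with hKe | ⟨b, hb⟩
  · refine ⟨g, fun z hz => (hg z hz).trans (by linarith), fun z hz => ?_⟩
    simp [hKe] at hz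
  obtain ⟨l, u, hl1, hl2⟩ := RCLike.geometric_hahn_banach_open (𝕜 := ℂ) hΩcv hΩo hKc
    (by rw [disjoint_iff_inter_eq_empty, inter_comm]; exact hKΩ)
  simp only [RCLike.re_eq_complex_re] at hl1 hl2
  -- gap
  obtain ⟨c, δ, hδ, hcL, hcK⟩ : ∃ c δ : ℝ, 0 < δ ∧ (∀ z ∈ L, (l z).re ≤ c - δ) ∧
      ∀ z ∈ K, c + δ ≤ (l z).re := by
    rcases L.eq_empty_or_nonempty with hLe | hLne
    · refine ⟨u - 1, 1, one_pos, by simp [hLe], fun z hz => by linarith [hl2 z hz]⟩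
    · obtain ⟨x, hx, hmax⟩ := hL.exists_isMaxOn hLne
        (f := fun z => (l z).re) (by fun_prop)
      have hxu := hl1 x (hLΩ hx)
      refine ⟨((l x).re + u) / 2, (u - (l x).re) / 2, by linarith, fun z hz => ?_, fun z hz => ?_⟩
      · have : (l z).re ≤ (l x).re := hmax hz
        linarith
      · linarith [hl2 z hz]
  have hlba : l (b - a) ≠ 0 := by
    intro h
    rw [map_sub, sub_eq_zero] at h
    have h1 := hl1 a ha
    have h2 := hl2 b hb
    rw [h] at h2
    linarith
  let z0 : Fin n → ℂ := ((c : ℂ) / l (b - a)) • (b - a)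
  have hz0 : l z0 = c := by
    simp only [z0, map_smul, smul_eq_mul]
    field_simp
  -- bound on g - P
  obtain ⟨M, hM⟩ := (hL.union hK).exists_bound_of_continuousOn
    (f := fun z => MvPolynomial.eval z g - MvPolynomial.eval z P)
    ((MvPolynomial.continuous_eval g).sub (MvPolynomial.continuous_eval P)).continuousOn
  have hM0 : 0 ≤ M := (norm_nonneg _).trans (hM b (Or.inr hb))
  obtain ⟨t, ht0, ht1⟩ : ∃ t : ℝ, 0 < t ∧ M * ((t * δ) ^ 2 - 1)⁻¹ < ε / 4 ∧ 1 < (t * δ) ^ 2 := by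
    have h1 : Tendsto (fun t : ℝ => (t * δ) ^ 2 - 1) atTop atTop := by
      refine tendsto_atTop_add_const_right _ _ ?_
      exact (tendsto_pow_atTop (by norm_num)).comp (tendsto_id.atTop_mul_const hδ)
    have h2 : Tendsto (fun t : ℝ => M * ((t * δ) ^ 2 - 1)⁻¹) atTop (𝓝 0) := by
      simpa using (tendsto_inv_atTop_zero.comp h1).const_mul M
    obtain ⟨t, h3, h4, h5⟩ := ((eventually_gt_atTop (0:ℝ)).and
      ((h2.eventually_lt_const (show 0 < ε / 4 by linarith)).and
        (h1.eventually_gt_atTop 0))).exists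
    exact ⟨t, h3, h4, by linarith⟩
  let w : (Fin n → ℂ) → ℂ := fun z => (t : ℂ) * (l z - c)
  have hwc : Continuous w := by fun_prop
  let V : Set (Fin n → ℂ) := {z | 1 + w z ^ 2 ∈ Complex.slitPlane}
  have hVo : IsOpen V := Complex.isOpen_slitPlane.preimage (by fun_prop)
  have hz0V : z0 ∈ V := by
    simp [V, w, hz0]
  have hVst : StarConvex ℝ z0 V := by
    rw [starConvex_iff_forall_pos hz0V]
    intro z hz p q hp hq hpq
    have hw1 : w (p • z0 + q • z) = q * w z := by
      have : l (p • z0 + q • z) = (p : ℂ) * c + q * l z := by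
        rw [map_add]
        have e1 : l (p • z0) = (p : ℂ) * l z0 := by
          rw [← Complex.coe_smul, map_smul, smul_eq_mul]
        have e2 : l (q • z) = (q : ℂ) * l z := by
          rw [← Complex.coe_smul, map_smul, smul_eq_mul]
        rw [e1, e2, hz0]
      have hpq' : (p : ℂ) = 1 - q := by
        have h := congrArg (fun x : ℝ => (x : ℂ)) hpq
        push_cast at h
        linear_combination h
      simp only [w, this, hpq']
      ring
    show 1 + w (p • z0 + q • z) ^ 2 ∈ Complex.slitPlane
    have hz' : 1 + w z ^ 2 ∈ Complex.slitPlane := hz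
    rw [hw1, mul_pow]
    have hq2 : ((q : ℂ) ^ 2) = ((q ^ 2 : ℝ) : ℂ) := by push_cast; ring
    rw [hq2]
    rw [Complex.mem_slitPlane_iff] at hz' ⊢
    rw [Complex.add_re, Complex.add_im, Complex.re_ofReal_mul, Complex.im_ofReal_mul,
      Complex.one_re, Complex.one_im, zero_add]
    rw [Complex.add_re, Complex.add_im, Complex.one_re, Complex.one_im, zero_add] at hz'
    rcases hz' with h | h
    · left
      have hq1 : q ≤ 1 := by linarith
      nlinarith [mul_pos hq hq]
    · right
      exact mul_ne_zero (by positivity) h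
  have hFd : DifferentiableOn ℂ (fun z => MvPolynomial.eval z P + (MvPolynomial.eval z g -
      MvPolynomial.eval z P) * ((1 - vfun (w z)) / 2)) V := by
    have hpol := fun p : MvPolynomial (Fin n) ℂ => eval_differentiable p
    intro z hz
    have d1 := hpol P z
    have d2 := hpol g z
    have d3 : DifferentiableAt ℂ w z := by fun_prop
    have d4 : DifferentiableAt ℂ (fun z => (1 + w z ^ 2) ^ (-(1/2) : ℂ)) z :=
      DifferentiableAt.cpow (by fun_prop) (by fun_prop) hz
    have d5 : DifferentiableAt ℂ (fun z => vfun (w z)) z := by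
      simp only [vfun]; exact d3.mul d4
    have d6 : DifferentiableAt ℂ (fun z => (1 - vfun (w z)) / 2) z := by
      simp only [div_eq_mul_inv]
      exact (d5.const_sub 1).mul_const _
    exact (d1.add ((d2.sub d1).mul d6)).differentiableWithinAt
  have hbound : ∀ x : ℂ, t * δ ≤ ‖x‖ → ‖1 + x ^ 2‖⁻¹ ≤ ((t * δ) ^ 2 - 1)⁻¹ := by
    intro x hx
    have h1 : ‖x ^ 2‖ - ‖(1:ℂ)‖ ≤ ‖1 + x ^ 2‖ := by
      have := norm_sub_norm_le (x ^ 2) (-1)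
      rw [norm_neg, sub_neg_eq_add, add_comm] at this
      exact this
    rw [norm_one, norm_pow] at h1
    have h2 : (t * δ) ^ 2 ≤ ‖x‖ ^ 2 := by gcongr
    gcongr
    · linarith [ht1.2]
    · linarith
  have hwre : ∀ z, (w z).re = t * ((l z).re - c) := by
    intro z
    simp [w]
  have hKre : ∀ z ∈ K, t * δ ≤ (w z).re := by
    intro z hz
    rw [hwre]
    gcongr
    linarith [hcK z hz]
  have hLre : ∀ z ∈ L, t * δ ≤ (-(w z)).re := by
    intro z hz
    rw [Complex.neg_re, hwre, ← mul_neg]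
    gcongr
    linarith [hcL z hz]
  have htd : 0 < t * δ := by positivity
  have hKv : ∀ z ∈ K, ‖vfun (w z) - 1‖ ≤ ((t * δ) ^ 2 - 1)⁻¹ := fun z hz =>
    (vfun_near (htd.trans_le (hKre z hz))).trans
      (hbound _ ((hKre z hz).trans (Complex.re_le_norm _)))
  have hLv : ∀ z ∈ L, ‖vfun (w z) + 1‖ ≤ ((t * δ) ^ 2 - 1)⁻¹ := by
    intro z hz
    have := (vfun_near (htd.trans_le (hLre z hz))).trans
      (hbound _ ((hLre z hz).trans (Complex.re_le_norm _)))
    rwa [vfun_neg, ← norm_neg, neg_sub, sub_neg_eq_add, add_comm] at this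
  have hslit : ∀ x : ℂ, x.re ≠ 0 → 1 + x ^ 2 ∈ Complex.slitPlane := by
    intro x hx
    rw [Complex.mem_slitPlane_iff]
    by_cases h : x.im = 0
    · left
      simp [pow_two, h]
      nlinarith [mul_self_nonneg x.re]
    · right
      simp [pow_two]
      intro h2
      have : x.re * x.im = 0 := by linarith
      rcases mul_eq_zero.1 this with h3 | h3
      · exact hx h3
      · exact h h3
  have hLKV : L ∪ K ⊆ V := by
    rintro z (hz | hz)
    · refine hslit _ ?_
      have := hLre z hz
      rw [Complex.neg_re] at this
      linarith
    · refine hslit _ ?_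
      have := hKre z hz
      linarith
  obtain ⟨Q, hQ⟩ := star_runge hVo hz0V hVst hFd (hL.union hK) hLKV
    (show 0 < ε / 4 by linarith)
  refine ⟨Q, fun z hz => ?_, fun z hz => ?_⟩
  · have h1 := hQ z (Or.inl hz)
    have h2 := hg z hz
    have h3 : ‖(MvPolynomial.eval z g - MvPolynomial.eval z P) * ((vfun (w z) + 1) / 2)‖ < ε / 4 := by
      rw [norm_mul, norm_div, Complex.norm_ofNat]
      have := mul_le_mul (hM z (Or.inl hz)) (hLv z hz) (norm_nonneg _) hM0
      have h4 := ht1.1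
      have h5 : 0 ≤ ‖MvPolynomial.eval z g - MvPolynomial.eval z P‖ * ‖vfun (w z) + 1‖ := by positivity
      rw [← mul_div_assoc]
      linarith
    have e : MvPolynomial.eval z Q - f z = (MvPolynomial.eval z Q - (MvPolynomial.eval z P +
        (MvPolynomial.eval z g - MvPolynomial.eval z P) * ((1 - vfun (w z)) / 2))) +
        (MvPolynomial.eval z g - f z) -
        (MvPolynomial.eval z g - MvPolynomial.eval z P) * ((vfun (w z) + 1) / 2) := by ring
    rw [e]
    refine (norm_sub_le _ _).trans_lt ?_
    have := norm_add_le (MvPolynomial.eval z Q - (MvPolynomial.eval z P +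
        (MvPolynomial.eval z g - MvPolynomial.eval z P) * ((1 - vfun (w z)) / 2)))
        (MvPolynomial.eval z g - f z)
    linarith
  · have h1 := hQ z (Or.inr hz)
    have h3 : ‖(MvPolynomial.eval z g - MvPolynomial.eval z P) * ((vfun (w z) - 1) / 2)‖ < ε / 4 := by
      rw [norm_mul, norm_div, Complex.norm_ofNat]
      have := mul_le_mul (hM z (Or.inr hz)) (hKv z hz) (norm_nonneg _) hM0
      have h4 := ht1.1
      have h5 : 0 ≤ ‖MvPolynomial.eval z g - MvPolynomial.eval z P‖ * ‖vfun (w z) - 1‖ := by positivity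
      rw [← mul_div_assoc]
      linarith
    have e : MvPolynomial.eval z Q - MvPolynomial.eval z P =
        (MvPolynomial.eval z Q - (MvPolynomial.eval z P +
        (MvPolynomial.eval z g - MvPolynomial.eval z P) * ((1 - vfun (w z)) / 2))) -
        (MvPolynomial.eval z g - MvPolynomial.eval z P) * ((vfun (w z) - 1) / 2) := by ring
    rw [e]
    refine (norm_sub_le _ _).trans_lt ?_
    linarith

lemma pd_mvEval {n : ℕ} (i : Fin n) (p : MvPolynomial (Fin n) ℂ) :
    pd i (mvEval p) = mvEval (MvPolynomial.pderiv i p) := by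
  induction p using MvPolynomial.induction_on with
  | C a =>
    funext z
    have : mvEval (MvPolynomial.C a : MvPolynomial (Fin n) ℂ) = fun _ => a := by
      funext z; simp [mvEval]
    simp [pd, this, mvEval]
  | add p q hp hq =>
    funext z
    have e : mvEval (p + q) = mvEval p + mvEval q := by funext z; simp [mvEval]
    have h1 := congrFun hp z
    have h2 := congrFun hq z
    have d1 : DifferentiableAt ℂ (mvEval p) z := eval_differentiable p z
    have d2 : DifferentiableAt ℂ (mvEval q) z := eval_differentiable q z
    simp only [pd] at h1 h2 ⊢
    rw [e, fderiv_add d1 d2, ContinuousLinearMap.add_apply, h1, h2]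
    simp [mvEval]
  | mul_X p j hp =>
    funext z
    have e : mvEval (p * MvPolynomial.X j) = fun z => mvEval p z * z j := by
      funext z; simp [mvEval]
    have h1 := congrFun hp z
    have d1 : DifferentiableAt ℂ (mvEval p) z := eval_differentiable p z
    have d2 : HasFDerivAt (fun z : Fin n → ℂ => z j)
      (ContinuousLinearMap.proj (R := ℂ) (φ := fun _ : Fin n => ℂ) j) z :=
      (ContinuousLinearMap.proj (R := ℂ) (φ := fun _ : Fin n => ℂ) j).hasFDerivAt
    have d3 := d1.hasFDerivAt.mul d2
    simp only [pd] at h1 ⊢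
    rw [e, show (fun z => mvEval p z * z j) = mvEval p * (fun z : Fin n → ℂ => z j) from rfl,
      HasFDerivAt.fderiv d3]
    simp [h1, mvEval, Pi.single_apply]
    split_ifs <;> simp

def DPl {n : ℕ} (ℓ : Fin n → ℕ) (l : List (Fin n)) (p : MvPolynomial (Fin n) ℂ) :
    MvPolynomial (Fin n) ℂ :=
  l.foldr (fun i g => (MvPolynomial.pderiv i)^[ℓ i] g) p

lemma foldr_mvEval {n : ℕ} (ℓ : Fin n → ℕ) (l : List (Fin n)) (p : MvPolynomial (Fin n) ℂ) :
    l.foldr (fun i g => (pd i)^[ℓ i] g) (mvEval p) = mvEval (DPl ℓ l p) := by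
  induction l with
  | nil => rfl
  | cons i l ih =>
    simp only [DPl, List.foldr_cons] at ih ⊢
    rw [ih]
    generalize List.foldr _ p l = q
    induction ℓ i with
    | zero => rfl
    | succ k ihk => rw [Function.iterate_succ_apply', ihk, pd_mvEval, Function.iterate_succ_apply']

lemma DPl_add {n : ℕ} (ℓ : Fin n → ℕ) (l : List (Fin n)) (p q : MvPolynomial (Fin n) ℂ) :
    DPl ℓ l (p + q) = DPl ℓ l p + DPl ℓ l q := by
  induction l with
  | nil => rfl
  | cons i l ih =>
    simp only [DPl, List.foldr_cons] at ih ⊢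
    rw [ih, iterate_map_add]

lemma DPl_monomial {n : ℕ} (ℓ : Fin n → ℕ) (l : List (Fin n)) (hl : l.Nodup)
    (m : Fin n →₀ ℕ) (c : ℂ) :
    DPl ℓ l (MvPolynomial.monomial m c) = MvPolynomial.monomial
      (Finsupp.equivFunOnFinite.symm (fun i => if i ∈ l then m i - ℓ i else m i))
      (c * ∏ i, if i ∈ l then ((m i).descFactorial (ℓ i) : ℂ) else 1) := by
  induction l with
  | nil =>
    simp [DPl]
    
  | cons i l ih =>
    have hil : i ∉ l := (List.nodup_cons.1 hl).1
    have ih := ih (List.nodup_cons.1 hl).2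
    have key : ∀ (k : ℕ) (m' : Fin n →₀ ℕ) (a : ℂ),
        (MvPolynomial.pderiv i)^[k] (MvPolynomial.monomial m' a) =
        MvPolynomial.monomial (m' - Finsupp.single i k) (a * ((m' i).descFactorial k : ℂ)) := by
      intro k m' a
      induction k with
      | zero => simp
      | succ k ihk =>
        rw [Function.iterate_succ_apply', ihk, MvPolynomial.pderiv_monomial]
        congr 1
        · congr 1
          ext j
          by_cases hij : j = i
          · subst hij; simp; omega
          · simp [Finsupp.single_apply, Ne.symm hij]
        · simp [Nat.descFactorial_succ]; ring
    simp only [DPl, List.foldr_cons] at ih ⊢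
    rw [ih, key]
    congr 1
    · congr 1
      ext j
      by_cases hij : j = i
      · subst hij; simp [hil]
      · simp [Finsupp.single_apply, Ne.symm hij, hij]
    · rw [mul_assoc]
      congr 1
      rw [← Finset.prod_erase_mul _ _ (Finset.mem_univ i), 
        ← Finset.prod_erase_mul _ _ (Finset.mem_univ i)]
      simp [hil]
      left
      apply Finset.prod_congr rfl
      intro j hj
      simp [(Finset.mem_erase.1 hj).1]

lemma pSum_poly {n : ℕ} (Nj : ℕ → Fin n → ℕ) (hNj : Function.Bijective Nj)
    (Q : MvPolynomial (Fin n) ℂ) :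
    ∀ᶠ lam in atTop, ∀ ζ z, pSum Nj (mvEval Q) ζ lam z = mvEval Q z := by
  induction Q using MvPolynomial.induction_on' with
  | add p q hp hq =>
    filter_upwards [hp, hq] with lam h1 h2 ζ z
    have e : mvEval (p + q) z = mvEval p z + mvEval q z := by simp [mvEval]
    rw [e, ← h1 ζ z, ← h2 ζ z]
    simp only [pSum, pSumExt, Dml, foldr_mvEval, DPl_add]
    rw [← Finset.sum_add_distrib]
    apply Finset.sum_congr rfl
    intro j _
    simp only [mvEval, map_add]
    ring
  | monomial m c =>
    set B : Finset (Fin n → ℕ) := Fintype.piFinset (fun i => Finset.range (m i + 1)) with hB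
    have hfin : ((fun j => Nj j) ⁻¹' (B : Set (Fin n → ℕ))).Finite :=
      B.finite_toSet.preimage hNj.1.injOn
    obtain ⟨b, hb⟩ := hfin.bddAbove
    filter_upwards [eventually_ge_atTop b] with lam hlam ζ z
    set t : (Fin n → ℕ) → ℂ := fun ℓ => c * ∏ i, ((z i - ζ i) ^ (ℓ i) * ζ i ^ (m i - ℓ i) *
      ((m i).choose (ℓ i) : ℂ)) with ht
    have h1 : pSum Nj (mvEval (MvPolynomial.monomial m c)) ζ lam z =
        ∑ j ∈ Finset.range (lam + 1), t (Nj j) := by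
      simp only [pSum, pSumExt, Dml, foldr_mvEval]
      apply Finset.sum_congr rfl
      intro j _
      rw [DPl_monomial _ _ (List.nodup_finRange n)]
      simp only [mvEval, MvPolynomial.eval_monomial, List.mem_finRange, if_true, ht]
      rw [Finsupp.prod_fintype _ _ (by simp)]
      simp only [Finset.prod_mul_distrib, Nat.descFactorial_eq_factorial_mul_choose]
      push_cast
      simp only [Finset.prod_mul_distrib, Finsupp.equivFunOnFinite_symm_apply_apply]
      have : (∏ i, ((Nj j i).factorial : ℂ)) ≠ 0 :=
        Finset.prod_ne_zero_iff.2 fun i _ => by exact_mod_cast Nat.factorial_ne_zero _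
      field_simp
    have h2 : ∑ j ∈ Finset.range (lam + 1), t (Nj j) = ∑ ℓ ∈ B, t ℓ := by
      rw [← Finset.sum_image (f := t) (g := Nj) (hNj.1.injOn)]
      symm
      apply Finset.sum_subset
      · intro ℓ hℓ
        obtain ⟨j, rfl⟩ := hNj.2 ℓ
        have := hb (show j ∈ _ from hℓ)
        exact Finset.mem_image_of_mem _ (Finset.mem_range.2 (by omega))
      · intro ℓ _ hℓ
        simp only [hB, Fintype.mem_piFinset, not_forall, Finset.mem_range, not_lt] at hℓ
        obtain ⟨i, hi⟩ := hℓ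
        simp only [ht]
        rw [Finset.prod_eq_zero (Finset.mem_univ i), mul_zero]
        rw [Nat.choose_eq_zero_of_lt (by omega)]; simp
    rw [h1, h2, ht, ← Finset.mul_sum, hB]
    rw [← Finset.prod_univ_sum (fun i => Finset.range (m i + 1))
      (fun i k => (z i - ζ i) ^ k * ζ i ^ (m i - k) * ((m i).choose k : ℂ))]
    simp only [mvEval, MvPolynomial.eval_monomial]
    rw [Finsupp.prod_fintype _ _ (by simp)]
    congr 1
    apply Finset.prod_congr rfl
    intro i _
    rw [← add_pow]; simp

def toC {n : ℕ} {Ω : Set (Fin n → ℂ)} (f : Ospace n Ω) : C(Ω, ℂ) :=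
  ⟨Ω.restrict f.1, continuousOn_iff_continuous_restrict.mp f.2.continuousOn⟩

lemma toC_inducing {n : ℕ} {Ω : Set (Fin n → ℂ)} :
    IsInducing (toC : Ospace n Ω → C(Ω, ℂ)) := ⟨rfl⟩

lemma O_tendsto {n : ℕ} {Ω : Set (Fin n → ℂ)} {ι : Type*} {l : Filter ι} {F : ι → Ospace n Ω}
    {g : Ospace n Ω} : Tendsto F l (𝓝 g) ↔
      ∀ L : Set (Fin n → ℂ), L ⊆ Ω → IsCompact L →
        TendstoUniformlyOn (fun i => (F i).1) g.1 l L := by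
  rw [toC_inducing.tendsto_nhds_iff, ContinuousMap.tendsto_iff_forall_isCompact_tendstoUniformlyOn]
  constructor
  · intro h L hL hLc
    have := h (Subtype.val ⁻¹' L) (by
      rw [Subtype.isCompact_iff, Subtype.image_preimage_coe, inter_eq_right.2 hL]; exact hLc)
    rw [Metric.tendstoUniformlyOn_iff] at this ⊢
    intro ε hε
    filter_upwards [this ε hε] with i hi x hx
    exact hi ⟨x, hL hx⟩ hx
  · intro h K hK
    have := h (Subtype.val '' K) (by rintro _ ⟨x, _, rfl⟩; exact x.2) (Subtype.isCompact_iff.1 hK)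
    rw [Metric.tendstoUniformlyOn_iff] at this ⊢
    intro ε hε
    filter_upwards [this ε hε] with i hi x hx
    exact hi x ⟨x, hx, rfl⟩

def pdO {n : ℕ} {Ω : Set (Fin n → ℂ)} (hΩ : IsOpen Ω) (i : Fin n) (f : Ospace n Ω) :
    Ospace n Ω := ⟨pd i f.1, pd_hol hΩ f.2 i⟩

lemma pdO_cont {n : ℕ} {Ω : Set (Fin n → ℂ)} (hΩ : IsOpen Ω) (i : Fin n) :
    Continuous (pdO hΩ i) := by
  rw [continuous_iff_continuousAt]
  intro g
  have hid : Tendsto (fun f : Ospace n Ω => f) (𝓝 g) (𝓝 g) := tendsto_id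
  rw [O_tendsto] at hid
  rw [ContinuousAt, O_tendsto]
  intro L hL hLc
  obtain ⟨r, hr, hrΩ⟩ := hLc.exists_cthickening_subset_open hΩ hL
  have h1 := hid _ hrΩ hLc.cthickening
  rw [Metric.tendstoUniformlyOn_iff] at h1 ⊢
  intro ε hε
  filter_upwards [h1 (ε * r / 4) (by positivity)] with f hf x hx
  have hball : Metric.ball x r ⊆ Metric.cthickening r L := by
    intro y hy
    exact Metric.mem_cthickening_of_dist_le y x r L hx (Metric.mem_ball.1 hy).le
  have hxΩ : Ω ∈ 𝓝 x := hΩ.mem_nhds (hL hx)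
  have h2 := cauchy_fderiv (f := g.1 - f.1) (M := ε * r / 4) (c := x) hr
    ((g.2.sub f.2).mono (hball.trans hrΩ))
    (fun z hz => by
      have := hf z (hball hz)
      rw [dist_eq_norm] at this
      exact this.le)
  rw [fderiv_sub (g.2.differentiableAt hxΩ) (f.2.differentiableAt hxΩ)] at h2
  have h3 := (fderiv ℂ g.1 x - fderiv ℂ f.1 x).le_of_opNorm_le h2 (Pi.single i 1)
  have h4 : ‖(Pi.single i 1 : Fin n → ℂ)‖ = 1 := by rw [Pi.norm_single]; simp
  rw [h4] at h3
  rw [dist_eq_norm]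
  simp only [pdO, pd]
  have h5 : 2 * (ε * r / 4) / r * 1 = ε / 2 := by field_simp; norm_num
  rw [h5] at h3
  exact lt_of_le_of_lt h3 (by linarith)

lemma pdO_iter {n : ℕ} {Ω : Set (Fin n → ℂ)} (hΩ : IsOpen Ω) (i : Fin n) (k : ℕ)
    (g : Ospace n Ω) : ((pdO hΩ i)^[k] g).1 = (pd i)^[k] g.1 := by
  induction k with
  | zero => rfl
  | succ k ih =>
    rw [Function.iterate_succ_apply', Function.iterate_succ_apply', ← ih]
    rfl

lemma exists_DO {n : ℕ} {Ω : Set (Fin n → ℂ)} (hΩ : IsOpen Ω) (ℓ : Fin n → ℕ) :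
    ∃ Φ : Ospace n Ω → Ospace n Ω, Continuous Φ ∧ ∀ f, (Φ f).1 = Dml ℓ f.1 := by
  unfold Dml
  induction List.finRange n with
  | nil => exact ⟨id, continuous_id, fun _ => rfl⟩
  | cons i l ih =>
    obtain ⟨Φ, hc, hΦ⟩ := ih
    refine ⟨fun f => (pdO hΩ i)^[ℓ i] (Φ f), ((pdO_cont hΩ i).iterate _).comp hc, fun f => ?_⟩
    rw [List.foldr_cons, ← hΦ f]
    exact pdO_iter hΩ i (ℓ i) (Φ f)

lemma eval_cont {n : ℕ} {Ω : Set (Fin n → ℂ)} (hΩ : IsOpen Ω) :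
    Continuous (fun q : Ospace n Ω × Ω => q.1.1 q.2) := by
  have : LocallyCompactSpace Ω := hΩ.locallyCompactSpace
  have : Continuous (fun q : Ospace n Ω × Ω => (toC q.1) q.2) :=
    (ContinuousEval.continuous_eval (F := C(Ω, ℂ))).comp
      ((toC_inducing.continuous.comp continuous_fst).prodMk continuous_snd)
  exact this

lemma pSum_cont {n : ℕ} {Ω : Set (Fin n → ℂ)} (hΩ : IsOpen Ω) (Nj : ℕ → Fin n → ℕ) (lam : ℕ) :
    Continuous (fun q : Ospace n Ω × (Ω × (Fin n → ℂ)) => pSum Nj q.1.1 q.2.1 lam q.2.2) := by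
  unfold pSum pSumExt
  refine continuous_finsetSum _ fun j _ => ?_
  obtain ⟨Φ, hc, hΦ⟩ := exists_DO hΩ (Nj j)
  simp only [← hΦ]
  have h1 : Continuous (fun q : Ospace n Ω × (Ω × (Fin n → ℂ)) => (Φ q.1).1 q.2.1) :=
    (eval_cont hΩ).comp
      ((hc.comp continuous_fst).prodMk (continuous_fst.comp continuous_snd))
  have h2 : Continuous (fun q : Ospace n Ω × (Ω × (Fin n → ℂ)) =>
      ∏ i, (q.2.2 i - (q.2.1 : Fin n → ℂ) i) ^ Nj j i) :=
    continuous_finsetProd _ fun i _ => Continuous.pow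
      (((continuous_apply i).comp (continuous_snd.comp continuous_snd)).sub
        ((continuous_apply i).comp
          (continuous_subtype_val.comp (continuous_fst.comp continuous_snd)))) _
  exact (continuous_const.mul h1).mul h2

lemma open_one {n : ℕ} {Ω : Set (Fin n → ℂ)} (hΩ : IsOpen Ω) (Nj : ℕ → Fin n → ℕ) (lam : ℕ)
    {L K : Set (Fin n → ℂ)} (hL : IsCompact L) (hLΩ : L ⊆ Ω) (hK : IsCompact K)
    {P : (Fin n → ℂ) → ℂ} (hP : Continuous P) (ε : ℝ) :
    IsOpen {f : Ospace n Ω | ∀ ζ ∈ L, ∀ z ∈ K, ‖pSum Nj f.1 ζ lam z - P z‖ < ε} := by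
  rw [isOpen_iff_eventually]
  intro f hf
  have hL' : IsCompact (Subtype.val ⁻¹' L : Set Ω) := by
    rw [Subtype.isCompact_iff, Subtype.image_preimage_coe, inter_eq_right.2 hLΩ]; exact hL
  have := (hL'.prod hK).eventually_forall_of_forall_eventually (x₀ := f)
    (P := fun f q => ‖pSum Nj f.1 q.1 lam q.2 - P q.2‖ < ε) (by
      rintro ⟨ζ, z⟩ ⟨h1, h2⟩
      have hc : Continuous (fun q : Ospace n Ω × (Ω × (Fin n → ℂ)) =>
        ‖pSum Nj q.1.1 q.2.1 lam q.2.2 - P q.2.2‖) :=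
        ((pSum_cont hΩ Nj lam).sub (hP.comp (by fun_prop))).norm
      exact hc.continuousAt.eventually_lt continuousAt_const (hf ζ h1 z h2))
  filter_upwards [this] with g hg ζ hζ z hz
  exact hg (⟨ζ, hLΩ hζ⟩, z) ⟨hζ, hz⟩

lemma open_two {n : ℕ} {Ω : Set (Fin n → ℂ)} (hΩ : IsOpen Ω) (Nj : ℕ → Fin n → ℕ) (lam : ℕ)
    {L : Set (Fin n → ℂ)} (hL : IsCompact L) (hLΩ : L ⊆ Ω) (ε : ℝ) :
    IsOpen {f : Ospace n Ω | ∀ ζ ∈ L, ∀ z ∈ L, ‖pSum Nj f.1 ζ lam z - f.1 z‖ < ε} := by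
  rw [isOpen_iff_eventually]
  intro f hf
  have hL' : IsCompact (Subtype.val ⁻¹' L : Set Ω) := by
    rw [Subtype.isCompact_iff, Subtype.image_preimage_coe, inter_eq_right.2 hLΩ]; exact hL
  have := (hL'.prod hL').eventually_forall_of_forall_eventually (x₀ := f)
    (P := fun f q => ‖pSum Nj f.1 q.1 lam q.2 - f.1 q.2‖ < ε) (by
      rintro ⟨ζ, z⟩ ⟨h1, h2⟩
      have hc : Continuous (fun q : Ospace n Ω × (Ω × Ω) =>
        ‖pSum Nj q.1.1 q.2.1 lam q.2.2 - q.1.1 q.2.2‖) := by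
        refine (Continuous.sub ?_ ?_).norm
        · exact (pSum_cont hΩ Nj lam).comp (f := fun q : Ospace n Ω × (Ω × Ω) =>
            (q.1, (q.2.1, (q.2.2 : Fin n → ℂ)))) (by fun_prop)
        · exact (eval_cont hΩ).comp (f := fun q : Ospace n Ω × (Ω × Ω) => (q.1, q.2.2))
            (by fun_prop)
      exact hc.continuousAt.eventually_lt continuousAt_const (hf ζ h1 z h2))
  filter_upwards [this] with g hg ζ hζ z hz
  exact hg (⟨ζ, hLΩ hζ⟩, ⟨z, hLΩ hz⟩) ⟨hζ, hz⟩

lemma range_toC_closed {n : ℕ} {Ω : Set (Fin n → ℂ)} (hΩ : IsOpen Ω) :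
    IsClosed (range (toC : Ospace n Ω → C(Ω, ℂ))) := by
  have : LocallyCompactSpace Ω := hΩ.locallyCompactSpace
  rw [← closure_subset_iff_isClosed]
  intro g hg
  rw [mem_closure_iff_comap_neBot] at hg
  classical
  set g' : (Fin n → ℂ) → ℂ := fun z => if h : z ∈ Ω then g ⟨z, h⟩ else 0 with hg'
  have hF : ∀ x : range (toC : Ospace n Ω → C(Ω, ℂ)), ∃ f : Ospace n Ω, toC f = x.1 :=
    fun x => x.2
  choose F hF using hF
  have ht : Tendsto (fun x : range (toC : Ospace n Ω → C(Ω, ℂ)) => x.1)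
    (comap Subtype.val (𝓝 g)) (𝓝 g) := tendsto_comap
  rw [ContinuousMap.tendsto_iff_forall_isCompact_tendstoUniformlyOn] at ht
  have hd : DifferentiableOn ℂ g' Ω := by
    refine limit_hol (l := comap (Subtype.val : range (toC : Ospace n Ω → C(Ω, ℂ)) → _) (𝓝 g))
      hΩ (F := fun x => (F x).1) (fun x => (F x).2) ?_
    rw [tendstoLocallyUniformlyOn_iff_forall_isCompact hΩ]
    intro L hL hLc
    have := ht (Subtype.val ⁻¹' L) (by
      rw [Subtype.isCompact_iff, Subtype.image_preimage_coe, inter_eq_right.2 hL]; exact hLc)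
    rw [Metric.tendstoUniformlyOn_iff] at this ⊢
    intro ε hε
    filter_upwards [this ε hε] with i hi x hx
    have h1 := hi ⟨x, hL hx⟩ hx
    rw [← hF i] at h1
    simp only [hg', dif_pos (hL hx)]
    exact h1
  refine ⟨⟨g', hd⟩, ?_⟩
  ext x
  show g' x = g x
  simp [hg']

lemma O_baire {n : ℕ} {Ω : Set (Fin n → ℂ)} (hΩ : IsOpen Ω) : BaireSpace (Ospace n Ω) := by
  have : LocallyCompactSpace Ω := hΩ.locallyCompactSpace
  let _ : UniformSpace (Ospace n Ω) := UniformSpace.comap toC inferInstance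
  have hu : IsUniformInducing (toC : Ospace n Ω → C(Ω, ℂ)) := ⟨rfl⟩
  have : CompleteSpace (Ospace n Ω) := 
    (completeSpace_iff_isComplete_range hu).2 (range_toC_closed hΩ).isComplete
  have : (uniformity (Ospace n Ω)).IsCountablyGenerated := 
    Filter.comap.isCountablyGenerated _ _
  exact @BaireSpace.of_completelyPseudoMetrizable (Ospace n Ω)
    (UniformSpace.toTopologicalSpace)
    TopologicalSpace.IsCompletelyPseudoMetrizableSpace.of_completeSpace_pseudometrizable

lemma exists_exhaustion {n : ℕ} {Ω : Set (Fin n → ℂ)} (hΩ : IsOpen Ω) :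
    ∃ Ls : ℕ → Set (Fin n → ℂ), Monotone Ls ∧ (∀ s, IsCompact (Ls s)) ∧ (∀ s, Ls s ⊆ Ω) ∧
      ∀ L : Set (Fin n → ℂ), L ⊆ Ω → IsCompact L → ∃ s, L ⊆ Ls s := by
  have : LocallyCompactSpace Ω := hΩ.locallyCompactSpace
  let X := CompactExhaustion.choice Ω
  refine ⟨fun s => Subtype.val '' X s, fun s t h => image_mono (X.subset h),
    fun s => (X.isCompact s).image continuous_subtype_val, ?_, ?_⟩
  · rintro s _ ⟨x, _, rfl⟩; exact x.2
  · intro L hL hLc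
    have hL' : IsCompact (Subtype.val ⁻¹' L : Set Ω) := by
      rw [Subtype.isCompact_iff, Subtype.image_preimage_coe, inter_eq_right.2 hL]; exact hLc
    obtain ⟨s, hs⟩ := X.exists_superset_of_isCompact hL'
    exact ⟨s, fun x hx => ⟨⟨x, hL hx⟩, hs hx, rfl⟩⟩

lemma exists_compacts {n : ℕ} (F : Set (Fin n → ℂ)) (hF : IsClosed F) :
    ∃ C : Finset ℕ × ℕ → Set (Fin n → ℂ),
      (∀ i, IsCompact (C i) ∧ Convex ℝ (C i) ∧ C i ∩ F = ∅) ∧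
      ∀ K : Set (Fin n → ℂ), IsCompact K → Convex ℝ K → K ∩ F = ∅ → ∃ i, K ⊆ C i := by
  classical
  let d := TopologicalSpace.denseSeq (Fin n → ℂ)
  let T : Finset ℕ × ℕ → Set (Fin n → ℂ) := fun i =>
    Metric.cthickening (1 / ((i.2 : ℝ) + 1)) (convexHull ℝ (d '' (i.1 : Set ℕ)))
  have hT : ∀ i, IsCompact (T i) ∧ Convex ℝ (T i) := fun i =>
    ⟨((i.1.finite_toSet.image d).isCompact_convexHull (𝕜 := ℝ)).cthickening,
      (convex_convexHull ℝ _).cthickening _⟩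
  refine ⟨fun i => if T i ∩ F = ∅ then T i else ∅, ?_, ?_⟩
  · intro i
    by_cases h : T i ∩ F = ∅
    · simp only [h, if_true]; exact ⟨(hT i).1, (hT i).2, trivial⟩
    · simp only [h, if_false]; exact ⟨isCompact_empty, convex_empty, empty_inter _⟩
  · intro K hK hKc hKF
    obtain ⟨δ, hδ, hdis⟩ := (disjoint_iff_inter_eq_empty.2 hKF).exists_cthickenings hK hF
    obtain ⟨k, hk⟩ := exists_nat_one_div_lt (half_pos hδ)
    set η : ℝ := 1 / ((k : ℝ) + 1) with hη
    have hη0 : 0 < η := by positivity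
    let J : Set ℕ := {j | ∃ x ∈ K, dist (d j) x < η}
    obtain ⟨b, hbJ, hbf, hbK⟩ := hK.elim_finite_subcover_image (b := J)
      (c := fun j => Metric.ball (d j) η) (fun _ _ => Metric.isOpen_ball) (by
        intro x hx
        obtain ⟨j, hj⟩ := (TopologicalSpace.denseRange_denseSeq (Fin n → ℂ)).exists_dist_lt x hη0
        exact mem_iUnion₂.2 ⟨j, ⟨x, hx, by rw [dist_comm]; exact hj⟩, hj⟩)
    have hsub : T (hbf.toFinset, k) ⊆ Metric.cthickening δ K := by
      have h1 : convexHull ℝ (d '' (hbf.toFinset : Set ℕ)) ⊆ Metric.thickening η K := by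
        apply convexHull_min _ (hKc.thickening η)
        rintro _ ⟨j, hj, rfl⟩
        have hj : j ∈ b := by simpa using hj
        obtain ⟨x, hx, hxj⟩ := hbJ hj
        exact Metric.mem_thickening_iff.2 ⟨x, hx, hxj⟩
      calc T (hbf.toFinset, k) ⊆ Metric.cthickening η (Metric.thickening η K) :=
            Metric.cthickening_subset_of_subset _ h1
        _ ⊆ Metric.cthickening (η + η) K := Metric.cthickening_thickening_subset hη0.le _ _
        _ ⊆ Metric.cthickening δ K := Metric.cthickening_mono (by linarith) _
    have hemp : T (hbf.toFinset, k) ∩ F = ∅ := by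
      rw [← disjoint_iff_inter_eq_empty]
      exact hdis.mono hsub (Metric.self_subset_cthickening _)
    refine ⟨(hbf.toFinset, k), ?_⟩
    simp only [hemp, if_true]
    intro x hx
    obtain ⟨j, hj, hxj⟩ := mem_iUnion₂.1 (hbK hx)
    exact Metric.mem_cthickening_of_dist_le x (d j) _ _
      (subset_convexHull ℝ _ ⟨j, by simpa using hj, rfl⟩) (Metric.mem_ball.1 hxj).le

lemma exists_polys {n : ℕ} (K : Set (Fin n → ℂ)) (hK : IsCompact K) :
    ∃ D : ℕ → MvPolynomial (Fin n) ℂ, ∀ (P : MvPolynomial (Fin n) ℂ) (ε : ℝ), 0 < ε →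
      ∃ i, ∀ z ∈ K, ‖mvEval (D i) z - mvEval P z‖ < ε := by
  have : CompactSpace K := isCompact_iff_compactSpace.1 hK
  let Φ : MvPolynomial (Fin n) ℂ → C(K, ℂ) := fun P =>
    ⟨fun z => mvEval P z, (eval_differentiable P).continuous.comp continuous_subtype_val⟩
  have : Nonempty (range Φ) := ⟨⟨Φ 0, 0, rfl⟩⟩
  have hex : ∀ i : ℕ, ∃ Q, Φ Q = (TopologicalSpace.denseSeq (range Φ) i).1 := fun i =>
    (TopologicalSpace.denseSeq (range Φ) i).2
  choose D hD using hex
  refine ⟨D, fun P ε hε => ?_⟩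
  obtain ⟨i, hi⟩ := (TopologicalSpace.denseRange_denseSeq (range Φ)).exists_dist_lt
    ⟨Φ P, P, rfl⟩ hε
  refine ⟨i, fun z hz => ?_⟩
  rw [Subtype.dist_eq, ← hD i, dist_comm] at hi
  have := (ContinuousMap.dist_lt_iff hε).1 hi ⟨z, hz⟩
  rwa [dist_eq_norm] at this

def goodSet {n : ℕ} {Ω : Set (Fin n → ℂ)} (Nj : ℕ → Fin n → ℕ) (𝕄 : Set ℕ)
    (L K : Set (Fin n → ℂ)) (P : MvPolynomial (Fin n) ℂ) (ε : ℝ) : Set (Ospace n Ω) :=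
  {f | ∃ lam ∈ 𝕄, (∀ ζ ∈ L, ∀ z ∈ K, ‖pSum Nj f.1 ζ lam z - mvEval P z‖ < ε) ∧
    ∀ ζ ∈ L, ∀ z ∈ L, ‖pSum Nj f.1 ζ lam z - f.1 z‖ < ε}

lemma goodSet_open {n : ℕ} {Ω : Set (Fin n → ℂ)} (hΩ : IsOpen Ω) (Nj : ℕ → Fin n → ℕ)
    (𝕄 : Set ℕ) {L K : Set (Fin n → ℂ)} (hL : IsCompact L) (hLΩ : L ⊆ Ω) (hK : IsCompact K)
    (P : MvPolynomial (Fin n) ℂ) (ε : ℝ) :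
    IsOpen (goodSet (Ω := Ω) Nj 𝕄 L K P ε) := by
  have : goodSet (Ω := Ω) Nj 𝕄 L K P ε = ⋃ lam ∈ 𝕄,
      ({f : Ospace n Ω | ∀ ζ ∈ L, ∀ z ∈ K, ‖pSum Nj f.1 ζ lam z - mvEval P z‖ < ε} ∩
      {f : Ospace n Ω | ∀ ζ ∈ L, ∀ z ∈ L, ‖pSum Nj f.1 ζ lam z - f.1 z‖ < ε}) := by
    ext f
    simp only [goodSet, mem_iUnion₂, mem_inter_iff, mem_setOf_eq, exists_prop]
  rw [this]
  exact isOpen_biUnion fun lam _ =>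
    (open_one hΩ Nj lam hL hLΩ hK (eval_differentiable P).continuous ε).inter
      (open_two hΩ Nj lam hL hLΩ ε)

lemma goodSet_dense {n : ℕ} {Ω : Set (Fin n → ℂ)} (hΩ : IsOpen Ω) (hΩcv : Convex ℝ Ω)
    (Nj : ℕ → Fin n → ℕ) (hNj : Function.Bijective Nj)
    (𝕄 : Set ℕ) (h𝕄 : 𝕄.Infinite) {L K : Set (Fin n → ℂ)}
    (hK : IsCompact K) (hKc : Convex ℝ K) (hKΩ : K ∩ Ω = ∅)
    (P : MvPolynomial (Fin n) ℂ) {ε : ℝ} (hε : 0 < ε) :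
    Dense (goodSet (Ω := Ω) Nj 𝕄 L K P ε) := by
  intro f
  obtain ⟨Ls, hmono, hLsc, hLsΩ, hLs⟩ := exists_exhaustion hΩ
  have hex : ∀ N : ℕ, ∃ Q : MvPolynomial (Fin n) ℂ,
      (∀ z ∈ Ls N, ‖mvEval Q z - f.1 z‖ < min ε (1 / ((N : ℝ) + 1))) ∧
      ∀ z ∈ K, ‖mvEval Q z - mvEval P z‖ < min ε (1 / ((N : ℝ) + 1)) := fun N =>
    two_sided hΩ hΩcv hK hKc hKΩ (hLsc N) (hLsΩ N) f.2 P (lt_min hε (by positivity))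
  choose Q hQ1 hQ2 using hex
  let q : ℕ → Ospace n Ω := fun N => ⟨mvEval (Q N), (eval_differentiable (Q N)).differentiableOn⟩
  have hq : Tendsto q atTop (𝓝 f) := by
    rw [O_tendsto]
    intro L' hL' hLc'
    obtain ⟨s, hs⟩ := hLs L' hL' hLc'
    rw [Metric.tendstoUniformlyOn_iff]
    intro δ hδ
    obtain ⟨k, hk⟩ := exists_nat_one_div_lt hδ
    filter_upwards [eventually_ge_atTop s, eventually_ge_atTop k] with N h1 h2 x hx
    rw [dist_comm, dist_eq_norm]
    refine (hQ1 N x (hmono h1 (hs hx))).trans_le ((min_le_right _ _).trans ?_)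
    refine le_trans ?_ hk.le
    have : (k : ℝ) ≤ N := by exact_mod_cast h2
    gcongr
  refine mem_closure_of_tendsto hq (Eventually.of_forall fun N => ?_)
  obtain ⟨b, hb⟩ := eventually_atTop.1 (pSum_poly Nj hNj (Q N))
  obtain ⟨lam, hlam, hblam⟩ := h𝕄.exists_gt b
  refine ⟨lam, hlam, fun ζ _ z hz => ?_, fun ζ _ z hz => ?_⟩
  · simp only [q]
    rw [hb lam hblam.le]
    exact (hQ2 N z hz).trans_le (min_le_left _ _)
  · simp only [q]
    rw [hb lam hblam.le, sub_self, norm_zero]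
    exact hε

/-- Remark 2.6: universality with the center of expansion `ζ` varying in
compact subsets of `Ω`. -/
theorem rem2_6 (n : ℕ) (𝕄 : Set ℕ) (h𝕄 : 𝕄.Infinite)
    (Ω : Set (Fin n → ℂ)) (hΩo : IsOpen Ω) (hΩcv : Convex ℝ Ω)
    (Km : ℕ → Set (Fin n → ℂ))
    (hKm : ∀ m, IsCompact (Km m) ∧ Convex ℝ (Km m) ∧ Km m ∩ Ω = ∅)
    (Nj : ℕ → Fin n → ℕ) (hNj : Function.Bijective Nj) :
    ∃ U : Set (Ospace n Ω),
      U = {f : Ospace n Ω |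
        ∀ K : Set (Fin n → ℂ), IsCompact K → Convex ℝ K →
          (K ∩ closure Ω = ∅ ∨ ∃ m, K = Km m) →
          ∀ P : MvPolynomial (Fin n) ℂ, ∃ lam : ℕ → ℕ, (∀ N, lam N ∈ 𝕄) ∧
            ∀ L : Set (Fin n → ℂ), L ⊆ Ω → IsCompact L →
              TendstoUniformlyOn
                (fun N (q : (Fin n → ℂ) × (Fin n → ℂ)) => pSum Nj f.1 q.1 (lam N) q.2)
                (fun q => mvEval P q.2) atTop (L ×ˢ K) ∧
              TendstoUniformlyOn
                (fun N (q : (Fin n → ℂ) × (Fin n → ℂ)) => pSum Nj f.1 q.1 (lam N) q.2)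
                (fun q => f.1 q.2) atTop (L ×ˢ L)} ∧
      U.Nonempty ∧ Dense U ∧ IsGδ U := by
  obtain ⟨Ls, hmono, hLsc, hLsΩ, hLs⟩ := exists_exhaustion hΩo
  obtain ⟨C, hC, hCK⟩ := exists_compacts (closure Ω) isClosed_closure
  let Kf : (Finset ℕ × ℕ) ⊕ ℕ → Set (Fin n → ℂ) := Sum.elim C Km
  have hKf : ∀ i, IsCompact (Kf i) ∧ Convex ℝ (Kf i) ∧ Kf i ∩ Ω = ∅ := by
    rintro (i | m)
    · refine ⟨(hC i).1, (hC i).2.1, subset_empty_iff.1 ?_⟩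
      rw [← (hC i).2.2]
      exact inter_subset_inter_right _ subset_closure
    · exact hKm m
  have hD := fun i => exists_polys (Kf i) (hKf i).1
  choose D hD using hD
  let V : ((Finset ℕ × ℕ) ⊕ ℕ) × ℕ × ℕ → Set (Ospace n Ω) := fun q =>
    goodSet Nj 𝕄 (Ls q.2.2) (Kf q.1) (D q.1 q.2.1) (1 / ((q.2.2 : ℝ) + 1))
  have hVo : ∀ q, IsOpen (V q) := fun q =>
    goodSet_open hΩo Nj 𝕄 (hLsc _) (hLsΩ _) (hKf _).1 _ _
  have hVd : ∀ q, Dense (V q) := fun q =>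
    goodSet_dense hΩo hΩcv Nj hNj 𝕄 h𝕄 (hKf _).1 (hKf _).2.1 (hKf _).2.2 _ (by positivity)
  have : BaireSpace (Ospace n Ω) := O_baire hΩo
  have hdense : Dense (⋂ q, V q) := dense_iInter_of_isOpen hVo hVd
  have : Nonempty (Ospace n Ω) := ⟨⟨fun _ => 0, differentiableOn_const 0⟩⟩
  refine ⟨⋂ q, V q, ?_, hdense.nonempty, hdense, IsGδ.iInter_of_isOpen hVo⟩
  apply Subset.antisymm
  · intro f hf
    rw [mem_iInter] at hf
    intro K hKc hKcv hK P
    have hi : ∃ i, K ⊆ Kf i := by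
      rcases hK with h | ⟨m, rfl⟩
      · obtain ⟨i, hi⟩ := hCK K hKc hKcv h
        exact ⟨Sum.inl i, hi⟩
      · exact ⟨Sum.inr m, subset_rfl⟩
    obtain ⟨i, hi⟩ := hi
    have hj : ∀ s : ℕ, ∃ j, ∀ z ∈ Kf i, ‖mvEval (D i j) z - mvEval P z‖ < 1 / ((s : ℝ) + 1) :=
      fun s => hD i P _ (by positivity)
    choose j hj using hj
    have hl : ∀ s : ℕ, ∃ lam ∈ 𝕄, (∀ ζ ∈ Ls s, ∀ z ∈ Kf i,
        ‖pSum Nj f.1 ζ lam z - mvEval (D i (j s)) z‖ < 1 / ((s : ℝ) + 1)) ∧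
        ∀ ζ ∈ Ls s, ∀ z ∈ Ls s, ‖pSum Nj f.1 ζ lam z - f.1 z‖ < 1 / ((s : ℝ) + 1) :=
      fun s => hf (i, j s, s)
    choose lam hlam h1 h2 using hl
    refine ⟨lam, hlam, fun L hL hLc => ?_⟩
    obtain ⟨s, hs⟩ := hLs L hL hLc
    constructor
    · rw [Metric.tendstoUniformlyOn_iff]
      intro δ hδ
      obtain ⟨k, hk⟩ := exists_nat_one_div_lt (half_pos hδ)
      filter_upwards [eventually_ge_atTop s, eventually_ge_atTop k] with N hN1 hN2 q hq
      have hkN : 1 / ((N : ℝ) + 1) ≤ 1 / ((k : ℝ) + 1) := by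
        have : (k : ℝ) ≤ N := by exact_mod_cast hN2
        gcongr
      have e1 := h1 N q.1 (hmono hN1 (hs hq.1)) q.2 (hi hq.2)
      have e2 := hj N q.2 (hi hq.2)
      rw [← dist_eq_norm] at e1 e2
      rw [dist_comm]
      linarith [dist_triangle (pSum Nj f.1 q.1 (lam N) q.2) (mvEval (D i (j N)) q.2)
        (mvEval P q.2)]
    · rw [Metric.tendstoUniformlyOn_iff]
      intro δ hδ
      obtain ⟨k, hk⟩ := exists_nat_one_div_lt hδ
      filter_upwards [eventually_ge_atTop s, eventually_ge_atTop k] with N hN1 hN2 q hq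
      have hkN : 1 / ((N : ℝ) + 1) ≤ 1 / ((k : ℝ) + 1) := by
        have : (k : ℝ) ≤ N := by exact_mod_cast hN2
        gcongr
      have e1 := h2 N q.1 (hmono hN1 (hs hq.1)) q.2 (hmono hN1 (hs hq.2))
      rw [← dist_eq_norm] at e1
      rw [dist_comm]
      linarith
  · intro f hf
    rw [mem_iInter]
    rintro ⟨i, j, s⟩
    have hcase : Kf i ∩ closure Ω = ∅ ∨ ∃ m, Kf i = Km m := by
      rcases i with i | m
      · exact Or.inl (hC i).2.2
      · exact Or.inr ⟨m, rfl⟩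
    obtain ⟨lam, hlam, h⟩ := hf (Kf i) (hKf i).1 (hKf i).2.1 hcase (D i j)
    obtain ⟨h1, h2⟩ := h (Ls s) (hLsΩ s) (hLsc s)
    rw [Metric.tendstoUniformlyOn_iff] at h1 h2
    have hpos : (0 : ℝ) < 1 / ((s : ℝ) + 1) := by positivity
    obtain ⟨N, hN1, hN2⟩ := ((h1 _ hpos).and (h2 _ hpos)).exists
    refine ⟨lam N, hlam N, fun ζ hζ z hz => ?_, fun ζ hζ z hz => ?_⟩
    · have := hN1 (ζ, z) ⟨hζ, hz⟩
      rwa [dist_comm, dist_eq_norm] at this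
    · have := hN2 (ζ, z) ⟨hζ, hz⟩
      rwa [dist_comm, dist_eq_norm] at this

end
end

section
/- Remark 2.7 (half-space case): Let Ω = {z = (z₁,…,zₙ) ∈ ℂⁿ : Re z₁ > 0}, let 𝕄 be an infinite subset of ℕ, let ζ ∈ Ω be fixed, and let (N_j)_{j≥0} be any enumeration of ℕⁿ. Then there exists a holomorphic function f on Ω such that for EVERY compact convex set K ⊆ ℂⁿ disjoint from Ω and every holomorphic polynomial P on ℂⁿ, there exists a sequence (λ_N)_{N≥1} with λ_N ∈ 𝕄 such that S_{λ_N}(f,ζ) → P uniformly on K and S_{λ_N}(f,ζ) → f uniformly on each compact subset of Ω, as N → ∞. -/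
open Set Filter Topology

noncomputable section

open Polynomial in
theorem aux_ratio (a b : ℂ) (r t : ℝ) (N : ℕ) (hr : 0 ≤ r) (hb : b ≠ 0) (hab : ‖a‖ ≤ r * ‖b‖)
    (ht : r ^ N ≤ t) (ht2 : t ≤ 1 / 2) :
    a ^ N + b ^ N ≠ 0 ∧ ‖a ^ N / (a ^ N + b ^ N)‖ ≤ 2 * t := by
  have hbN : 0 < ‖b‖ ^ N := pow_pos (norm_pos_iff.mpr hb) N
  have h1 : ‖a‖ ^ N ≤ t * ‖b‖ ^ N := by
    calc ‖a‖ ^ N ≤ (r * ‖b‖) ^ N := by gcongr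
      _ = r ^ N * ‖b‖ ^ N := by rw [mul_pow]
      _ ≤ t * ‖b‖ ^ N := by gcongr
  have h2 : ‖b‖ ^ N / 2 ≤ ‖a ^ N + b ^ N‖ := by
    have := norm_sub_norm_le (b ^ N) (-(a ^ N))
    rw [sub_neg_eq_add, norm_neg, norm_pow, norm_pow, add_comm (b ^ N)] at this
    nlinarith
  have h3 : 0 < ‖a ^ N + b ^ N‖ := by linarith
  have ht0 : 0 ≤ t := le_trans (pow_nonneg hr N) ht
  refine ⟨norm_pos_iff.mp h3, ?_⟩
  rw [norm_div, norm_pow, div_le_iff₀ h3]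
  nlinarith

theorem aux_norm_ratio (z : ℂ) (R δ : ℝ) (hδ : 0 < δ) (h1 : |z.re| ≤ R) (h2 : |z.im| ≤ R)
    (h3 : δ ≤ z.re) :
    ‖z - 1‖ ≤ Real.sqrt (1 - 4 * δ / ((R + 1) ^ 2 + R ^ 2 + 4 * δ)) * ‖z + 1‖ := by
  have hM : 0 < (R + 1) ^ 2 + R ^ 2 + 4 * δ := by positivity
  rw [Complex.norm_def, Complex.norm_def, ← Real.sqrt_mul']
  · apply Real.sqrt_le_sqrt
    simp only [Complex.normSq_apply, Complex.sub_re, Complex.add_re, Complex.one_re,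
      Complex.sub_im, Complex.add_im, Complex.one_im]
    rw [abs_le] at h1 h2
    have h5 : (z.re + 1) * (z.re + 1) + (z.im + 0) * (z.im + 0)
        ≤ (R + 1) ^ 2 + R ^ 2 + 4 * δ := by nlinarith
    have h6 : 4 * δ / ((R + 1) ^ 2 + R ^ 2 + 4 * δ) *
        ((z.re + 1) * (z.re + 1) + (z.im + 0) * (z.im + 0)) ≤ 4 * δ := by
      rw [div_mul_eq_mul_div, div_le_iff₀ hM]
      gcongr
    nlinarith
  · exact Complex.normSq_nonneg _

theorem aux_preconn (R δ : ℝ) (hδ : 0 < δ) :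
    IsPreconnected {z : ℂ | |z.re| ≤ R ∧ |z.im| ≤ R ∧ δ ≤ |z.re|}ᶜ := by
  have hup : Convex ℝ {z : ℂ | R < z.im} := convex_halfSpace_im_gt R
  have hdn : Convex ℝ {z : ℂ | z.im < -R} := convex_halfSpace_im_lt (-R)
  have hrt : Convex ℝ {z : ℂ | R < z.re} := convex_halfSpace_re_gt R
  have hlt : Convex ℝ {z : ℂ | z.re < -R} := convex_halfSpace_re_lt (-R)
  have hst : Convex ℝ ({z : ℂ | z.re < δ} ∩ {z : ℂ | -δ < z.re}) :=
    (convex_halfSpace_re_lt δ).inter (convex_halfSpace_re_gt (-δ))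
  have e : {z : ℂ | |z.re| ≤ R ∧ |z.im| ≤ R ∧ δ ≤ |z.re|}ᶜ =
      ((({z : ℂ | R < z.im} ∪ {z : ℂ | R < z.re}) ∪ {z : ℂ | z.re < -R}) ∪
       ({z : ℂ | z.re < δ} ∩ {z : ℂ | -δ < z.re})) ∪ {z : ℂ | z.im < -R} := by
    ext z
    simp only [mem_compl_iff, mem_ofPred_eq, mem_union, mem_inter_iff, not_and_or, not_le,
      abs_lt, lt_abs]
    grind
  rw [e]
  refine IsPreconnected.union (⟨0, -R - 1⟩ : ℂ) ?_ ?_ (IsPreconnected.union (⟨0, R + 1⟩ : ℂ) ?_ ?_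
    (IsPreconnected.union (⟨-R - 1, R + 1⟩ : ℂ) ?_ ?_
    (IsPreconnected.union (⟨R + 1, R + 1⟩ : ℂ) ?_ ?_ hup.isPreconnected hrt.isPreconnected)
    hlt.isPreconnected) hst.isPreconnected) hdn.isPreconnected <;> simp [hδ]

open Polynomial in
theorem runge_step (R δ ε : ℝ) (hδ : 0 < δ) (hε : 0 < ε) (hδR : δ ≤ R) :
    ∃ q : ℂ[X], ∀ z : ℂ, |z.re| ≤ R → |z.im| ≤ R →
      (z.re ≤ -δ → ‖q.eval z - 1‖ ≤ ε) ∧ (δ ≤ z.re → ‖q.eval z‖ ≤ ε) := by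
  set X0 : Set ℂ := {z : ℂ | |z.re| ≤ R ∧ |z.im| ≤ R ∧ δ ≤ |z.re|} with hX0
  have hXc : IsCompact X0 := by
    apply Metric.isCompact_of_isClosed_isBounded
    · have c1 : IsClosed {z : ℂ | |z.re| ≤ R} := isClosed_le (by fun_prop) (by fun_prop)
      have c2 : IsClosed {z : ℂ | |z.im| ≤ R} := isClosed_le (by fun_prop) (by fun_prop)
      have c3 : IsClosed {z : ℂ | δ ≤ |z.re|} := isClosed_le (by fun_prop) (by fun_prop)
      exact c1.inter (c2.inter c3)
    · refine (Metric.isBounded_closedBall (x := (0 : ℂ)) (r := R + R)).subset ?_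
      intro z hz
      rw [mem_closedBall_zero_iff]
      exact (Complex.norm_le_abs_re_add_abs_im z).trans (add_le_add hz.1 hz.2.1)
  have : CompactSpace X0 := isCompact_iff_compactSpace.mp hXc
  have hne : (δ : ℂ) ∈ X0 := by
    simp [hX0, abs_of_pos hδ, hδR]; linarith
  have : Nonempty X0 := ⟨⟨_, hne⟩⟩
  set r : ℝ := Real.sqrt (1 - 4 * δ / ((R + 1) ^ 2 + R ^ 2 + 4 * δ)) with hr
  have hr0 : 0 ≤ r := Real.sqrt_nonneg _
  have hr1 : r < 1 := by
    rw [hr, Real.sqrt_lt' one_pos]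
    have : 0 < 4 * δ / ((R + 1) ^ 2 + R ^ 2 + 4 * δ) := by positivity
    linarith
  obtain ⟨N, hN⟩ := exists_pow_lt_of_lt_one (show 0 < min (1 / 2) (ε / 4) by positivity) hr1
  set t := min (1 / 2) (ε / 4) with ht
  have ht1 : t ≤ 1 / 2 := min_le_left _ _
  have ht2 : t ≤ ε / 4 := min_le_right _ _
  -- estimates
  have hB : ∀ z : ℂ, |z.re| ≤ R → |z.im| ≤ R → δ ≤ z.re →
      (z - 1) ^ N + (z + 1) ^ N ≠ 0 ∧ ‖(z - 1) ^ N / ((z - 1) ^ N + (z + 1) ^ N)‖ ≤ 2 * t := by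
    intro z h1 h2 h3
    refine aux_ratio _ _ r t N hr0 ?_ (aux_norm_ratio z R δ hδ h1 h2 h3) hN.le ht1
    intro h
    have := congrArg Complex.re h
    simp at this; linarith
  have hA : ∀ z : ℂ, |z.re| ≤ R → |z.im| ≤ R → z.re ≤ -δ →
      (z - 1) ^ N + (z + 1) ^ N ≠ 0 ∧
      ‖(z - 1) ^ N / ((z - 1) ^ N + (z + 1) ^ N) - 1‖ ≤ 2 * t := by
    intro z h1 h2 h3
    have := aux_ratio (z + 1) (z - 1) r t N hr0 (by
        intro h
        have := congrArg Complex.re h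
        simp at this; linarith) (by
        have := aux_norm_ratio (-z) R δ hδ (by simpa) (by simpa) (by simp; linarith)
        rwa [show -z - 1 = -(z + 1) by ring, show -z + 1 = -(z - 1) by ring, norm_neg,
          norm_neg] at this) hN.le ht1
    rw [add_comm ((z + 1) ^ N)] at this
    refine ⟨this.1, ?_⟩
    have h0 := this.1
    have e : (z - 1) ^ N / ((z - 1) ^ N + (z + 1) ^ N) - 1 =
        -((z + 1) ^ N / ((z - 1) ^ N + (z + 1) ^ N)) := by
      rw [div_sub_one h0, ← neg_div]
      congr 1; ring
    rw [e, norm_neg]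
    exact this.2
  let x0 : C(X0, ℂ) := ⟨Subtype.val, continuous_subtype_val⟩
  let S : Subalgebra ℂ C(X0, ℂ) := (Algebra.adjoin ℂ {x0}).topologicalClosure
  have hS : IsClosed (S : Set C(X0, ℂ)) := Subalgebra.isClosed_topologicalClosure _
  have : CompleteSpace S := hS.completeSpace_coe
  let x : S := ⟨x0, Subalgebra.le_topologicalClosure _ (Algebra.self_mem_adjoin_singleton ℂ x0)⟩
  have hrange : Set.range x0 = X0 := Subtype.range_coe
  have hspec : spectrum ℂ x = X0 := by
    rw [Subalgebra.spectrum_eq_of_isPreconnected_compl S x, ContinuousMap.spectrum_eq_range]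
    · exact hrange
    · rw [ContinuousMap.spectrum_eq_range]
      change IsPreconnected (Set.range x0)ᶜ
      rw [hrange]
      exact aux_preconn R δ hδ
  let D : ℂ[X] := (X - 1) ^ N + (X + 1) ^ N
  have hunit : IsUnit (aeval x D) := by
    rw [← spectrum.zero_notMem_iff ℂ, spectrum.map_polynomial_aeval, hspec]
    rintro ⟨z, hz, h0⟩
    simp [D] at h0
    rcases le_abs.mp hz.2.2 with h | h
    · exact (hB z hz.1 hz.2.1 h).1 h0
    · exact (hA z hz.1 hz.2.1 (by linarith)).1 h0
  obtain ⟨y, hy⟩ := hunit.exists_right_inv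
  have hval : ∀ (p : ℂ[X]) (z : X0), (aeval x0 p) z = p.eval z.1 := by
    intro p z
    have : (aeval x0 p) z = (ContinuousMap.evalAlgHom ℂ ℂ z) (aeval x0 p) := rfl
    rw [this, ← aeval_algHom_apply]
    rfl
  have hcoe : ∀ p : ℂ[X], ((aeval x p : S) : C(X0, ℂ)) = aeval x0 p := by
    intro p
    exact (aeval_algHom_apply S.val x p).symm
  let g : S := aeval x ((X - 1) ^ N : ℂ[X]) * y
  have hg : ∀ z : X0, (g : C(X0, ℂ)) z = (z.1 - 1) ^ N / ((z.1 - 1) ^ N + (z.1 + 1) ^ N) := by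
    intro z
    have h1 := congrArg (fun s : S => (s : C(X0, ℂ)) z) hy
    simp only [MulMemClass.coe_mul, hcoe, ContinuousMap.mul_apply, hval, D, OneMemClass.coe_one,
      ContinuousMap.one_apply] at h1
    simp only [g, MulMemClass.coe_mul, hcoe, ContinuousMap.mul_apply, hval]
    simp only [eval_add, eval_pow, eval_sub, eval_X, eval_one] at h1 ⊢
    have h0 : (z.1 - 1) ^ N + (z.1 + 1) ^ N ≠ 0 := left_ne_zero_of_mul_eq_one h1
    rw [eq_div_iff h0]
    linear_combination (z.1 - 1) ^ N * h1
  have hgc : (g : C(X0, ℂ)) ∈ closure ((Algebra.adjoin ℂ {x0} : Subalgebra ℂ C(X0, ℂ)) : Set _) :=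
    g.2
  obtain ⟨b, hb, hgb⟩ := Metric.mem_closure_iff.mp hgc (ε / 2) (by positivity)
  have hb' : b ∈ Algebra.adjoin ℂ {x0} := hb
  rw [Algebra.adjoin_singleton_eq_range_aeval] at hb'
  obtain ⟨q, hq⟩ := hb'
  have hq' : (aeval x0) q = b := hq
  refine ⟨q, ?_⟩
  have hclose : ∀ z : X0, ‖q.eval z.1 - (z.1 - 1) ^ N / ((z.1 - 1) ^ N + (z.1 + 1) ^ N)‖ ≤ ε / 2 := by
    intro z
    have := (ContinuousMap.dist_apply_le_dist (f := (g : C(X0, ℂ))) (g := b) z).trans hgb.le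
    rw [← hq', hval, hg, dist_comm, dist_eq_norm] at this
    exact this
  intro z h1 h2
  constructor
  · intro h3
    have e1 := hclose ⟨z, h1, h2, le_abs.mpr (Or.inr (by linarith))⟩
    have e2 := (hA z h1 h2 h3).2
    calc _ = ‖(q.eval z - (z - 1) ^ N / ((z - 1) ^ N + (z + 1) ^ N)) +
        ((z - 1) ^ N / ((z - 1) ^ N + (z + 1) ^ N) - 1)‖ := by congr 1; ring
      _ ≤ _ := norm_add_le _ _
      _ ≤ ε := by simp only at e1; linarith
  · intro h3
    have e1 := hclose ⟨z, h1, h2, le_abs.mpr (Or.inl h3)⟩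
    have e2 := (hB z h1 h2 h3).2
    calc _ = ‖(q.eval z - (z - 1) ^ N / ((z - 1) ^ N + (z + 1) ^ N)) +
        ((z - 1) ^ N / ((z - 1) ^ N + (z + 1) ^ N))‖ := by congr 1; ring
      _ ≤ _ := norm_add_le _ _
      _ ≤ ε := by simp only at e1; linarith

open Polynomial in
/-- One-variable separation: a polynomial divisible by `X ^ d` such that, after translation by `a`,
it is close to one on the left and close to zero on the right. -/
theorem sep_poly (a : ℂ) (ha : 0 < a.re) (R δ ε : ℝ) (hδ : 0 < δ) (hε : 0 < ε) (d : ℕ) (hd : d ≠ 0) :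
    ∃ q : ℂ[X], ∀ z : ℂ, |z.re| ≤ R → |z.im| ≤ R →
      (z.re ≤ 0 → ‖((X * q) ^ d).eval (z - a) - 1‖ ≤ ε) ∧
      (δ ≤ z.re → ‖((X * q) ^ d).eval (z - a)‖ ≤ ε) := by
  -- threshold from continuity of power
  have hcont : ContinuousAt (fun w : ℂ => w ^ d) 1 := by fun_prop
  obtain ⟨η, hη, hpow⟩ := Metric.continuousAt_iff.mp hcont ε hε
  set η' := min (η / 4) (min (ε / 2) (1 / 2)) with hη'
  have h0 : 0 < η' := by positivity
  have b1 : η' ≤ η / 4 := min_le_left _ _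
  have b2 : η' ≤ ε / 2 := (min_le_right _ _).trans (min_le_left _ _)
  have b3 : η' ≤ 1 / 2 := (min_le_right _ _).trans (min_le_right _ _)
  set m := min δ a.re / 2 with hm
  have hm0 : 0 < m := by positivity
  have m1 : 2 * m ≤ δ := by rw [hm]; linarith [min_le_left δ a.re]
  have m2 : 2 * m ≤ a.re := by rw [hm]; linarith [min_le_right δ a.re]
  set R' := |R| + m + |a.re| + |a.im| with hR'
  have hR0 := abs_nonneg R
  have hR1 := le_abs_self R
  have ha1 := abs_nonneg a.re
  have ha2 := abs_nonneg a.im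
  have ha3 := le_abs_self a.re
  obtain ⟨q, hq⟩ := runge_step R' m η' hm0 h0 (by rw [hR']; linarith)
  -- `p = q.comp (X + C (a - m)) - const` vanishes at zero
  let p : ℂ[X] := q.comp (X + C (a - m)) - C (q.eval (a - m))
  have hp0 : p.IsRoot 0 := by simp [p]
  obtain ⟨s, hs⟩ := X_dvd_iff.mpr (by rw [coeff_zero_eq_eval_zero]; exact hp0 : p.coeff 0 = 0)
  have hqa : ‖q.eval (a - m)‖ ≤ η' := by
    refine (hq _ ?_ ?_).2 ?_
    · simp only [Complex.sub_re, Complex.ofReal_re]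
      rw [abs_le]; constructor <;> linarith
    · simp only [Complex.sub_im, Complex.ofReal_im, sub_zero]
      linarith
    · simp only [Complex.sub_re, Complex.ofReal_re]; linarith
  have hev : ∀ z : ℂ, (X * s).eval (z - a) = q.eval (z - m) - q.eval (a - m) := by
    intro z
    rw [← hs]
    simp only [p, eval_sub, eval_comp, eval_add, eval_X, eval_C]
    congr 2; ring
  refine ⟨s, fun z h1 h2 => ?_⟩
  have hq2 := hq (z - m) (by
      simp only [Complex.sub_re, Complex.ofReal_re]
      rw [abs_le] at h1 ⊢; constructor <;> linarith) (by
      simp only [Complex.sub_im, Complex.ofReal_im, sub_zero]; linarith)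
  simp only [Complex.sub_re, Complex.ofReal_re] at hq2
  rw [eval_pow, hev]
  constructor
  · intro h3
    have e := hq2.1 (by linarith)
    have : ‖q.eval (z - m) - q.eval (a - m) - 1‖ < η := by
      calc _ = ‖(q.eval (z - m) - 1) - q.eval (a - m)‖ := by congr 1; ring
        _ ≤ _ := norm_sub_le _ _
        _ < η := by linarith
    have := hpow (by rwa [dist_eq_norm])
    rw [dist_eq_norm, one_pow] at this
    exact this.le
  · intro h3
    have e := hq2.2 (by linarith)
    have e2 : ‖q.eval (z - m) - q.eval (a - m)‖ ≤ 2 * η' :=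
      (norm_sub_le _ _).trans (by linarith)
    rw [norm_pow]
    calc _ ≤ ‖q.eval (z - m) - q.eval (a - m)‖ :=
          pow_le_of_le_one (norm_nonneg _) (by linarith) hd
      _ ≤ ε := by linarith

/-- Evaluation of a polynomial in the translated variable `z - ζ`. -/
def tEv {n : ℕ} (ζ : Fin n → ℂ) (Q : MvPolynomial (Fin n) ℂ) : (Fin n → ℂ) → ℂ :=
  fun z => MvPolynomial.eval (fun i => z i - ζ i) Q

theorem tEv_hasFDerivAt {n : ℕ} (ζ : Fin n → ℂ) (Q : MvPolynomial (Fin n) ℂ) (z : Fin n → ℂ) :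
    HasFDerivAt (tEv ζ Q)
      (∑ i, tEv ζ (MvPolynomial.pderiv i Q) z •
        (ContinuousLinearMap.proj i : (Fin n → ℂ) →L[ℂ] ℂ)) z := by
  induction Q using MvPolynomial.induction_on with
  | C a =>
    have : tEv ζ (MvPolynomial.C a) = fun _ => a := by funext z; simp [tEv]
    rw [this]
    refine (hasFDerivAt_const a z).congr_fderiv ?_
    ext v
    simp [tEv]
  | add p q hp hq =>
    have : tEv ζ (p + q) = fun z => tEv ζ p z + tEv ζ q z := by funext z; simp [tEv]
    rw [this]
    refine (hp.add hq).congr_fderiv ?_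
    ext v
    simp [tEv, add_mul, Finset.sum_add_distrib]
  | mul_X p i hp =>
    have : tEv ζ (p * MvPolynomial.X i) = fun z => tEv ζ p z * (z i - ζ i) := by
      funext z; simp [tEv]
    rw [this]
    have h1 : HasFDerivAt (fun z : Fin n → ℂ => z i - ζ i)
        (ContinuousLinearMap.proj i : (Fin n → ℂ) →L[ℂ] ℂ) z :=
      (ContinuousLinearMap.proj i : (Fin n → ℂ) →L[ℂ] ℂ).hasFDerivAt.sub_const _
    refine (hp.mul h1).congr_fderiv ?_
    ext v
    simp [tEv, MvPolynomial.pderiv_mul, MvPolynomial.pderiv_X, Pi.single_apply, add_mul,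
      Finset.sum_add_distrib, Finset.mul_sum, apply_ite]
    exact Finset.sum_congr rfl fun j _ => by ring

theorem tEv_differentiable {n : ℕ} (ζ : Fin n → ℂ) (Q : MvPolynomial (Fin n) ℂ) :
    Differentiable ℂ (tEv ζ Q) := fun z => (tEv_hasFDerivAt ζ Q z).differentiableAt

theorem tEv_continuous {n : ℕ} (ζ : Fin n → ℂ) (Q : MvPolynomial (Fin n) ℂ) :
    Continuous (tEv ζ Q) := (tEv_differentiable ζ Q).continuous

theorem pd_tEv {n : ℕ} (ζ : Fin n → ℂ) (Q : MvPolynomial (Fin n) ℂ) (i : Fin n) :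
    pd i (tEv ζ Q) = tEv ζ (MvPolynomial.pderiv i Q) := by
  funext z
  rw [pd, (tEv_hasFDerivAt ζ Q z).fderiv]
  simp [Pi.single_apply]

theorem pd_iter_tEv {n : ℕ} (ζ : Fin n → ℂ) (Q : MvPolynomial (Fin n) ℂ) (i : Fin n) (k : ℕ) :
    (pd i)^[k] (tEv ζ Q) = tEv ζ ((MvPolynomial.pderiv i)^[k] Q) := by
  induction k generalizing Q with
  | zero => rfl
  | succ k ih => rw [Function.iterate_succ_apply, Function.iterate_succ_apply, pd_tEv, ih]

theorem foldr_tEv {n : ℕ} (ζ : Fin n → ℂ) (Q : MvPolynomial (Fin n) ℂ) (ℓ : Fin n → ℕ)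
    (l : List (Fin n)) :
    l.foldr (fun i g => (pd i)^[ℓ i] g) (tEv ζ Q) =
      tEv ζ (l.foldr (fun i q => (MvPolynomial.pderiv i)^[ℓ i] q) Q) := by
  induction l with
  | nil => rfl
  | cons i l ih => rw [List.foldr_cons, List.foldr_cons, ih, pd_iter_tEv]

theorem coeff_pderiv_iter {n : ℕ} (Q : MvPolynomial (Fin n) ℂ) (i : Fin n) (k : ℕ)
    (m : Fin n →₀ ℕ) :
    MvPolynomial.coeff m ((MvPolynomial.pderiv i)^[k] Q) =
      MvPolynomial.coeff (m + Finsupp.single i k) Q * ((m i + 1).ascFactorial k : ℕ) := by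
  induction k generalizing Q with
  | zero => simp
  | succ k ih =>
    rw [Function.iterate_succ_apply, ih, MvPolynomial.coeff_pderiv, add_assoc,
      ← Finsupp.single_add, Nat.ascFactorial_succ]
    simp
    ring

theorem coeff_foldr {n : ℕ} (Q : MvPolynomial (Fin n) ℂ) (ℓ : Fin n → ℕ) (l : List (Fin n))
    (hl : l.Nodup) (m : Fin n →₀ ℕ) (hm : ∀ i ∈ l, m i = 0) :
    MvPolynomial.coeff m (l.foldr (fun i q => (MvPolynomial.pderiv i)^[ℓ i] q) Q) =
      MvPolynomial.coeff (m + (l.map fun i => Finsupp.single i (ℓ i)).sum) Q *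
        ((l.map fun i => (ℓ i).factorial).prod : ℕ) := by
  induction l generalizing m with
  | nil => simp
  | cons i l ih =>
    rw [List.nodup_cons] at hl
    rw [List.foldr_cons, coeff_pderiv_iter, ih hl.2]
    · rw [hm i (by simp), zero_add, Nat.one_ascFactorial]
      simp [add_assoc]
      ring
    · intro j hj
      have hij : i ≠ j := fun h => hl.1 (h ▸ hj)
      simp [hm j (by simp [hj]), Finsupp.single_apply, hij]

theorem Dml_tEv {n : ℕ} (ζ : Fin n → ℂ) (Q : MvPolynomial (Fin n) ℂ) (ℓ : Fin n → ℕ) :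
    Dml ℓ (tEv ζ Q) ζ =
      MvPolynomial.coeff (Finsupp.equivFunOnFinite.symm ℓ) Q * ((∏ i, (ℓ i).factorial : ℕ) : ℂ) := by
  rw [Dml, foldr_tEv]
  have h0 : ∀ P : MvPolynomial (Fin n) ℂ, tEv ζ P ζ = MvPolynomial.coeff 0 P := by
    intro P
    have : (fun i => ζ i - ζ i) = (0 : Fin n → ℂ) := by funext i; simp
    rw [tEv, this, MvPolynomial.eval_zero]
    rfl
  rw [h0, coeff_foldr _ _ _ (List.nodup_finRange n) _ (by simp), zero_add]
  congr 2
  ext j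
  rw [← List.ofFn_eq_map, List.sum_ofFn]
  simp [Finsupp.single_apply]

theorem pSum_tEv {n : ℕ} (Nj : ℕ → Fin n → ℕ) (ζ : Fin n → ℂ) (Q : MvPolynomial (Fin n) ℂ)
    (lam : ℕ) (z : Fin n → ℂ) :
    pSum Nj (tEv ζ Q) ζ lam z = ∑ j ∈ Finset.range (lam + 1),
      MvPolynomial.coeff (Finsupp.equivFunOnFinite.symm (Nj j)) Q *
        ∏ i, (z i - ζ i) ^ (Nj j i) := by
  simp only [pSum, pSumExt, Dml_tEv]
  refine Finset.sum_congr rfl fun j _ => ?_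
  have : ((∏ i, (Nj j i).factorial : ℕ) : ℂ) ≠ 0 := by
    exact_mod_cast (Finset.prod_pos fun i _ => Nat.factorial_pos _).ne'
  field_simp

theorem pSum_tEv_eq {n : ℕ} (Nj : ℕ → Fin n → ℕ) (hNj : Function.Bijective Nj) (ζ : Fin n → ℂ)
    (Q : MvPolynomial (Fin n) ℂ) (lam : ℕ)
    (hQ : ∀ m, MvPolynomial.coeff m Q ≠ 0 →
      ∃ j ≤ lam, Finsupp.equivFunOnFinite.symm (Nj j) = m) :
    pSum Nj (tEv ζ Q) ζ lam = tEv ζ Q := by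
  classical
  funext z
  rw [pSum_tEv, tEv, MvPolynomial.eval_eq']
  have hinj : Function.Injective fun j => Finsupp.equivFunOnFinite.symm (Nj j) :=
    (Equiv.injective _).comp hNj.1
  have := Finset.sum_image (s := Finset.range (lam + 1))
    (g := fun j => Finsupp.equivFunOnFinite.symm (Nj j))
    (f := fun m : Fin n →₀ ℕ => MvPolynomial.coeff m Q * ∏ i, (z i - ζ i) ^ (m i)) hinj.injOn
  simp only [Finsupp.equivFunOnFinite_symm_apply_apply] at this
  rw [← this]
  symm
  apply Finset.sum_subset
  · intro m hm
    obtain ⟨j, hj, hjm⟩ := hQ m (MvPolynomial.mem_support_iff.mp hm)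
    exact Finset.mem_image.mpr ⟨j, by simp; omega, hjm⟩
  · intro m _ hm
    rw [MvPolynomial.notMem_support_iff.mp hm, zero_mul]

/-- Weierstrass theorem for first derivatives in several variables. -/
theorem weierstrass_fderiv {n : ℕ} {Ω : Set (Fin n → ℂ)} (hΩ : IsOpen Ω)
    {F : ℕ → (Fin n → ℂ) → ℂ} {f : (Fin n → ℂ) → ℂ} (hF : ∀ k, Differentiable ℂ (F k))
    (hf : TendstoLocallyUniformlyOn F f atTop Ω) :
    DifferentiableOn ℂ f Ω ∧
      TendstoLocallyUniformlyOn (fun k => fderiv ℂ (F k)) (fderiv ℂ f) atTop Ω := by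
  set g' : (Fin n → ℂ) → ((Fin n → ℂ) →L[ℂ] ℂ) :=
    fun y => limUnder atTop (fun k => fderiv ℂ (F k) y) with hg'
  have key : ∀ x ∈ Ω, ∃ r > 0,
      TendstoUniformlyOn (fun k => fderiv ℂ (F k)) g' atTop (Metric.closedBall x r) := by
    intro x hx
    obtain ⟨s, hs, hsub⟩ := Metric.nhds_basis_closedBall.mem_iff.mp (hΩ.mem_nhds hx)
    have hr : 0 < s / 2 := by positivity
    refine ⟨s / 2, hr, ?_⟩
    have hU : TendstoUniformlyOn F f atTop (Metric.closedBall x s) :=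
      (tendstoLocallyUniformlyOn_iff_forall_isCompact hΩ).mp hf _ hsub (isCompact_closedBall x s)
    have hC := Metric.uniformCauchySeqOn_iff.mp hU.uniformCauchySeqOn
    have hC' : UniformCauchySeqOn (fun k => fderiv ℂ (F k)) atTop
        (Metric.closedBall x (s / 2)) := by
      rw [Metric.uniformCauchySeqOn_iff]
      intro ε hε
      obtain ⟨N, hN⟩ := hC (ε * s / 8) (by positivity)
      refine ⟨N, fun p hp q hq y hy => ?_⟩
      have hball : ∀ w ∈ Metric.ball y (s / 2), w ∈ Metric.closedBall x s := by
        intro w hw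
        rw [Metric.mem_ball] at hw
        rw [Metric.mem_closedBall] at hy ⊢
        linarith [dist_triangle w y x]
      have hb : ∀ w ∈ Metric.ball y (s / 2), ‖(F p - F q) w‖ ≤ ε * s / 8 := by
        intro w hw
        have := hN p hp q hq w (hball w hw)
        rw [dist_eq_norm] at this
        exact this.le
      have h1 := Complex.norm_fderiv_le_div_of_mapsTo_ball (f := F p - F q) (c := y)
        (R₁ := s / 2) (R₂ := ε * s / 4) ((hF p).sub (hF q)).differentiableOn
        (by
          intro w hw
          rw [mem_closedBall_iff_norm]
          have h2 := hb w hw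
          have h3 := hb y (Metric.mem_ball_self hr)
          linarith [norm_sub_le ((F p - F q) w) ((F p - F q) y)]) hr
      rw [fderiv_sub (hF p y) (hF q y)] at h1
      rw [dist_eq_norm]
      refine h1.trans_lt ?_
      rw [div_lt_iff₀ hr]
      nlinarith
    refine hC'.tendstoUniformlyOn_of_tendsto ?_
    intro y hy
    have : CauchySeq fun k => fderiv ℂ (F k) y := hC'.cauchySeq hy
    exact this.tendsto_limUnder
  have hloc : TendstoLocallyUniformlyOn (fun k => fderiv ℂ (F k)) g' atTop Ω := by
    intro u hu x hx
    obtain ⟨r, hr, h⟩ := key x hx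
    exact ⟨_, mem_nhdsWithin_of_mem_nhds (Metric.closedBall_mem_nhds x hr), h u hu⟩
  have hD : ∀ x ∈ Ω, HasFDerivAt f (g' x) x := fun x hx =>
    hasFDerivAt_of_tendstoLocallyUniformlyOn hΩ hloc (fun k x _ => (hF k x).hasFDerivAt)
      (fun x hx => hf.tendsto_at hx) hx
  refine ⟨fun x hx => (hD x hx).differentiableAt.differentiableWithinAt, ?_⟩
  exact hloc.congr_right fun x hx => (hD x hx).fderiv.symm

def IsLim {n : ℕ} (ζ : Fin n → ℂ) (Ω : Set (Fin n → ℂ))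
    (F : ℕ → (Fin n → ℂ) → ℂ) (f : (Fin n → ℂ) → ℂ) : Prop :=
  (∀ k, ∃ Q, F k = tEv ζ Q) ∧ TendstoLocallyUniformlyOn F f atTop Ω

theorem IsLim.pd {n : ℕ} {ζ : Fin n → ℂ} {Ω : Set (Fin n → ℂ)} (hΩ : IsOpen Ω)
    {F : ℕ → (Fin n → ℂ) → ℂ} {f : (Fin n → ℂ) → ℂ} (h : IsLim ζ Ω F f) (i : Fin n) :
    IsLim ζ Ω (fun k => _root_.pd i (F k)) (_root_.pd i f) := by
  refine ⟨fun k => ?_, ?_⟩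
  · obtain ⟨Q, hQ⟩ := h.1 k
    exact ⟨MvPolynomial.pderiv i Q, by simp only [hQ, pd_tEv]⟩
  · have hF : ∀ k, Differentiable ℂ (F k) := fun k => by
      obtain ⟨Q, hQ⟩ := h.1 k
      rw [hQ]; exact tEv_differentiable ζ Q
    have h2 := (weierstrass_fderiv hΩ hF h.2).2
    have hu : UniformContinuous
        (ContinuousLinearMap.apply ℂ ℂ (Pi.single i 1 : Fin n → ℂ)) :=
      ContinuousLinearMap.uniformContinuous _
    exact hu.comp_tendstoLocallyUniformlyOn h2

theorem IsLim.pd_iter {n : ℕ} {ζ : Fin n → ℂ} {Ω : Set (Fin n → ℂ)} (hΩ : IsOpen Ω)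
    {F : ℕ → (Fin n → ℂ) → ℂ} {f : (Fin n → ℂ) → ℂ} (h : IsLim ζ Ω F f) (i : Fin n) (s : ℕ) :
    IsLim ζ Ω (fun k => (_root_.pd i)^[s] (F k)) ((_root_.pd i)^[s] f) := by
  induction s generalizing F f with
  | zero => exact h
  | succ s ih => exact ih (h.pd hΩ i)

theorem IsLim.foldr {n : ℕ} {ζ : Fin n → ℂ} {Ω : Set (Fin n → ℂ)} (hΩ : IsOpen Ω)
    {F : ℕ → (Fin n → ℂ) → ℂ} {f : (Fin n → ℂ) → ℂ} (h : IsLim ζ Ω F f) (ℓ : Fin n → ℕ)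
    (l : List (Fin n)) :
    IsLim ζ Ω (fun k => l.foldr (fun i g => (_root_.pd i)^[ℓ i] g) (F k))
      (l.foldr (fun i g => (_root_.pd i)^[ℓ i] g) f) := by
  induction l with
  | nil => exact h
  | cons i l ih => exact ih.pd_iter hΩ i (ℓ i)

theorem IsLim.pSum {n : ℕ} {ζ : Fin n → ℂ} {Ω : Set (Fin n → ℂ)} (hΩ : IsOpen Ω)
    {F : ℕ → (Fin n → ℂ) → ℂ} {f : (Fin n → ℂ) → ℂ} (h : IsLim ζ Ω F f) (hζ : ζ ∈ Ω)
    (Nj : ℕ → Fin n → ℕ) (lam : ℕ) (z : Fin n → ℂ) :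
    Tendsto (fun k => _root_.pSum Nj (F k) ζ lam z) atTop (𝓝 (_root_.pSum Nj f ζ lam z)) := by
  simp only [_root_.pSum, pSumExt]
  refine tendsto_finsetSum _ fun j _ => ?_
  refine Tendsto.mul (Tendsto.mul tendsto_const_nhds ?_) tendsto_const_nhds
  exact (h.foldr hΩ (Nj j) (List.finRange n)).2.tendsto_at hζ

/-- Translated form of an ordinary polynomial. -/
theorem mvEval_eq_tEv {n : ℕ} (ζ : Fin n → ℂ) (P : MvPolynomial (Fin n) ℂ) :
    ∃ Q, mvEval P = tEv ζ Q := by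
  refine ⟨MvPolynomial.bind₁ (fun i => MvPolynomial.X i + MvPolynomial.C (ζ i)) P, ?_⟩
  funext z
  simp only [mvEval, tEv]
  induction P using MvPolynomial.induction_on with
  | C a => simp
  | add p q hp hq => simp [hp, hq]
  | mul_X p i hp => simp [hp]

theorem dense_poly {n : ℕ} (ζ : Fin n → ℂ) :
    ∃ D : ℕ → MvPolynomial (Fin n) ℂ, ∀ Q (K : Set (Fin n → ℂ)), IsCompact K → ∀ ε > 0,
      ∃ j, ∀ z ∈ K, dist (tEv ζ (D j) z) (tEv ζ Q z) < ε := by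
  let T : MvPolynomial (Fin n) ℂ → C(Fin n → ℂ, ℂ) := fun Q => ⟨tEv ζ Q, tEv_continuous ζ Q⟩
  have : Nonempty (Set.range T) := ⟨⟨T 0, 0, rfl⟩⟩
  let u := TopologicalSpace.denseSeq (Set.range T)
  have hu : DenseRange u := TopologicalSpace.denseRange_denseSeq _
  choose D hD using fun j => (u j).2
  refine ⟨D, fun Q K hK ε hε => ?_⟩
  have hx : (⟨T Q, Q, rfl⟩ : Set.range T) ∈ closure (Set.range u) := hu _
  obtain ⟨v, hv, hlim⟩ := mem_closure_iff_seq_limit.mp hx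
  have hlim' : Tendsto (fun k => (v k : C(Fin n → ℂ, ℂ))) atTop (𝓝 (T Q)) :=
    (continuous_subtype_val.tendsto _).comp hlim
  rw [ContinuousMap.tendsto_iff_forall_isCompact_tendstoUniformlyOn] at hlim'
  obtain ⟨k, hk⟩ := (Metric.tendstoUniformlyOn_iff.mp (hlim' K hK) ε hε).exists
  obtain ⟨j, hj⟩ := hv k
  refine ⟨j, fun z hz => ?_⟩
  have := hk z hz
  rw [← hj, ← hD j, dist_comm] at this
  exact this

theorem step {n : ℕ} (hn : 0 < n) (𝕄 : Set ℕ) (h𝕄 : 𝕄.Infinite)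
    (ζ : Fin n → ℂ) (hζ : 0 < (ζ ⟨0, hn⟩).re)
    (Nj : ℕ → Fin n → ℕ) (hNj : Function.Bijective Nj)
    (Q R : MvPolynomial (Fin n) ℂ) (lam : ℕ) (r δ ε : ℝ) (hδ : 0 < δ) (hε : 0 < ε) :
    ∃ (Q' : MvPolynomial (Fin n) ℂ) (lam' : ℕ), lam ≤ lam' ∧ lam' ∈ 𝕄 ∧
      (∀ m, MvPolynomial.coeff m Q' ≠ 0 →
        ∃ j ≤ lam', Finsupp.equivFunOnFinite.symm (Nj j) = m) ∧
      (∀ j ≤ lam, MvPolynomial.coeff (Finsupp.equivFunOnFinite.symm (Nj j)) Q' =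
        MvPolynomial.coeff (Finsupp.equivFunOnFinite.symm (Nj j)) Q) ∧
      ∀ z ∈ Metric.closedBall (0 : Fin n → ℂ) r,
        ((z ⟨0, hn⟩).re ≤ 0 → ‖tEv ζ Q' z - tEv ζ R z‖ ≤ ε) ∧
        (δ ≤ (z ⟨0, hn⟩).re → ‖tEv ζ Q' z - tEv ζ Q z‖ ≤ ε) := by
  classical
  set i0 : Fin n := ⟨0, hn⟩ with hi0
  set d : ℕ := (∑ j ∈ Finset.range (lam + 1), Nj j i0) + 1 with hd
  have hdj : ∀ j ≤ lam, Nj j i0 < d := by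
    intro j hj
    have := Finset.single_le_sum (f := fun j => Nj j i0) (s := Finset.range (lam + 1))
      (fun _ _ => Nat.zero_le _) (Finset.mem_range.mpr (Nat.lt_succ_of_le hj))
    omega
  obtain ⟨C, hC⟩ := (isCompact_closedBall (0 : Fin n → ℂ) r).exists_bound_of_continuousOn
    (f := fun z => tEv ζ R z - tEv ζ Q z)
    ((tEv_continuous ζ R).sub (tEv_continuous ζ Q)).continuousOn
  have hC1 : 0 < |C| + 1 := by positivity
  obtain ⟨q, hq⟩ := sep_poly (ζ i0) hζ r δ (ε / (|C| + 1)) hδ (by positivity) d (by omega)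
  set Q' : MvPolynomial (Fin n) ℂ := Q + (R - Q) *
    Polynomial.aeval (MvPolynomial.X i0) ((Polynomial.X * q) ^ d) with hQ'
  have hev : ∀ z, tEv ζ Q' z = tEv ζ Q z + (tEv ζ R z - tEv ζ Q z) *
      ((Polynomial.X * q) ^ d).eval (z i0 - ζ i0) := by
    intro z
    have : MvPolynomial.eval (fun i => z i - ζ i)
        (Polynomial.aeval (MvPolynomial.X i0 : MvPolynomial (Fin n) ℂ) ((Polynomial.X * q) ^ d)) =
        ((Polynomial.X * q) ^ d).eval (z i0 - ζ i0) := by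
      have h1 := Polynomial.aeval_algHom_apply (MvPolynomial.aeval (R := ℂ) (fun i => z i - ζ i))
        (MvPolynomial.X i0 : MvPolynomial (Fin n) ℂ) ((Polynomial.X * q) ^ d)
      rw [MvPolynomial.aeval_X, MvPolynomial.aeval_eq_eval, Polynomial.coe_aeval_eq_eval] at h1
      exact h1.symm
    simp only [tEv, hQ', map_add, map_mul, map_sub] at this ⊢
    rw [← this]
  choose J hJ using hNj.2
  let B : ℕ := lam + ∑ m ∈ Q'.support, J m
  obtain ⟨lam', hlam', hB⟩ := h𝕄.exists_gt B
  refine ⟨Q', lam', by omega, hlam', ?_, ?_, ?_⟩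
  · intro m hm
    refine ⟨J m, ?_, ?_⟩
    · have := Finset.single_le_sum (f := fun m : Fin n →₀ ℕ => J m) (s := Q'.support)
        (fun _ _ => Nat.zero_le _) (MvPolynomial.mem_support_iff.mpr hm)
      omega
    · rw [hJ]; ext i; rfl
  · intro j hj
    have e : (R - Q) * Polynomial.aeval (MvPolynomial.X i0 : MvPolynomial (Fin n) ℂ)
        ((Polynomial.X * q) ^ d) = MvPolynomial.monomial (Finsupp.single i0 d) 1 *
          ((R - Q) * Polynomial.aeval (MvPolynomial.X i0 : MvPolynomial (Fin n) ℂ) (q ^ d)) := by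
      rw [← MvPolynomial.X_pow_eq_monomial, mul_pow, map_mul, map_pow _ Polynomial.X,
        Polynomial.aeval_X]
      ring
    rw [hQ', MvPolynomial.coeff_add, e, MvPolynomial.coeff_monomial_mul', if_neg, add_zero]
    intro hle
    have := hle i0
    simp at this
    exact absurd (hdj j hj) (by omega)
  · intro z hz
    have hz0 : ‖z i0‖ ≤ r := (norm_le_pi_norm z i0).trans (mem_closedBall_zero_iff.mp hz)
    have hqz := hq (z i0) ((Complex.abs_re_le_norm _).trans hz0)
      ((Complex.abs_im_le_norm _).trans hz0)
    have hCz : ‖tEv ζ R z - tEv ζ Q z‖ ≤ |C| + 1 :=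
      (hC z hz).trans ((le_abs_self C).trans (by linarith))
    constructor
    · intro h
      have h2 := hqz.1 h
      have : tEv ζ Q' z - tEv ζ R z = (tEv ζ R z - tEv ζ Q z) *
          (((Polynomial.X * q) ^ d).eval (z i0 - ζ i0) - 1) := by rw [hev]; ring
      rw [this, norm_mul]
      calc _ ≤ (|C| + 1) * (ε / (|C| + 1)) := by gcongr
        _ = ε := by field_simp
    · intro h
      have h2 := hqz.2 h
      have : tEv ζ Q' z - tEv ζ Q z = (tEv ζ R z - tEv ζ Q z) *
          (((Polynomial.X * q) ^ d).eval (z i0 - ζ i0)) := by rw [hev]; ring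
      rw [this, norm_mul]
      calc _ ≤ (|C| + 1) * (ε / (|C| + 1)) := by gcongr
        _ = ε := by field_simp

/-- Remark 2.7: for the half-space `Ω = {z : Re z₁ > 0}` the universal
approximation holds simultaneously for ALL compact convex sets disjoint from `Ω`. -/
theorem rem2_7 (n : ℕ) (hn : 0 < n) (𝕄 : Set ℕ) (h𝕄 : 𝕄.Infinite)
    (ζ : Fin n → ℂ) (hζ : ζ ∈ {z : Fin n → ℂ | 0 < (z ⟨0, hn⟩).re})
    (Nj : ℕ → Fin n → ℕ) (hNj : Function.Bijective Nj) :
    ∃ f : (Fin n → ℂ) → ℂ,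
      DifferentiableOn ℂ f {z : Fin n → ℂ | 0 < (z ⟨0, hn⟩).re} ∧
      ∀ K : Set (Fin n → ℂ), IsCompact K → Convex ℝ K →
        K ∩ {z : Fin n → ℂ | 0 < (z ⟨0, hn⟩).re} = ∅ →
        ∀ P : MvPolynomial (Fin n) ℂ, ∃ lam : ℕ → ℕ, (∀ N, lam N ∈ 𝕄) ∧
          TendstoUniformlyOn (fun N => pSum Nj f ζ (lam N)) (mvEval P) atTop K ∧
          ∀ L : Set (Fin n → ℂ), L ⊆ {z : Fin n → ℂ | 0 < (z ⟨0, hn⟩).re} → IsCompact L →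
            TendstoUniformlyOn (fun N => pSum Nj f ζ (lam N)) f atTop L := by
  set Ω : Set (Fin n → ℂ) := {z : Fin n → ℂ | 0 < (z ⟨0, hn⟩).re} with hΩdef
  have hΩ : IsOpen Ω := isOpen_lt continuous_const (by fun_prop)
  obtain ⟨D, hD⟩ := dense_poly ζ
  have hstep := fun (k : ℕ) (s : MvPolynomial (Fin n) ℂ × ℕ) =>
    step hn 𝕄 h𝕄 ζ hζ Nj hNj s.1 (D (Nat.unpair k).1) s.2 (k + 1) (1 / (k + 1))
      ((1 / 2) ^ k) (by positivity) (by positivity)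
  choose nQ nl h1 h2 h3 h4 h5 using hstep
  let st : ℕ → MvPolynomial (Fin n) ℂ × ℕ :=
    fun k => Nat.rec (0, 0) (fun k s => (nQ k s, nl k s)) k
  have hst : ∀ k, st (k + 1) = (nQ k (st k), nl k (st k)) := fun k => rfl
  -- reindexed by one
  let F : ℕ → (Fin n → ℂ) → ℂ := fun k => tEv ζ (st k).1
  let Lk : ℕ → Set (Fin n → ℂ) := fun m =>
    {z | z ∈ Metric.closedBall (0 : Fin n → ℂ) (m + 1) ∧ 1 / ((m : ℝ) + 1) ≤ (z ⟨0, hn⟩).re}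
  have hLmono : ∀ m k, m ≤ k → Lk m ⊆ Lk k := by
    intro m k hmk z hz
    have hmk' : (m : ℝ) ≤ k := by exact_mod_cast hmk
    refine ⟨Metric.closedBall_subset_closedBall (by linarith) hz.1, le_trans ?_ hz.2⟩
    gcongr
  have hFstep : ∀ k, ∀ z ∈ Lk k, dist (F k z) (F (k + 1) z) ≤ (1 / 2) ^ k := by
    intro k z hz
    rw [dist_comm, dist_eq_norm]
    exact (h5 k (st k) z hz.1).2 hz.2
  have hFgeo : ∀ m, ∀ z ∈ Lk m, ∀ s,
      dist (F (m + s) z) (F (m + s + 1) z) ≤ (1 / 2) ^ m * (1 / 2) ^ s := by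
    intro m z hz s
    rw [← pow_add]
    exact hFstep (m + s) z (hLmono m _ (by omega) hz)
  -- every compact subset of the half space is contained in some `Lk m`
  have hLexh : ∀ L ⊆ Ω, IsCompact L → ∃ m, L ⊆ Lk m := by
    intro L hL hLc
    rcases L.eq_empty_or_nonempty with rfl | hne
    · exact ⟨0, empty_subset _⟩
    obtain ⟨w, hw, hmin⟩ := hLc.exists_isMinOn hne
      (f := fun z : Fin n → ℂ => (z ⟨0, hn⟩).re) (by fun_prop)
    obtain ⟨r, hr⟩ := hLc.isBounded.subset_closedBall (0 : Fin n → ℂ)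
    obtain ⟨m1, hm1⟩ := exists_nat_gt r
    obtain ⟨m2, hm2⟩ := exists_nat_one_div_lt (show 0 < (w ⟨0, hn⟩).re from hL hw)
    refine ⟨max m1 m2, fun z hz => ⟨?_, ?_⟩⟩
    · refine Metric.closedBall_subset_closedBall ?_ (hr hz)
      have : (m1 : ℝ) ≤ (max m1 m2 : ℕ) := by exact_mod_cast le_max_left _ _
      linarith
    · have h6 : (w ⟨0, hn⟩).re ≤ (z ⟨0, hn⟩).re := hmin hz
      have h7 : (m2 : ℝ) ≤ (max m1 m2 : ℕ) := by exact_mod_cast le_max_right _ _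
      have h8 : 1 / (((max m1 m2 : ℕ) : ℝ) + 1) ≤ 1 / ((m2 : ℝ) + 1) := by gcongr
      linarith
  let f : (Fin n → ℂ) → ℂ := fun z => limUnder atTop (fun k => F k z)
  have hlim : ∀ m, ∀ z ∈ Lk m, Tendsto (fun k => F k z) atTop (𝓝 (f z)) := by
    intro m z hz
    have hc : CauchySeq fun s => F (m + s) z :=
      cauchySeq_of_le_geometric (1 / 2) ((1 / 2) ^ m) (by norm_num) (hFgeo m z hz)
    obtain ⟨a, ha⟩ := cauchySeq_tendsto_of_complete hc
    have ha' : Tendsto (fun k => F k z) atTop (𝓝 a) := by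
      rw [← tendsto_add_atTop_iff_nat m]
      simpa [add_comm] using ha
    exact tendsto_nhds_limUnder ⟨a, ha'⟩
  have hest : ∀ m, ∀ z ∈ Lk m, dist (F m z) (f z) ≤ 2 * (1 / 2) ^ m := by
    intro m z hz
    have ht : Tendsto (fun s => F (m + s) z) atTop (𝓝 (f z)) := by
      have := (tendsto_add_atTop_iff_nat m).mpr (hlim m z hz)
      simpa [add_comm] using this
    have := dist_le_of_le_geometric_of_tendsto (1 / 2) ((1 / 2) ^ m) (by norm_num)
      (hFgeo m z hz) ht 0
    rw [add_zero] at this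
    refine this.trans (le_of_eq ?_)
    norm_num
    ring
  have hpow : Tendsto (fun k : ℕ => 2 * (1 / 2 : ℝ) ^ k) atTop (𝓝 0) := by
    simpa using (tendsto_pow_atTop_nhds_zero_of_lt_one (by norm_num : (0 : ℝ) ≤ 1 / 2)
      (by norm_num)).const_mul 2
  have hunif : ∀ L ⊆ Ω, IsCompact L → TendstoUniformlyOn F f atTop L := by
    intro L hL hLc
    obtain ⟨m, hm⟩ := hLexh L hL hLc
    rw [Metric.tendstoUniformlyOn_iff]
    intro ε hε
    filter_upwards [hpow.eventually_lt_const hε, eventually_ge_atTop m] with k hk hmk z hz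
    rw [dist_comm]
    exact (hest k z (hLmono m k hmk (hm hz))).trans_lt hk
  have hloc : TendstoLocallyUniformlyOn F f atTop Ω :=
    (tendstoLocallyUniformlyOn_iff_forall_isCompact hΩ).mpr hunif
  have hIs : IsLim ζ Ω F f := ⟨fun k => ⟨_, rfl⟩, hloc⟩
  -- coefficient stability
  have hmono : Monotone fun k => (st k).2 :=
    monotone_nat_of_le_succ fun k => h1 k (st k)
  have hcoef : ∀ k s, ∀ j ≤ (st k).2,
      MvPolynomial.coeff (Finsupp.equivFunOnFinite.symm (Nj j)) (st (k + s)).1 =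
        MvPolynomial.coeff (Finsupp.equivFunOnFinite.symm (Nj j)) (st k).1 := by
    intro k s j hj
    induction s with
    | zero => rfl
    | succ s ih =>
      rw [← ih]
      exact h4 (k + s) (st (k + s)) j (hj.trans (hmono (by omega : k ≤ k + s)))
  have hS : ∀ k, pSum Nj f ζ (st (k + 1)).2 = F (k + 1) := by
    intro k
    funext z
    have t1 := hIs.pSum hΩ hζ Nj (st (k + 1)).2 z
    refine tendsto_nhds_unique t1 ?_
    refine tendsto_const_nhds.congr' ?_
    filter_upwards [eventually_ge_atTop (k + 1)] with i hi
    obtain ⟨s, rfl⟩ := Nat.exists_eq_add_of_le hi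
    have e1 : pSum Nj (F (k + 1)) ζ (st (k + 1)).2 = F (k + 1) :=
      pSum_tEv_eq Nj hNj ζ _ _ (h3 k (st k))
    rw [← e1]
    simp only [F, pSum_tEv]
    refine Finset.sum_congr rfl fun j hj => ?_
    rw [hcoef (k + 1) s j (by have := Finset.mem_range.mp hj; omega)]
  refine ⟨f, (weierstrass_fderiv hΩ (fun k => tEv_differentiable ζ _) hloc).1, ?_⟩
  intro K hK _ hKΩ P
  obtain ⟨Q, hQ⟩ := mvEval_eq_tEv ζ P
  choose J hJ using fun N : ℕ => hD Q K hK (1 / ((N : ℝ) + 1)) (by positivity)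
  let κ : ℕ → ℕ := fun N => Nat.pair (J N) N
  have hκ : ∀ N, N ≤ κ N := fun N => Nat.right_le_pair _ _
  have hκt : Tendsto (fun N => κ N + 1) atTop atTop :=
    tendsto_atTop_mono (fun N => (hκ N).trans (Nat.le_succ _)) tendsto_id
  refine ⟨fun N => (st (κ N + 1)).2, fun N => h2 _ _, ?_, ?_⟩
  · simp only [hS]
    obtain ⟨r, hr⟩ := hK.isBounded.subset_closedBall (0 : Fin n → ℂ)
    obtain ⟨m, hm⟩ := exists_nat_gt r
    rw [Metric.tendstoUniformlyOn_iff]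
    intro ε hε
    have hp2 : ∀ᶠ N : ℕ in atTop, 2 * (1 / 2 : ℝ) ^ N < ε := hpow.eventually_lt_const hε
    have hp3 : ∀ᶠ N : ℕ in atTop, 1 / ((N : ℝ) + 1) < ε / 2 :=
      tendsto_one_div_add_atTop_nhds_zero_nat.eventually_lt_const (by positivity)
    filter_upwards [hp2, hp3, eventually_ge_atTop m] with N g1 g2 g3 z hz
    have hz0 : (z ⟨0, hn⟩).re ≤ 0 := by
      by_contra hcon
      have : z ∈ K ∩ Ω := ⟨hz, not_le.mp hcon⟩
      rw [hKΩ] at this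
      exact this
    have hmκ : (m : ℝ) ≤ κ N := by exact_mod_cast g3.trans (hκ N)
    have e1 := (h5 (κ N) (st (κ N)) z
      (Metric.closedBall_subset_closedBall (by linarith) (hr hz))).1 hz0
    have e2 : (1 / 2 : ℝ) ^ (κ N) ≤ (1 / 2) ^ N :=
      pow_le_pow_of_le_one (by norm_num) (by norm_num) (hκ N)
    have e3 := hJ N z hz
    rw [← dist_eq_norm] at e1
    have e4 : (Nat.unpair (κ N)).1 = J N := by simp [κ]
    rw [e4] at e1
    rw [hQ, dist_comm]
    have e5 : F (κ N + 1) z = tEv ζ (nQ (κ N) (st (κ N))) z := rfl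
    rw [e5]
    refine (dist_triangle _ (tEv ζ (D (J N)) z) _).trans_lt ?_
    linarith
  · intro L hL hLc
    simp only [hS]
    have h := hunif L hL hLc
    rw [Metric.tendstoUniformlyOn_iff] at h ⊢
    intro ε hε
    exact hκt.eventually (h ε hε)

end
end

section
/- Proposition 3.1: Let Ω ⊆ ℂⁿ be a convex open set and let f ∈ A^∞(Ω), i.e., f is holomorphic on Ω and for every multi-index ℓ ∈ ℕⁿ the partial derivative D^ℓ f extends continuously to the closure of Ω. Then for every compact set L contained in the closure of Ω, every finite set F of multi-indices in ℕⁿ, and every ε > 0, there exists a holomorphic polynomial Q on ℂⁿ such that sup_{z ∈ L} ‖(D^ℓ f)(z) − (D^ℓ Q)(z)‖ < ε for every ℓ ∈ F (where D^ℓ f denotes the continuous extension to the closure). In other words, the polynomials are dense in A^∞(Ω). -/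
open Set Filter Topology

noncomputable section

theorem hol_fderiv_apply {n : ℕ} {U : Set (Fin n → ℂ)} (hU : IsOpen U)
    {f : (Fin n → ℂ) → ℂ} (hf : DifferentiableOn ℂ f U) (v : Fin n → ℂ) :
    DifferentiableOn ℂ (fun z => fderiv ℂ f z v) U := by
  intro z₀ hz₀
  apply DifferentiableAt.differentiableWithinAt
  wlog hv : ‖v‖ ≤ 1 generalizing v
  · have hv0 : (‖v‖ : ℂ) ≠ 0 := by
      rw [Ne, Complex.ofReal_eq_zero]; intro h; rw [h] at hv; exact hv zero_le_one
    have h1 := this ((‖v‖ : ℂ)⁻¹ • v) (by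
      rw [norm_smul, norm_inv, Complex.norm_real, norm_norm, inv_mul_cancel₀]
      intro h; rw [h] at hv; exact hv zero_le_one)
    have h2 := h1.const_mul (‖v‖ : ℂ)
    refine h2.congr_of_eventuallyEq (Eventually.of_forall fun z => ?_)
    simp only [map_smul, smul_eq_mul]
    field_simp
  obtain ⟨r, hr, hrU⟩ : ∃ r > 0, Metric.closedBall z₀ (3 * r) ⊆ U := by
    obtain ⟨r, hr, h⟩ := Metric.nhds_basis_closedBall.mem_iff.1 (hU.mem_nhds hz₀)
    exact ⟨r / 3, by positivity, by convert h using 2; ring⟩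
  obtain ⟨M, hM⟩ := (isCompact_closedBall z₀ (3 * r)).exists_bound_of_continuousOn
    (hf.continuousOn.mono hrU)
  have hM0 : 0 ≤ M := (norm_nonneg _).trans (hM z₀ (Metric.mem_closedBall_self (by positivity)))
  have hcirc : ∀ (x : Fin n → ℂ) (θ : ℝ), dist (x + circleMap 0 r θ • v) x ≤ r := by
    intro x θ
    rw [dist_eq_norm, add_sub_cancel_left, norm_smul, norm_circleMap_zero, abs_of_pos hr]
    nlinarith [norm_nonneg v]
  -- bound on the derivative
  have hbd : ∀ x ∈ Metric.closedBall z₀ (2 * r), ‖fderiv ℂ f x‖ ≤ (2 * M + 1) / r := by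
    intro x hx
    have hsub : Metric.ball x r ⊆ Metric.closedBall z₀ (3 * r) := by
      intro y hy
      rw [Metric.mem_closedBall] at *
      rw [Metric.mem_ball] at hy
      linarith [dist_triangle y x z₀]
    refine Complex.norm_fderiv_le_div_of_mapsTo_ball
      (hf.mono (hsub.trans hrU)) ?_ hr
    intro y hy
    rw [Metric.mem_closedBall, dist_eq_norm]
    have h1 := hM y (hsub hy)
    have h2 := hM x (hsub (Metric.mem_ball_self hr))
    linarith [norm_sub_le (f y) (f x)]
  have hmem : ∀ x ∈ Metric.ball z₀ r, ∀ θ : ℝ,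
      x + circleMap 0 r θ • v ∈ Metric.closedBall z₀ (2 * r) := by
    intro x hx θ
    rw [Metric.mem_ball] at hx
    rw [Metric.mem_closedBall]
    linarith [dist_triangle (x + circleMap 0 r θ • v) x z₀, hcirc x θ]
  have hsub23 : Metric.closedBall z₀ (2 * r) ⊆ U :=
    (Metric.closedBall_subset_closedBall (by linarith)).trans hrU
  have hda : ∀ x ∈ Metric.closedBall z₀ (2 * r), DifferentiableAt ℂ f x := fun x hx =>
    hf.differentiableAt (hU.mem_nhds (hsub23 hx))
  -- Cauchy formula
  let c : ℝ → ℂ := fun θ => (2 * Real.pi * Complex.I)⁻¹ *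
    (deriv (circleMap 0 r) θ * (1 / (circleMap 0 r θ - 0) ^ 2))
  have hc0 : ∀ θ, circleMap 0 r θ ≠ 0 := fun θ => circleMap_ne_center hr.ne'
  have hcc : Continuous c := by
    have : c = fun θ => (2 * Real.pi * Complex.I)⁻¹ *
      (circleMap 0 r θ * Complex.I * (1 / (circleMap 0 r θ - 0) ^ 2)) := by
      funext θ; simp only [c, deriv_circleMap]
    rw [this]
    refine continuous_const.mul (((continuous_circleMap 0 r).mul continuous_const).mul ?_)
    refine continuous_const.div ?_ (fun θ => ?_)
    · fun_prop
    · simpa using hc0 θ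
  have hform : ∀ x ∈ Metric.ball z₀ r, fderiv ℂ f x v
      = ∫ θ in (0 : ℝ)..(2 * Real.pi), c θ * f (x + circleMap 0 r θ • v) := by
    intro x hx
    have hline : DifferentiableOn ℂ (fun w : ℂ => f (x + w • v)) (Metric.closedBall 0 r) := by
      intro w hw
      apply DifferentiableAt.differentiableWithinAt
      have hm : x + w • v ∈ Metric.closedBall z₀ (2 * r) := by
        rw [Metric.mem_ball] at hx
        rw [mem_closedBall_zero_iff] at hw
        rw [Metric.mem_closedBall]
        have : dist (x + w • v) x ≤ r := by
          rw [dist_eq_norm, add_sub_cancel_left, norm_smul]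
          nlinarith [norm_nonneg v, norm_nonneg w]
        linarith [dist_triangle (x + w • v) x z₀]
      exact (hda _ hm).comp w (by fun_prop)
    have h1 := hline.deriv_eq_smul_circleIntegral hr
    have h2 : deriv (fun w : ℂ => f (x + w • v)) 0 = fderiv ℂ f x v := by
      have hx' : DifferentiableAt ℂ f (x + (0 : ℂ) • v) := by
        rw [zero_smul, add_zero]
        exact hda _ (Metric.ball_subset_closedBall.trans
          (Metric.closedBall_subset_closedBall (by linarith)) hx)
      have h3 : HasDerivAt (fun w : ℂ => x + w • v) v 0 := by
        simpa using ((hasDerivAt_id (0 : ℂ)).smul_const v).const_add x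
      have := hx'.hasFDerivAt.comp_hasDerivAt (0 : ℂ) h3
      rw [zero_smul, add_zero] at this
      exact this.deriv
    rw [h2, circleIntegral] at h1
    have hpi : (2 * Real.pi * Complex.I : ℂ) ≠ 0 := Complex.two_pi_I_ne_zero
    calc fderiv ℂ f x v = (2 * Real.pi * Complex.I : ℂ)⁻¹ *
          ((2 * Real.pi * Complex.I : ℂ) • fderiv ℂ f x v) := by
            rw [smul_eq_mul, inv_mul_cancel_left₀ hpi]
      _ = _ := by
            rw [← h1, ← intervalIntegral.integral_const_mul]
            refine intervalIntegral.integral_congr fun θ _ => ?_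
            simp only [c, smul_eq_mul]; ring
  have key := intervalIntegral.hasFDerivAt_integral_of_dominated_of_fderiv_le
    (μ := MeasureTheory.volume) (𝕜 := ℂ) (a := 0) (b := 2 * Real.pi)
    (F := fun x θ => c θ * f (x + circleMap 0 r θ • v))
    (F' := fun x θ => c θ • fderiv ℂ f (x + circleMap 0 r θ • v))
    (bound := fun θ => ‖c θ‖ * ((2 * M + 1) / r))
    (x₀ := z₀) (Metric.ball_mem_nhds z₀ hr) ?_ ?_ ?_ ?_ ?_ ?_
  · refine key.differentiableAt.congr_of_eventuallyEq ?_
    filter_upwards [Metric.ball_mem_nhds z₀ hr] with x hx using hform x hx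
  · filter_upwards [Metric.ball_mem_nhds z₀ hr] with x hx
    refine Continuous.aestronglyMeasurable (hcc.mul ?_)
    refine (hf.continuousOn.mono hsub23).comp_continuous (by fun_prop) (hmem x hx)
  · refine Continuous.intervalIntegrable (hcc.mul ?_) _ _
    refine (hf.continuousOn.mono hsub23).comp_continuous (by fun_prop)
      (hmem z₀ (Metric.mem_ball_self hr))
  · refine (hcc.measurable.smul ?_).aestronglyMeasurable
    refine (measurable_fderiv ℂ f).comp (Continuous.measurable ?_)
    fun_prop
  · refine Eventually.of_forall fun θ _ x hx => ?_
    rw [norm_smul]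
    gcongr
    exact hbd _ (hmem x hx θ)
  · exact (hcc.norm.mul continuous_const).intervalIntegrable _ _
  · refine Eventually.of_forall fun θ _ x hx => ?_
    have h1 := (hda _ (hmem x hx θ)).hasFDerivAt
    have h2 : HasFDerivAt (fun x : Fin n → ℂ => f (x + circleMap 0 r θ • v))
      (fderiv ℂ f (x + circleMap 0 r θ • v)) x := by
      exact (hasFDerivAt_comp_add_right _).2 h1
    exact h2.const_mul (c θ)

theorem hol_contDiffOn {n : ℕ} {U : Set (Fin n → ℂ)} (hU : IsOpen U) (m : ℕ)
    {f : (Fin n → ℂ) → ℂ} (hf : DifferentiableOn ℂ f U) : ContDiffOn ℂ m f U := by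
  induction m generalizing f with
  | zero => exact contDiffOn_zero.2 hf.continuousOn
  | succ m ih =>
    rw [Nat.cast_succ, contDiffOn_succ_iff_fderiv_of_isOpen hU]
    refine ⟨hf, by simp, ?_⟩
    rw [contDiffOn_clm_apply]
    intro v
    exact ih (hol_fderiv_apply hU hf v)

theorem mvEval_differentiable {n : ℕ} (p : MvPolynomial (Fin n) ℂ) :
    Differentiable ℂ (mvEval p) := by
  unfold mvEval
  induction p using MvPolynomial.induction_on with
  | C a => simp
  | add p q hp hq => simp only [map_add]; exact hp.add hq
  | mul_X p i hp =>
    simp only [map_mul, MvPolynomial.eval_X]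
    exact hp.mul (differentiable_apply i)

/-- Homogeneous terms are polynomials. -/
theorem multilinear_poly {n j : ℕ} (a : Fin n → ℂ)
    (m : MultilinearMap ℂ (fun _ : Fin j => Fin n → ℂ) ℂ) :
    ∃ q : MvPolynomial (Fin n) ℂ, ∀ z, m (fun _ => z - a) = mvEval q z := by
  refine ⟨∑ r : Fin j → Fin n, (∏ i, (MvPolynomial.X (r i) - MvPolynomial.C (a (r i)))) *
    MvPolynomial.C (m fun i => Pi.single (r i) 1), fun z => ?_⟩
  have hz : z - a = ∑ i, (z i - a i) • (Pi.single i 1 : Fin n → ℂ) := by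
    simpa using pi_eq_sum_univ' (z - a)
  conv_lhs => rw [hz]
  rw [MultilinearMap.map_sum]
  simp only [mvEval, map_sum, map_mul, map_prod, map_sub, MvPolynomial.eval_X, MvPolynomial.eval_C,
    MultilinearMap.map_smul_univ, smul_eq_mul]

/-- Taylor coefficients of `s ↦ f (a + φ(s) (z - a))` at `0` are polynomials in `z`. -/
theorem coeff_poly_s12 {n : ℕ} {f : (Fin n → ℂ) → ℂ} {a : Fin n → ℂ} {φ : ℂ → ℂ} (k : ℕ)
    (hf : ContDiffAt ℂ k f a) (hφ : ContDiffAt ℂ k φ 0) (hφ0 : φ 0 = 0) :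
    ∃ q : MvPolynomial (Fin n) ℂ, ∀ z,
      iteratedDeriv k (fun s => f (a + φ s • (z - a))) 0 = mvEval q z := by
  choose Q hQ using fun j : ℕ =>
    multilinear_poly a (iteratedFDeriv ℂ j f a).toMultilinearMap
  refine ⟨∑ c : OrderedFinpartition k,
    MvPolynomial.C (∏ m, iteratedDeriv (c.partSize m) φ 0) * Q c.length, fun z => ?_⟩
  have hin : ContDiffAt ℂ k (fun s => a + φ s • (z - a)) 0 :=
    contDiffAt_const.add (hφ.smul contDiffAt_const)
  have h0 : a + φ 0 • (z - a) = a := by simp [hφ0]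
  have hcomp := iteratedFDeriv_comp (g := f) (f := fun s => a + φ s • (z - a)) (x := (0 : ℂ))
    (n := k) (by rw [h0]; exact hf) hin (i := k) le_rfl
  rw [h0] at hcomp
  rw [iteratedDeriv_eq_iteratedFDeriv]
  have : (fun s => f (a + φ s • (z - a))) = f ∘ (fun s => a + φ s • (z - a)) := rfl
  rw [this, hcomp]
  simp only [mvEval, map_sum, map_mul, MvPolynomial.eval_C]
  rw [FormalMultilinearSeries.taylorComp, ContinuousMultilinearMap.sum_apply]
  refine Finset.sum_congr rfl fun c _ => ?_
  change (iteratedFDeriv ℂ c.length f a) (fun m =>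
    (iteratedFDeriv ℂ (c.partSize m) (fun s => a + φ s • (z - a)) 0) (fun _ => 1)) = _
  have hpart : ∀ m, (iteratedFDeriv ℂ (c.partSize m) (fun s => a + φ s • (z - a)) 0) (fun _ => 1)
      = iteratedDeriv (c.partSize m) φ 0 • (z - a) := by
    intro m
    rw [← iteratedDeriv_eq_iteratedFDeriv, iteratedDeriv_const_add (c.partSize_pos m),
      iteratedDeriv_smul_const]
    exact hφ.of_le (by exact_mod_cast c.partSize_le m)
  simp only [hpart]
  have := (iteratedFDeriv ℂ c.length f a).toMultilinearMap.map_smul_univ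
    (fun m => iteratedDeriv (c.partSize m) φ 0) (fun _ => z - a)
  simp only [ContinuousMultilinearMap.coe_coe, smul_eq_mul] at this
  rw [this]
  congr 1
  exact hQ c.length z

/-- A conformal-type map squeezing a disc near the segment `[0,1]`. -/
theorem exists_squeeze {δ : ℝ} (hδ : 0 < δ) : ∃ (φ : ℂ → ℂ) (R : ℝ), 1 < R ∧
    DifferentiableOn ℂ φ (Metric.ball 0 R) ∧ φ 0 = 0 ∧ φ 1 = 1 ∧
    ∀ s ∈ Metric.ball (0 : ℂ) R, ∃ t ∈ Icc (0 : ℝ) 1, ‖φ s - t‖ < δ := by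
  obtain ⟨N, hN⟩ : ∃ N : ℝ, max 1 (3 / δ) < N := exists_gt _
  have hN1 : 1 < N := (le_max_left _ _).trans_lt hN
  have hN0 : 0 < N := by linarith
  have hNδ : 3 / N < δ := by
    have := (le_max_right _ _).trans_lt hN
    rw [div_lt_iff₀ hδ] at this
    rw [div_lt_iff₀ hN0]; linarith
  set e := Real.exp (-N) with he
  have he0 : 0 < e := Real.exp_pos _
  have he1 : e < 1 := by rw [he, Real.exp_lt_one_iff]; linarith
  have hre : ∀ s ∈ Metric.ball (0 : ℂ) ((1 - e / 2) / (1 - e)), ‖((1 - e : ℝ) : ℂ) * s‖ < 1 - e / 2 := by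
    intro s hs
    rw [mem_ball_zero_iff, lt_div_iff₀ (by linarith)] at hs
    rw [norm_mul, Complex.norm_real, Real.norm_of_nonneg (by linarith)]
    linarith
  have hre2 : ∀ s ∈ Metric.ball (0 : ℂ) ((1 - e / 2) / (1 - e)),
      e / 2 < (1 - ((1 - e : ℝ) : ℂ) * s).re := by
    intro s hs
    have h1 := hre s hs
    have h2 := Complex.re_le_norm (((1 - e : ℝ) : ℂ) * s)
    rw [Complex.sub_re, Complex.one_re]
    linarith
  refine ⟨fun s => - Complex.log (1 - ((1 - e : ℝ) : ℂ) * s) / N, (1 - e / 2) / (1 - e), ?_, ?_,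
    by simp, ?_, ?_⟩
  · rw [lt_div_iff₀ (by linarith)]; linarith
  · intro s hs
    apply DifferentiableAt.differentiableWithinAt
    refine ((DifferentiableAt.clog (by fun_prop) (Or.inl ?_)).neg).div_const _
    linarith [hre2 s hs]
  · have : (1 - ((1 - e : ℝ) : ℂ) * 1) = (e : ℂ) := by push_cast; ring
    simp only [this]
    rw [← Complex.ofReal_log he0.le, he, Real.log_exp]
    push_cast
    rw [neg_neg, div_self]
    exact_mod_cast hN0.ne'
  · intro s hs
    set w := 1 - ((1 - e : ℝ) : ℂ) * s with hw
    have h1 := hre2 s hs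
    rw [← hw] at h1
    have him : |(Complex.log w).im| ≤ 2 := by
      rw [Complex.log_im]
      have := (Complex.abs_arg_lt_pi_div_two_iff.2 (Or.inl (by linarith : 0 < w.re)))
      linarith [Real.pi_lt_four]
    have hlo : -N - 1 < (Complex.log w).re := by
      rw [Complex.log_re]
      have h2 : e / 2 < ‖w‖ := h1.trans_le (Complex.re_le_norm w)
      have h3 := Real.log_lt_log (by positivity) h2
      rw [Real.log_div he0.ne' two_ne_zero, he, Real.log_exp] at h3
      linarith [Real.log_two_lt_d9]
    have hhi : (Complex.log w).re < 1 := by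
      rw [Complex.log_re]
      have h2 : ‖w‖ < 2 := by
        have := norm_sub_le (1 : ℂ) (((1 - e : ℝ) : ℂ) * s)
        rw [← hw, norm_one] at this
        linarith [hre s hs]
      have h3 : 0 < ‖w‖ := lt_of_lt_of_le (by linarith) (Complex.re_le_norm w)
      have h3 := Real.log_lt_log h3 h2
      linarith [Real.log_two_lt_d9]
    set x := (Complex.log w).re with hx
    set y := (Complex.log w).im with hy
    refine ⟨max 0 (min 1 (-x / N)), ⟨le_max_left _ _, max_le zero_le_one (min_le_left _ _)⟩, ?_⟩
    have hlog : Complex.log w = x + y * Complex.I := (Complex.re_add_im _).symm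
    have hd : |(-x / N) - max 0 (min 1 (-x / N))| ≤ 1 / N := by
      have h4 : -x / N ≤ 1 + 1 / N := by
        rw [div_le_iff₀ hN0, add_mul, one_mul, div_mul_cancel₀ _ hN0.ne']; linarith
      have h5 : - (1 / N) ≤ -x / N := by
        rw [← neg_div]; gcongr
      have h6 : 0 < 1 / N := by positivity
      rw [abs_le]
      rcases le_total 1 (-x / N) with h | h
      · rw [min_eq_left h, max_eq_right zero_le_one]; constructor <;> linarith
      · rw [min_eq_right h]
        rcases le_total 0 (-x / N) with h' | h'
        · rw [max_eq_right h']; constructor <;> linarith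
        · rw [max_eq_left h']; constructor <;> linarith
    have heq : - Complex.log w / N - ((max 0 (min 1 (-x / N)) : ℝ) : ℂ)
        = (((-x / N) - max 0 (min 1 (-x / N)) : ℝ) : ℂ) + ((-y / N : ℝ) : ℂ) * Complex.I := by
      rw [hlog, Complex.ofReal_sub]; push_cast; ring
    rw [heq]
    refine lt_of_le_of_lt (norm_add_le _ _) ?_
    rw [norm_mul, Complex.norm_I, Complex.norm_real, Complex.norm_real, mul_one, Real.norm_eq_abs,
      Real.norm_eq_abs]
    have h7 : |-y / N| ≤ 2 / N := by
      rw [abs_div, abs_neg, abs_of_pos hN0]; gcongr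
    have : 1 / N + 2 / N = 3 / N := by ring
    linarith

/-- Runge theorem for convex open sets. -/
theorem convex_runge {n : ℕ} {U : Set (Fin n → ℂ)} (hU : IsOpen U) (hc : Convex ℝ U)
    {f : (Fin n → ℂ) → ℂ} (hf : DifferentiableOn ℂ f U) {a : Fin n → ℂ} (ha : a ∈ U)
    {K : Set (Fin n → ℂ)} (hK : IsCompact K) (hKU : K ⊆ U) {ε : ℝ} (hε : 0 < ε) :
    ∃ Q : MvPolynomial (Fin n) ℂ, ∀ z ∈ K, ‖f z - mvEval Q z‖ < ε := by
  let I : Set ℂ := (fun t : ℝ => (t : ℂ)) '' Icc 0 1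
  have hI : IsCompact I := isCompact_Icc.image Complex.continuous_ofReal
  have hcont : Continuous (fun p : ℂ × (Fin n → ℂ) => a + p.1 • (p.2 - a)) := by fun_prop
  obtain ⟨V, W, hV, hW, hIV, hKW, hVW⟩ := generalized_tube_lemma hI hK
    (hU.preimage hcont) (by
      rintro ⟨t, z⟩ ⟨⟨t, ht, rfl⟩, hz⟩
      have := hc ha (hKU hz) (sub_nonneg.2 ht.2) ht.1 (by ring)
      change a + (t : ℂ) • (z - a) ∈ U
      convert this using 1
      ext i
      simp
      ring)
  obtain ⟨δ, hδ, hδV⟩ := hI.exists_thickening_subset_open hV hIV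
  obtain ⟨φ, R, hR, hφ, hφ0, hφ1, hφI⟩ := exists_squeeze hδ
  have hmaps : ∀ s ∈ Metric.ball (0 : ℂ) R, ∀ z ∈ K, a + φ s • (z - a) ∈ U := by
    intro s hs z hz
    have : φ s ∈ V := by
      obtain ⟨t, ht, h⟩ := hφI s hs
      refine hδV (Metric.mem_thickening_iff.2 ⟨t, ⟨t, ht, rfl⟩, ?_⟩)
      rwa [dist_eq_norm]
    exact hVW (⟨this, hKW hz⟩ : (φ s, z) ∈ V ×ˢ W)
  obtain ⟨R', hR'1, hR'R⟩ := exists_between hR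
  have hR'0 : 0 < R' := by linarith
  have hG : ∀ z ∈ K, DifferentiableOn ℂ (fun s => f (a + φ s • (z - a))) (Metric.ball 0 R) := by
    intro z hz
    exact hf.comp ((hφ.smul_const _).const_add a) (fun s hs => hmaps s hs z hz)
  have hsub : Metric.closedBall (0 : ℂ) R' ⊆ Metric.ball 0 R :=
    Metric.closedBall_subset_ball hR'R
  obtain ⟨M, hM⟩ := ((isCompact_closedBall (0 : ℂ) R').prod hK).exists_bound_of_continuousOn
    (f := fun p : ℂ × (Fin n → ℂ) => f (a + φ p.1 • (p.2 - a))) (by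
      refine hf.continuousOn.comp ?_ (fun p hp => hmaps _ (hsub hp.1) _ hp.2)
      have h1 : ContinuousOn (fun p : ℂ × (Fin n → ℂ) => φ p.1) (Metric.closedBall 0 R' ×ˢ K) :=
        (hφ.continuousOn.mono hsub).comp continuousOn_fst (fun p hp => hp.1)
      have h2 : ContinuousOn (fun p : ℂ × (Fin n → ℂ) => p.2 - a) (Metric.closedBall 0 R' ×ˢ K) := by
        fun_prop
      exact continuousOn_const.add (h1.smul h2))
  have hφk : ∀ k : ℕ, ContDiffAt ℂ k φ 0 := fun k =>
    (hφ.analyticAt (Metric.ball_mem_nhds 0 (by linarith))).contDiffAt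
  choose q hq using fun k : ℕ => coeff_poly_s12 k
    ((hol_contDiffOn hU k hf).contDiffAt (hU.mem_nhds ha)) (hφk k) hφ0
  let T : ℕ → (Fin n → ℂ) → ℂ := fun k z =>
    ((k.factorial : ℂ))⁻¹ * iteratedDeriv k (fun s => f (a + φ s • (z - a))) 0
  have hsum : ∀ z ∈ K, HasSum (fun k => T k z) (f z) := by
    intro z hz
    have h1 := Complex.hasSum_taylorSeries_on_ball (hG z hz) (z := 1) (by simpa using hR)
    simpa [hφ1, T] using h1
  have hbound : ∀ k, ∀ z ∈ K, ‖T k z‖ ≤ M * (R'⁻¹) ^ k := by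
    intro k z hz
    have h1 := Complex.norm_iteratedDeriv_le_of_forall_mem_sphere_norm_le (c := 0) (R := R') (C := M)
      (f := fun s => f (a + φ s • (z - a))) k hR'0
      (((hG z hz).mono (Metric.closure_ball_subset_closedBall.trans hsub)).diffContOnCl)
      (fun s hs => hM (s, z) ⟨Metric.sphere_subset_closedBall hs, hz⟩)
    simp only [T]
    rw [norm_mul, norm_inv, Complex.norm_natCast]
    have hk : (0 : ℝ) < k.factorial := by exact_mod_cast k.factorial_pos
    rw [inv_mul_le_iff₀ hk]
    refine h1.trans (le_of_eq ?_)
    rw [inv_pow]; field_simp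
  have hu : Summable (fun k : ℕ => M * (R'⁻¹) ^ k) :=
    (summable_geometric_of_lt_one (by positivity) (inv_lt_one_of_one_lt₀ hR'1)).mul_left M
  have hunif := tendstoUniformlyOn_tsum_nat hu hbound
  rw [Metric.tendstoUniformlyOn_iff] at hunif
  obtain ⟨N, hN⟩ := (hunif ε hε).exists
  refine ⟨∑ k ∈ Finset.range N, MvPolynomial.C ((k.factorial : ℂ)⁻¹) * q k, fun z hz => ?_⟩
  have h1 := hN z hz
  rw [(hsum z hz).tsum_eq, dist_eq_norm] at h1
  have h2 : mvEval (∑ k ∈ Finset.range N, MvPolynomial.C ((k.factorial : ℂ)⁻¹) * q k) z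
      = ∑ k ∈ Finset.range N, T k z := by
    simp only [T, hq]
    simp only [mvEval, map_sum, map_mul, MvPolynomial.eval_C]
  rwa [h2]

/-- Operators preserving holomorphy on `U` and satisfying Cauchy type estimates. -/
def CauchyOp {n : ℕ} (U : Set (Fin n → ℂ))
    (T : ((Fin n → ℂ) → ℂ) → ((Fin n → ℂ) → ℂ)) : Prop :=
  (∀ h, DifferentiableOn ℂ h U → DifferentiableOn ℂ (T h) U) ∧
  ∀ K, IsCompact K → K ⊆ U → ∃ K', IsCompact K' ∧ K' ⊆ U ∧ ∃ C : ℝ, 0 ≤ C ∧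
    ∀ h₁ h₂, DifferentiableOn ℂ h₁ U → DifferentiableOn ℂ h₂ U → ∀ M : ℝ,
      (∀ z ∈ K', ‖h₁ z - h₂ z‖ ≤ M) → ∀ z ∈ K, ‖T h₁ z - T h₂ z‖ ≤ C * M

theorem CauchyOp.id' {n : ℕ} (U : Set (Fin n → ℂ)) : CauchyOp U (fun h => h) :=
  ⟨fun _ h => h, fun K hK hKU => ⟨K, hK, hKU, 1, zero_le_one, fun _ _ _ _ M h => by simpa using h⟩⟩

theorem CauchyOp.comp {n : ℕ} {U : Set (Fin n → ℂ)}
    {S T : ((Fin n → ℂ) → ℂ) → ((Fin n → ℂ) → ℂ)} (hS : CauchyOp U S) (hT : CauchyOp U T) :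
    CauchyOp U (fun h => S (T h)) := by
  refine ⟨fun h hh => hS.1 _ (hT.1 _ hh), fun K hK hKU => ?_⟩
  obtain ⟨K₁, hK₁, hK₁U, C₁, hC₁, H₁⟩ := hS.2 K hK hKU
  obtain ⟨K₂, hK₂, hK₂U, C₂, hC₂, H₂⟩ := hT.2 K₁ hK₁ hK₁U
  refine ⟨K₂, hK₂, hK₂U, C₁ * C₂, mul_nonneg hC₁ hC₂, fun h₁ h₂ d₁ d₂ M hM z hz => ?_⟩
  rw [mul_assoc]
  exact H₁ _ _ (hT.1 _ d₁) (hT.1 _ d₂) _ (H₂ _ _ d₁ d₂ M hM) z hz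

theorem CauchyOp.pd' {n : ℕ} {U : Set (Fin n → ℂ)} (hU : IsOpen U) (i : Fin n) :
    CauchyOp U (pd i) := by
  refine ⟨fun h hh => hol_fderiv_apply hU hh _, fun K hK hKU => ?_⟩
  obtain ⟨δ, hδ, hδU⟩ := hK.exists_cthickening_subset_open hU hKU
  refine ⟨Metric.cthickening δ K, hK.cthickening, hδU, 2 / δ, by positivity,
    fun h₁ h₂ d₁ d₂ M hM z hz => ?_⟩
  have hsub : Metric.ball z δ ⊆ Metric.cthickening δ K :=
    (Metric.ball_subset_thickening hz δ).trans (Metric.thickening_subset_cthickening δ K)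
  have e : pd i h₁ z - pd i h₂ z = fderiv ℂ (fun z => h₁ z - h₂ z) z (Pi.single i 1) := by
    rw [fderiv_fun_sub (d₁.differentiableAt (hU.mem_nhds (hKU hz)))
      (d₂.differentiableAt (hU.mem_nhds (hKU hz)))]
    rfl
  rw [e]
  have hb : ‖fderiv ℂ (fun z => h₁ z - h₂ z) z‖ ≤ (2 * M) / δ := by
    refine Complex.norm_fderiv_le_div_of_mapsTo_ball ((d₁.sub d₂).mono (hsub.trans hδU)) ?_ hδ
    intro y hy
    rw [Metric.mem_closedBall, dist_eq_norm]
    have h1 := hM y (hsub hy)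
    have h2 := hM z (hsub (Metric.mem_ball_self hδ))
    linarith [norm_sub_le (h₁ y - h₂ y) (h₁ z - h₂ z)]
  have hn : ‖(Pi.single i 1 : Fin n → ℂ)‖ ≤ 1 := by
    rw [Pi.norm_single, norm_one]
  calc _ ≤ ‖fderiv ℂ (fun z => h₁ z - h₂ z) z‖ * ‖(Pi.single i 1 : Fin n → ℂ)‖ :=
        ContinuousLinearMap.le_opNorm _ _
    _ ≤ ‖fderiv ℂ (fun z => h₁ z - h₂ z) z‖ * 1 := by gcongr
    _ ≤ 2 / δ * M := by rw [mul_one]; refine hb.trans (le_of_eq ?_); ring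

theorem Dml_induction {n : ℕ} (P : (((Fin n → ℂ) → ℂ) → ((Fin n → ℂ) → ℂ)) → Prop)
    (hid : P fun h => h) (hcomp : ∀ S T, P S → P T → P (fun h => S (T h)))
    (hpd : ∀ i, P (pd i)) (ℓ : Fin n → ℕ) : P (Dml ℓ) := by
  have hiter : ∀ i k, P ((pd i)^[k]) := by
    intro i k
    induction k with
    | zero => exact hid
    | succ k ih =>
      rw [Function.iterate_succ]
      exact hcomp ((pd i)^[k]) (pd i) ih (hpd i)
  unfold Dml
  induction List.finRange n with
  | nil => exact hid
  | cons i l ih => exact hcomp _ _ (hiter i (ℓ i)) ih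

theorem Dml_cauchy {n : ℕ} {U : Set (Fin n → ℂ)} (hU : IsOpen U) (ℓ : Fin n → ℕ) :
    CauchyOp U (Dml ℓ) :=
  Dml_induction (CauchyOp U) (CauchyOp.id' U) (fun _ _ hS hT => hS.comp hT) (CauchyOp.pd' hU) ℓ

theorem Dml_scale {n : ℕ} (ℓ : Fin n → ℕ) : ∃ m : ℕ, ∀ (r c : ℂ) (b : Fin n → ℂ)
    (f : (Fin n → ℂ) → ℂ),
    Dml ℓ (fun z => c * f (r • z + b)) = fun z => c * r ^ m * Dml ℓ f (r • z + b) := by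
  refine Dml_induction (fun T => ∃ m : ℕ, ∀ (r c : ℂ) (b : Fin n → ℂ) (f : (Fin n → ℂ) → ℂ),
    T (fun z => c * f (r • z + b)) = fun z => c * r ^ m * T f (r • z + b)) ?_ ?_ ?_ ℓ
  · exact ⟨0, fun r c b f => by simp⟩
  · rintro S T ⟨m, hm⟩ ⟨k, hk⟩
    refine ⟨k + m, fun r c b f => ?_⟩
    beta_reduce
    rw [hk, hm]
    funext z
    ring
  · intro i
    refine ⟨1, fun r c b f => ?_⟩
    funext z
    have h1 : fderiv ℂ (fun z => f (r • z + b)) z = r • fderiv ℂ f (r • z + b) := by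
      have := fderiv_comp_smul (𝕜 := ℂ) (f := fun y => f (y + b)) (x := z) r
      rw [this, fderiv_comp_add_right]
    have h2 : fderiv ℂ (fun z => c * f (r • z + b)) z = c • fderiv ℂ (fun z => f (r • z + b)) z :=
      congrFun (fderiv_const_smul_field (𝕜 := ℂ) (f := fun z => f (r • z + b)) c) z
    simp only [pd, h2, h1, ContinuousLinearMap.smul_apply, smul_eq_mul, pow_one]
    ring

/-- Proposition 3.1: polynomials are dense in `A^∞(Ω)` for convex open `Ω`. -/
theorem prop3_1 (n : ℕ) (Ω : Set (Fin n → ℂ)) (hΩo : IsOpen Ω) (hΩcv : Convex ℝ Ω)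
    (f : (Fin n → ℂ) → ℂ) (hf : DifferentiableOn ℂ f Ω)
    (g : (Fin n → ℕ) → (Fin n → ℂ) → ℂ)
    (hg : ∀ ℓ : Fin n → ℕ, ContinuousOn (g ℓ) (closure Ω) ∧ Set.EqOn (g ℓ) (Dml ℓ f) Ω)
    (L : Set (Fin n → ℂ)) (hLcpt : IsCompact L) (hLsub : L ⊆ closure Ω)
    (F : Finset (Fin n → ℕ)) (ε : ℝ) (hε : 0 < ε) :
    ∃ Q : MvPolynomial (Fin n) ℂ, ∀ ℓ ∈ F, ∀ z ∈ L, ‖g ℓ z - Dml ℓ (mvEval Q) z‖ < ε := by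
  rcases Ω.eq_empty_or_nonempty with rfl | ⟨a, ha⟩
  · refine ⟨0, fun ℓ _ z hz => ?_⟩
    have := hLsub hz
    simp at this
  choose m hm using fun ℓ : Fin n → ℕ => Dml_scale ℓ
  -- the point `r z + (1-r) a`
  have hpt : ∀ (r : ℝ) (z : Fin n → ℂ), (r : ℂ) • z + ((1 - r : ℝ) : ℂ) • a
      = r • z + (1 - r) • a := by
    intro r z; rfl
  have hmemcl : ∀ r ∈ Icc (0 : ℝ) 1, ∀ z ∈ L, (r : ℂ) • z + ((1 - r : ℝ) : ℂ) • a ∈ closure Ω := by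
    intro r hr z hz
    rw [hpt]
    exact hΩcv.closure (hLsub hz) (subset_closure ha) hr.1 (by linarith [hr.2]) (by ring)
  have hmem : ∀ r ∈ Ico (0 : ℝ) 1, ∀ z ∈ L, (r : ℂ) • z + ((1 - r : ℝ) : ℂ) • a ∈ Ω := by
    intro r hr z hz
    rw [hpt]
    have := hΩcv.combo_closure_interior_mem_interior (hLsub hz) (y := a)
      (by rwa [hΩo.interior_eq]) hr.1 (b := 1 - r) (by linarith [hr.2]) (by ring)
    rwa [hΩo.interior_eq] at this
  -- choose r
  have hr : ∀ ℓ ∈ F, ∀ᶠ r : ℝ in 𝓝[<] 1, ∀ z ∈ L,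
      ‖g ℓ z - (r : ℂ) ^ m ℓ * g ℓ ((r : ℂ) • z + ((1 - r : ℝ) : ℂ) • a)‖ < ε / 2 := by
    intro ℓ _
    have hc : ContinuousOn (fun p : ℝ × (Fin n → ℂ) =>
        (p.1 : ℂ) ^ m ℓ * g ℓ ((p.1 : ℂ) • p.2 + ((1 - p.1 : ℝ) : ℂ) • a)) (Icc 0 1 ×ˢ L) := by
      refine ContinuousOn.mul (by fun_prop) ?_
      exact (hg ℓ).1.comp (by fun_prop) (fun p hp => hmemcl p.1 hp.1 p.2 hp.2)
    have huc := (isCompact_Icc.prod hLcpt).uniformContinuousOn_of_continuous hc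
    rw [Metric.uniformContinuousOn_iff] at huc
    obtain ⟨δ, hδ, H⟩ := huc (ε / 2) (by positivity)
    have hev : Ioo (max 0 (1 - δ)) 1 ∈ 𝓝[<] (1 : ℝ) :=
      Ioo_mem_nhdsLT (max_lt one_pos (by linarith))
    filter_upwards [hev] with r hr z hz
    have hr0 : 0 < r := (le_max_left _ _).trans_lt hr.1
    have hrδ : 1 - δ < r := (le_max_right _ _).trans_lt hr.1
    have := H (1, z) ⟨⟨zero_le_one, le_rfl⟩, hz⟩ (r, z) ⟨⟨hr0.le, hr.2.le⟩, hz⟩ (by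
      rw [Prod.dist_eq, dist_self, Real.dist_eq]
      refine max_lt ?_ hδ
      rw [abs_lt]; constructor <;> linarith [hr.2])
    rw [dist_eq_norm] at this
    simpa using this
  have hev : Ioo (0 : ℝ) 1 ∈ 𝓝[<] (1 : ℝ) := Ioo_mem_nhdsLT one_pos
  obtain ⟨r, hrF, hr01⟩ := (((Finset.eventually_all F).2 hr).and hev).exists
  set b : Fin n → ℂ := ((1 - r : ℝ) : ℂ) • a with hb
  set U : Set (Fin n → ℂ) := {z | (r : ℂ) • z + b ∈ Ω} with hUdef
  have hUo : IsOpen U := hΩo.preimage (by fun_prop : Continuous fun z => (r : ℂ) • z + b)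
  have hUc : Convex ℝ U := by
    intro x hx y hy s t hs ht hst
    have := hΩcv hx hy hs ht hst
    change (r : ℂ) • (s • x + t • y) + b ∈ Ω
    convert this using 1
    have : b = s • b + t • b := by rw [← add_smul, hst, one_smul]
    conv_lhs => rw [this]
    simp only [smul_add, smul_comm (r : ℂ)]
    abel
  have haU : a ∈ U := by
    change (r : ℂ) • a + b ∈ Ω
    rw [hb, ← add_smul]
    have : (r : ℂ) + ((1 - r : ℝ) : ℂ) = 1 := by push_cast; ring
    rwa [this, one_smul]
  have hLU : L ⊆ U := fun z hz => hmem r ⟨hr01.1.le, hr01.2⟩ z hz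
  set fr : (Fin n → ℂ) → ℂ := fun z => f ((r : ℂ) • z + b) with hfr
  have hfrd : DifferentiableOn ℂ fr U :=
    hf.comp (by fun_prop : Differentiable ℂ fun z => (r : ℂ) • z + b).differentiableOn
      (fun z hz => hz)
  choose K' hK' hK'U C hC HC using fun ℓ : Fin n → ℕ => (Dml_cauchy hUo ℓ).2 L hLcpt hLU
  set Ctot : ℝ := ∑ ℓ ∈ F, C ℓ with hCtot
  have hCtot0 : 0 ≤ Ctot := Finset.sum_nonneg fun ℓ _ => hC ℓ
  set η : ℝ := ε / (2 * (Ctot + 1)) with hη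
  have hη0 : 0 < η := by positivity
  obtain ⟨Q, hQ⟩ := convex_runge hUo hUc hfrd haU
    (F.isCompact_biUnion fun ℓ _ => hK' ℓ) (iUnion₂_subset fun ℓ _ => hK'U ℓ) hη0
  refine ⟨Q, fun ℓ hℓ z hz => ?_⟩
  have h1 := HC ℓ fr (mvEval Q) hfrd (mvEval_differentiable Q).differentiableOn η
    (fun w hw => (hQ w (mem_biUnion hℓ hw)).le) z hz
  have h2 : C ℓ * η < ε / 2 := by
    have : C ℓ ≤ Ctot := Finset.single_le_sum (fun ℓ _ => hC ℓ) hℓ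
    calc C ℓ * η ≤ Ctot * η := by gcongr
      _ < (Ctot + 1) * η := by gcongr; linarith
      _ = ε / 2 := by rw [hη]; field_simp
  have h3 : Dml ℓ fr z = (r : ℂ) ^ m ℓ * g ℓ ((r : ℂ) • z + b) := by
    have := congrFun (hm ℓ (r : ℂ) 1 b f) z
    simp only [one_mul] at this
    rw [hfr, this, (hg ℓ).2 (hLU hz)]
  have h4 := hrF ℓ hℓ z hz
  rw [← h3] at h4
  have h5 := norm_sub_le_norm_sub_add_norm_sub (g ℓ z) (Dml ℓ fr z) (Dml ℓ (mvEval Q) z)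
  linarith

end
end
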